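/- Let f be a homeomorphism of the open annulus 𝔸 isotopic to the identity and satisfying the intersection property, and let F be a lift of f to ℝ². Then the set Rot(F) is reduced to a single irrational number ρ if and only if Rec⁺(f) ≠ ∅ and f has no periodic orbit. -/

import Mathlib

open Filter Topology Set

noncomputable section

/-- The plane ℝ². -/
abbrev Plane := ℝ × ℝ

/-- The open annulus 𝔸 = ℝ/ℤ × ℝ. -/
abbrev Ann := AddCircle (1 : ℝ) × ℝ

/-- The covering map π : ℝ² → 𝔸, (x,y) ↦ (x + ℤ, y). -/
def prj : Plane → Ann := fun p => ((p.1 : AddCircle (1 : ℝ)), p.2)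

/-- The deck transformation T^k : ℝ² → ℝ², (x,y) ↦ (x + k, y). -/
def Tr (k : ℤ) : Plane → Plane := fun p => (p.1 + (k : ℝ), p.2)

/-- `F` is a lift of `f` to the universal cover ℝ² of the annulus. -/
def IsLift (f : Ann ≃ₜ Ann) (F : Plane ≃ₜ Plane) : Prop :=
  ∀ p : Plane, prj (F p) = f (prj p)

/-- `f` is isotopic to the identity: there is a continuous family of homeomorphisms
joining the identity to `f`. -/
def IsotopicToId (f : Ann ≃ₜ Ann) : Prop :=
  ∃ H : ℝ → Ann → Ann,
    Continuous (fun q : ℝ × Ann => H q.1 q.2) ∧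
    (∀ t : ℝ, ∃ h : Ann ≃ₜ Ann, ∀ z, H t z = h z) ∧
    (∀ z, H 0 z = z) ∧ (∀ z, H 1 z = f z)

/-- An essential circle in 𝔸: a simple closed curve which is not null-homotopic. -/
def IsEssentialCircle (c : Set Ann) : Prop :=
  ∃ φ : C(AddCircle (1 : ℝ), Ann), Function.Injective φ ∧ Set.range φ = c ∧
    ¬ ∃ pt : Ann, φ.Homotopic (ContinuousMap.const _ pt)

/-- `f` has the intersection property: every essential circle meets its image. -/
def IntersectionProperty (f : Ann → Ann) : Prop :=
  ∀ c : Set Ann, IsEssentialCircle c → (c ∩ f '' c).Nonempty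

/-- `z` is a positively recurrent point of `g`: some subsequence of the forward orbit
of `z` converges to `z`. -/
def PosRec {X : Type*} [TopologicalSpace X] (g : X → X) (z : X) : Prop :=
  ∃ φ : ℕ → ℕ, StrictMono φ ∧ Tendsto (fun k => g^[φ k] z) atTop (𝓝 z)

/-- The positively recurrent point `z` has rotation number `ρ` for the lift `F` of `f`. -/
def HasRotNum (f : Ann → Ann) (F : Plane → Plane) (z : Ann) (ρ : ℝ) : Prop :=
  PosRec f z ∧
    ∀ zt : Plane, prj zt = z →
      ∀ φ : ℕ → ℕ, StrictMono φ →
        Tendsto (fun k => f^[φ k] z) atTop (𝓝 z) →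
        Tendsto (fun k => ((F^[φ k] zt).1 - zt.1) / (φ k : ℝ)) atTop (𝓝 ρ)

/-- The rotation set Rot(F): the set of rotation numbers of positively recurrent
points of `f`. -/
def Rot (f : Ann → Ann) (F : Plane → Plane) : Set ℝ := {ρ | ∃ z, HasRotNum f F z ρ}

/-- The region `L(Γ)` of the plane on the left (west) of a line `Γ` (as a subset of ℝ²):
points lying in the connected component of the complement of `Γ` containing all far-west
points of the horizontal axis. -/
def Lset (Γ : Set Plane) : Set Plane :=
  {p | ∃ s : ℝ, ∀ x ≤ s, p ∈ connectedComponentIn Γᶜ ((x, 0) : Plane)}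

/-- The region `R(Γ)` of the plane on the right (east) of a line `Γ`. -/
def Rset (Γ : Set Plane) : Set Plane :=
  {p | ∃ s : ℝ, ∀ x ≥ s, p ∈ connectedComponentIn Γᶜ ((x, 0) : Plane)}

/-- The relation `Γ₁ < Γ₂` on (essential, oriented from south to north) lines:
`Cl(L(Γ₁)) ⊆ L(Γ₂)`. -/
def lineLT (Γ₁ Γ₂ : Set Plane) : Prop := closure (Lset Γ₁) ⊆ Lset Γ₂

/-- An essential line in ℝ², oriented from south to north: a properly embedded copy of ℝ
whose second coordinate tends to ±∞ at ±∞. -/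
def IsEssLinePlane (Γ : ℝ → Plane) : Prop :=
  Continuous Γ ∧ Function.Injective Γ ∧ IsProperMap Γ ∧
    Tendsto (fun t => (Γ t).2) atTop atTop ∧ Tendsto (fun t => (Γ t).2) atBot atBot

/-- An essential line in the annulus 𝔸: a properly embedded simple path joining one end
to the other. -/
def IsEssLineAnn (γ : ℝ → Ann) : Prop :=
  Continuous γ ∧ Function.Injective γ ∧ IsProperMap γ ∧
    ((Tendsto (fun t => (γ t).2) atTop atTop ∧ Tendsto (fun t => (γ t).2) atBot atBot) ∨
     (Tendsto (fun t => (γ t).2) atTop atBot ∧ Tendsto (fun t => (γ t).2) atBot atTop))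

/-- An oriented essential line in 𝔸 joining the lower end S to the upper end N. -/
def IsEssLineAnnSN (γ : ℝ → Ann) : Prop :=
  Continuous γ ∧ Function.Injective γ ∧ IsProperMap γ ∧
    Tendsto (fun t => (γ t).2) atTop atTop ∧ Tendsto (fun t => (γ t).2) atBot atBot

/-! Rotation numbers are limits of `k / n` along the returns `(n, k)` of a point `z`, the pairs for
which `T⁻ᵏ (F^n z)` is close to `z`, where `T` is the generator of the deck group. If `f` has no
periodic orbit, then no `T⁻ᵖ ∘ F^q` has a fixed point, so Brouwer's lemma on translation arcs and
Franks' lemma apply to all of them.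

All recurrent points have the same rotation number: if `p / q` lay between the rotation numbers of
two of them, then `T⁻ᵖ ∘ F^q` would have returns of both signs. By Franks' lemma, applied to a deck
invariant tiling of the plane by free sets, chains of tiles cannot lead from one orbit to the other
and back, so the tiles reachable from one of them give a deck invariant attractor `V` of `F` which
contains a point of one orbit and misses a point of the other. By recurrence, some connected set in
`interior V \ F(V)` contains two translates of a point; it projects to a set containing an essential
circle, which is disjoint from its image, against the intersection property.

The common rotation number is irrational: after replacing `F` by some `T⁻ᵖ ∘ F^q` it would be `0`,
and combining a return whose displacement is large with a return of much smaller rotation gives two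
returns of some `T^{-k₀} ∘ F^n` turning in opposite directions in a free disc, against Franks'
lemma. -/

/-! ### Injective isotopies and free sets -/

/-- `h` is joined to the identity by a continuous family of injective maps. This is implied by
being isotopic to the identity and is all that Brouwer's lemma needs. -/
def InjIsotopicToId {X : Type*} [TopologicalSpace X] (h : X ≃ₜ X) : Prop :=
  ∃ H : ℝ → X → X, Continuous (fun q : ℝ × X => H q.1 q.2) ∧
    (∀ t, Function.Injective (H t)) ∧ (∀ x, H 0 x = x) ∧ ∀ x, H 1 x = h x

namespace InjIsotopicToId

variable {X : Type*} [TopologicalSpace X]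

theorem refl : InjIsotopicToId (Homeomorph.refl X) :=
  ⟨fun _ x => x, by fun_prop, fun _ => Function.injective_id, fun _ => rfl, fun _ => rfl⟩

theorem trans {g h : X ≃ₜ X} (hg : InjIsotopicToId g) (hh : InjIsotopicToId h) :
    InjIsotopicToId (g.trans h) := by
  obtain ⟨H, hH, hHinj, hH0, hH1⟩ := hg
  obtain ⟨K, hK, hKinj, hK0, hK1⟩ := hh
  exact ⟨fun t x => K t (H t x), hK.comp (continuous_fst.prodMk hH),
    fun t => (hKinj t).comp (hHinj t), by simp [hH0, hK0], by simp [hH1, hK1]⟩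

theorem symm {g : X ≃ₜ X} (hg : InjIsotopicToId g) : InjIsotopicToId g.symm := by
  obtain ⟨H, hH, hHinj, hH0, hH1⟩ := hg
  refine ⟨fun t x => H (1 - t) (g.symm x), ?_, fun t => (hHinj _).comp g.symm.injective,
    by simp [hH1], by simp [hH0]⟩
  exact hH.comp (f := fun q : ℝ × X => ((1 - q.1, g.symm q.2) : ℝ × X)) (by fun_prop)

theorem pow {g : X ≃ₜ X} (hg : InjIsotopicToId g) (n : ℕ) : InjIsotopicToId (g ^ n) := by
  induction n with
  | zero => exact refl
  | succ n ih => exact hg.trans ih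

end InjIsotopicToId

theorem homeomorph_coe_pow {X : Type*} [TopologicalSpace X] (f : X ≃ₜ X) (n : ℕ) :
    ⇑(f ^ n) = f^[n] :=
  hom_coe_pow _ rfl (fun _ _ => rfl) f n

/-- `K` is free for `f`: it is disjoint from its image. -/
def IsFree {X : Type*} (f : X → X) (K : Set X) : Prop := ∀ x ∈ K, f x ∉ K

theorem IsFree.mono {X : Type*} {f : X → X} {K L : Set X} (hL : IsFree f L) (hKL : K ⊆ L) :
    IsFree f K := fun x hx hfx => hL x (hKL hx) (hKL hfx)

theorem exists_isFree_ball {X : Type*} [MetricSpace X] {f : X → X} {x : X}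
    (hf : ContinuousAt f x) (hx : f x ≠ x) : ∃ ε > 0, IsFree f (Metric.ball x ε) := by
  have hd : 0 < dist (f x) x := dist_pos.2 hx
  obtain ⟨δ, hδ, hball⟩ := Metric.continuousAt_iff.1 hf (dist (f x) x / 2) (half_pos hd)
  refine ⟨min δ (dist (f x) x / 2), lt_min hδ (half_pos hd), fun y hy hfy => ?_⟩
  have h₁ : dist (f y) (f x) < dist (f x) x / 2 :=
    hball ((Metric.mem_ball.1 hy).trans_le (min_le_left _ _))
  have h₂ : dist (f y) x < dist (f x) x / 2 :=
    (Metric.mem_ball.1 hfy).trans_le (min_le_right _ _)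
  linarith [dist_triangle_left (f x) x (f y)]

theorem iterate_eq_of_forall_orbit_eq {α : Type*} {f g : α → α} {x : α} {n : ℕ}
    (h : ∀ j < n, g (f^[j] x) = f^[j + 1] x) : g^[n] x = f^[n] x := by
  induction n with
  | zero => rfl
  | succ n ih =>
    rw [Function.iterate_succ_apply', ih fun j hj => h j (hj.trans n.lt_succ_self),
      h n n.lt_succ_self]

/-! ### Pushing points inside free continua -/

section Push

variable {E : Type*} [NormedAddCommGroup E]

theorem injective_add_of_lipschitzWith {u : E → E} {K : NNReal} (hK : K < 1)
    (hu : LipschitzWith K u) : Function.Injective fun x => x + u x := by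
  intro x y (hxy : x + u x = y + u y)
  by_contra hne
  have hpos : 0 < dist x y := dist_pos.2 hne
  have hdist : dist x y = dist (u x) (u y) := by
    have hsub : x - y = u y - u x := by rwa [sub_eq_sub_iff_add_eq_add, add_comm (u y)]
    rw [dist_comm (u x), dist_eq_norm, dist_eq_norm, hsub]
  have hle := hu.dist_le_mul x y
  rw [← hdist] at hle
  exact (mul_lt_of_lt_one_left hpos (NNReal.coe_lt_one.2 hK)).not_ge hle

variable [NormedSpace ℝ E]

theorem exists_injIsotopicToId_add [CompleteSpace E] {u : E → E} {K : NNReal} (hK : K < 1)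
    (hu : LipschitzWith K u) :
    ∃ φ : E ≃ₜ E, InjIsotopicToId φ ∧ ∀ x, φ x = x + u x := by
  have happrox : ApproximatesLinearOn (fun x => x + u x)
      ((ContinuousLinearEquiv.refl ℝ E : E ≃L[ℝ] E) : E →L[ℝ] E) univ K := fun x _ y _ => by
    simpa [add_sub_add_comm] using hu.norm_sub_le x y
  have hsmall : Subsingleton E ∨
      K < ‖((ContinuousLinearEquiv.refl ℝ E).symm : E →L[ℝ] E)‖₊⁻¹ := by
    refine (subsingleton_or_nontrivial E).imp_right fun (_ : Nontrivial E) => ?_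
    have : NontrivialTopology E := EMetric.nontrivial_iff_nontrivialTopology.1 ‹_›
    have hnorm : ‖((ContinuousLinearEquiv.refl ℝ E).symm : E →L[ℝ] E)‖₊ = 1 :=
      NNReal.eq ContinuousLinearMap.norm_id
    rwa [hnorm, inv_one]
  refine ⟨happrox.toHomeomorph _ hsmall,
    ⟨fun t x => x + (projIcc 0 1 zero_le_one t : ℝ) • u x, ?_, fun t => ?_, by simp, ?_⟩,
    fun _ => rfl⟩
  · have := hu.continuous
    have := continuous_projIcc (a := (0 : ℝ)) (b := 1) (h := zero_le_one)
    fun_prop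
  · refine injective_add_of_lipschitzWith hK (LipschitzWith.of_dist_le_mul fun x y => ?_)
    obtain ⟨h0, h1⟩ := (projIcc (0 : ℝ) 1 zero_le_one t).2
    rw [dist_smul₀, Real.norm_of_nonneg h0]
    exact (mul_le_of_le_one_left dist_nonneg h1).trans (hu.dist_le_mul x y)
  · intro x
    simp only [projIcc_right, one_smul]
    rfl

theorem lipschitzWith_tent_smul (p v : E) {r : ℝ} (hr : 0 < r) :
    LipschitzWith (‖v‖ / r).toNNReal fun x => max 0 (1 - ‖x - p‖ / r) • v := by
  refine LipschitzWith.of_dist_le' fun x y => ?_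
  have htent : |max 0 (1 - ‖x - p‖ / r) - max 0 (1 - ‖y - p‖ / r)| ≤ dist x y / r :=
    calc |max 0 (1 - ‖x - p‖ / r) - max 0 (1 - ‖y - p‖ / r)|
      _ ≤ |(1 - ‖x - p‖ / r) - (1 - ‖y - p‖ / r)| := by
        rw [max_comm, max_comm 0]
        exact abs_max_sub_max_le_abs _ _ _
      _ = |‖y - p‖ - ‖x - p‖| / r := by rw [← abs_of_pos hr, ← abs_div, abs_of_pos hr]; ring_nf
      _ ≤ dist x y / r := by
        gcongr
        simpa [dist_eq_norm, norm_sub_rev] using abs_norm_sub_norm_le (y - p) (x - p)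
  rw [dist_eq_norm, ← sub_smul, norm_smul, Real.norm_eq_abs]
  calc _ ≤ dist x y / r * ‖v‖ := by gcongr
    _ = ‖v‖ / r * dist x y := by ring

theorem exists_isOpen_isPreconnected_between {K O : Set E} (hK : IsCompact K)
    (hconn : IsPreconnected K) (hO : IsOpen O) (hKO : K ⊆ O) :
    ∃ U, IsOpen U ∧ IsPreconnected U ∧ K ⊆ U ∧ U ⊆ O := by
  obtain rfl | ⟨x, hx⟩ := K.eq_empty_or_nonempty
  · exact ⟨∅, isOpen_empty, isPreconnected_empty, Subset.rfl, empty_subset O⟩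
  obtain ⟨δ, hδ, hδO⟩ := hK.exists_thickening_subset_open hO hKO
  have hsub : K ⊆ Metric.thickening δ K := Metric.self_subset_thickening hδ K
  refine ⟨_, Metric.isOpen_thickening, isPreconnected_of_forall x fun y hy => ?_, hsub, hδO⟩
  obtain ⟨z, hz, hyz⟩ := Metric.mem_thickening_iff.1 hy
  exact ⟨K ∪ Metric.ball z δ, union_subset hsub (Metric.ball_subset_thickening hz δ),
    Or.inl hx, Or.inr hyz,
    hconn.union z hz (Metric.mem_ball_self hδ) (convex_ball z δ).isPreconnected⟩

theorem IsFree.exists_isOpen_isPreconnected_between {f : E → E} (hf : Continuous f) {K O : Set E}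
    (hfree : IsFree f K) (hK : IsCompact K) (hconn : IsPreconnected K) (hO : IsOpen O)
    (hKO : K ⊆ O) : ∃ U, IsOpen U ∧ IsPreconnected U ∧ K ⊆ U ∧ U ⊆ O ∧ IsFree f U := by
  have hdisj : Disjoint K (f '' K) :=
    disjoint_right.2 <| forall_mem_image.2 hfree
  obtain ⟨V, W, hV, hW, hKV, hfKW, hVW⟩ :=
    SeparatedNhds.of_isCompact_isCompact hK (hK.image hf) hdisj
  obtain ⟨U, hUo, hUc, hKU, hU⟩ := _root_.exists_isOpen_isPreconnected_between hK hconn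
    ((hO.inter hV).inter (hW.preimage hf))
    (subset_inter (subset_inter hKO hKV) (image_subset_iff.1 hfKW))
  exact ⟨U, hUo, hUc, hKU, fun x hx => (hU hx).1.1,
    fun x hx hfx => disjoint_left.1 hVW (hU hfx).1.2 (hU hx).2⟩

theorem IsFree.comp_ne {X : Type*} {f φ : X → X} {U : Set X} (hU : IsFree f U)
    (hφ : Function.Injective φ) (hφU : EqOn φ id Uᶜ) (hf : ∀ x, f x ≠ x) (x : X) :
    φ (f x) ≠ x := by
  intro h
  by_cases hfx : f x ∈ U
  · have hx : φ x = x := hφU fun hx => hU x hx hfx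
    exact hf x (hφ (h.trans hx.symm))
  · exact hf x ((hφU hfx).symm.trans h)

variable [CompleteSpace E]

theorem exists_push_of_mem_ball {p q : E} {r : ℝ} (hq : q ∈ Metric.ball p r) :
    ∃ φ : E ≃ₜ E, InjIsotopicToId φ ∧ φ p = q ∧ EqOn φ id (Metric.ball p r)ᶜ := by
  have hnorm : ‖q - p‖ < r := mem_ball_iff_norm.1 hq
  have hr : 0 < r := (norm_nonneg _).trans_lt hnorm
  have hK : (‖q - p‖ / r).toNNReal < 1 := by
    rw [Real.toNNReal_lt_one, div_lt_one hr]
    exact hnorm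
  obtain ⟨φ, hφ, hφx⟩ := exists_injIsotopicToId_add hK (lipschitzWith_tent_smul p (q - p) hr)
  refine ⟨φ, hφ, by simp [hφx], fun x hx => ?_⟩
  have hxp : r ≤ ‖x - p‖ := by simpa [dist_eq_norm] using hx
  have htent : max 0 (1 - ‖x - p‖ / r) = 0 := by
    rw [max_eq_left_iff, sub_nonpos, one_le_div hr]
    exact hxp
  simp [hφx, htent]

theorem exists_push_of_isPreconnected_of_isOpen {U : Set E} (hU : IsOpen U)
    (hconn : IsPreconnected U) {p q : E} (hp : p ∈ U) (hq : q ∈ U) :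
    ∃ φ : E ≃ₜ E, InjIsotopicToId φ ∧ φ p = q ∧ EqOn φ id Uᶜ := by
  refine hconn.induction₂'
    (fun p q => ∃ φ : E ≃ₜ E, InjIsotopicToId φ ∧ φ p = q ∧ EqOn φ id Uᶜ) ?_ ?_ hp hq
  · intro x hx
    obtain ⟨r, hr, hrU⟩ := Metric.isOpen_iff.1 hU x hx
    filter_upwards [mem_nhdsWithin_of_mem_nhds (Metric.ball_mem_nhds x hr)] with y hy
    obtain ⟨φ, hφ, hφx, hfix⟩ := exists_push_of_mem_ball hy
    have hfixU : EqOn φ id Uᶜ := hfix.mono (compl_subset_compl.2 hrU)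
    exact ⟨⟨φ, hφ, hφx, hfixU⟩, φ.symm, hφ.symm, φ.symm_apply_eq.2 hφx.symm,
      fun z hz => φ.symm_apply_eq.2 (hfixU hz).symm⟩
  · rintro x y z - - - ⟨φ, hφ, hφx, hφU⟩ ⟨ψ, hψ, hψy, hψU⟩
    refine ⟨φ.trans ψ, hφ.trans hψ, by simp [hφx, hψy], fun w hw => ?_⟩
    rw [Homeomorph.trans_apply, hφU hw]
    exact hψU hw

theorem exists_push_of_isFree {f : E ≃ₜ E} (hf : ∀ x, f x ≠ x) {K S : Set E} (hK : IsCompact K)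
    (hconn : IsPreconnected K) (hfree : IsFree f K) (hS : IsClosed S) (hKS : Disjoint K S)
    {p q : E} (hp : p ∈ K) (hq : q ∈ K) :
    ∃ φ : E ≃ₜ E, InjIsotopicToId φ ∧ φ p = q ∧ EqOn φ id S ∧ ∀ x, φ (f x) ≠ x := by
  obtain ⟨U, hUo, hUc, hKU, hUS, hUfree⟩ := hfree.exists_isOpen_isPreconnected_between
    f.continuous hK hconn hS.isOpen_compl (subset_compl_iff_disjoint_right.2 hKS)
  obtain ⟨φ, hφ, hφp, hfix⟩ := exists_push_of_isPreconnected_of_isOpen hUo hUc (hKU hp) (hKU hq)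
  exact ⟨φ, hφ, hφp, hfix.mono (subset_compl_comm.1 hUS), hUfree.comp_ne φ.injective hfix hf⟩

theorem exists_push_of_chain {f : E ≃ₜ E} (hf : ∀ x, f x ≠ x) {n : ℕ} {K : Fin n → Set E}
    {p : Fin (n + 1) → E} {S : Set E} (hS : IsClosed S) (hK : ∀ i, IsCompact (K i))
    (hconn : ∀ i, IsPreconnected (K i)) (hfree : ∀ i j, i ≤ j → ∀ x ∈ K j, f x ∉ K i)
    (hKS : ∀ i, Disjoint (K i) S) (hp : ∀ i, p i.castSucc ∈ K i) (hp' : ∀ i, p i.succ ∈ K i) :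
    ∃ φ : E ≃ₜ E, InjIsotopicToId φ ∧ φ (p 0) = p (Fin.last n) ∧ EqOn φ id S ∧
      ∀ x, φ (f x) ≠ x := by
  induction n generalizing S with
  | zero => exact ⟨_, .refl, rfl, fun _ _ => rfl, hf⟩
  | succ n ih =>
    -- Fixing `f '' K (last n)` during the first `n` pushes keeps `K (last n)` free.
    obtain ⟨φ, hφ, hφp, hφS, hφf⟩ := ih (K := fun i => K i.castSucc) (p := fun i => p i.castSucc)
      (hS.union ((hK (Fin.last n)).image f.continuous).isClosed) (fun i => hK _)
      (fun i => hconn _) (fun i j hij => hfree _ _ (Fin.castSucc_le_castSucc_iff.2 hij))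
      (fun i => (hKS _).union_right <| disjoint_right.2 <|
        forall_mem_image.2 fun x hx => hfree _ _ (Fin.le_last _) x hx)
      (fun i => hp i.castSucc) (fun i => by simpa using hp' i.castSucc)
    have hlast : IsFree (f.trans φ) (K (Fin.last n)) := fun x hx => by
      have hfx : φ (f x) = f x := hφS (Or.inr (mem_image_of_mem f hx))
      rw [Homeomorph.trans_apply, hfx]
      exact hfree _ _ le_rfl x hx
    obtain ⟨ψ, hψ, hψp, hψS, hψf⟩ := exists_push_of_isFree (f := f.trans φ) hφf (hK _) (hconn _)
      hlast hS (hKS _) (hp (Fin.last n)) (hp' (Fin.last n))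
    refine ⟨φ.trans ψ, hφ.trans hψ, ?_, fun x hx => ?_, hψf⟩
    · rw [Homeomorph.trans_apply, ← Fin.castSucc_zero, hφp, hψp, Fin.succ_last]
    · rw [Homeomorph.trans_apply, hφS (Or.inl hx)]
      exact hψS hx

theorem exists_push_of_pairwise_disjoint {f : E ≃ₜ E} (hf : ∀ x, f x ≠ x) {κ : Type*} [Finite κ]
    {K : κ → Set E} (hK : ∀ i, IsCompact (K i)) (hconn : ∀ i, IsPreconnected (K i))
    (hfree : ∀ i, IsFree f (K i)) (hdisj : Pairwise fun i j => Disjoint (K i) (K j)) {p q : κ → E}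
    (hp : ∀ i, p i ∈ K i) (hq : ∀ i, q i ∈ K i) :
    ∃ φ : E ≃ₜ E, InjIsotopicToId φ ∧ (∀ i, φ (p i) = q i) ∧ ∀ x, φ (f x) ≠ x := by
  classical
  have := Fintype.ofFinite κ
  suffices h : ∀ s : Finset κ, ∃ φ : E ≃ₜ E, InjIsotopicToId φ ∧ (∀ i ∈ s, φ (p i) = q i) ∧
      (∀ i ∉ s, EqOn φ id (K i)) ∧ ∀ x, φ (f x) ≠ x by
    obtain ⟨φ, hφ, hφp, -, hφf⟩ := h Finset.univ
    exact ⟨φ, hφ, fun i => hφp i (Finset.mem_univ i), hφf⟩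
  intro s
  induction s using Finset.induction_on with
  | empty => exact ⟨_, .refl, by simp, fun _ _ _ _ => rfl, hf⟩
  | insert i s his ih =>
    obtain ⟨φ, hφ, hφp, hφK, hφf⟩ := ih
    have hfree' : IsFree (f.trans φ) (K i) := fun x hx hfx => by
      have hfix : φ (f x) = f x := φ.injective (hφK i his hfx)
      rw [Homeomorph.trans_apply, hfix] at hfx
      exact hfree i x hx hfx
    obtain ⟨ψ, hψ, hψp, hψK, hψf⟩ := exists_push_of_isFree (f := f.trans φ) hφf (hK i) (hconn i)
      hfree' (S := ⋃ j : {j // j ≠ i}, K j) (isClosed_iUnion_of_finite fun j => (hK j).isClosed)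
      (disjoint_iUnion_right.2 fun j => hdisj j.2.symm) (hp i) (hq i)
    have hψK' : ∀ j ≠ i, EqOn ψ id (K j) := fun j hj =>
      hψK.mono (subset_iUnion (fun j : {j // j ≠ i} => K j) ⟨j, hj⟩)
    refine ⟨φ.trans ψ, hφ.trans hψ, fun j hj => ?_, fun j hj x hx => ?_, hψf⟩
    · rw [Homeomorph.trans_apply]
      obtain rfl | hj := Finset.mem_insert.1 hj
      · exact (congrArg ψ (hφK j his (hp j))).trans hψp
      · exact (congrArg ψ (hφp j hj)).trans (hψK' j (ne_of_mem_of_not_mem hj his) (hq j))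
    · obtain ⟨hji, hjs⟩ := not_or.1 (mt Finset.mem_insert.2 hj)
      exact (congrArg ψ (hφK j hjs hx)).trans (hψK' j hji hx)

end Push

/-! ### Brouwer's lemma on translation arcs -/

theorem exists_continuous_exp_eq {A : Type*} [TopologicalSpace A] [SimplyConnectedSpace A]
    [LocallyPathConnectedSpace A] {φ : A → ℂ} (hφ : Continuous φ) (h0 : ∀ x, φ x ≠ 0) :
    ∃ L : A → ℂ, Continuous L ∧ ∀ x, Complex.exp (L x) = φ x := by
  obtain ⟨a⟩ : Nonempty A := inferInstance
  obtain ⟨L, ⟨-, hL⟩, -⟩ := Complex.isCoveringMapOn_exp.existsUnique_continuousMap_lifts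
    (⟨φ, hφ⟩ : C(A, ℂ)) (Complex.exp_log (h0 a)) h0
  exact ⟨L, L.continuous, congrFun hL⟩

theorem sub_eq_sub_of_exp_eq {A : Type*} [TopologicalSpace A] [PreconnectedSpace A] {L M : A → ℂ}
    (hL : Continuous L) (hM : Continuous M) (h : ∀ x, Complex.exp (L x) = Complex.exp (M x))
    (a b : A) : L a - L b = M a - M b := by
  have heq : L = fun x => M x + (L a - M a) := by
    refine Complex.isCoveringMap_exp.eq_of_comp_eq hL (by fun_prop) ?_ a (by simp)
    funext x
    exact Subtype.ext (by simp [Complex.exp_add, Complex.exp_sub, h, Complex.exp_ne_zero])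
  linear_combination -congrFun heq b

/-- The variation of the argument of `f x - x` along the segment from `a` to `f a` can be computed
in two ways, since `H t (f x) - H t x` never vanishes along the isotopy `H`. -/
theorem InjIsotopicToId.apply_apply_ne {f : Plane ≃ₜ Plane} (hf : InjIsotopicToId f)
    (hfix : ∀ x, f x ≠ x) (a : Plane) : f (f a) ≠ a := by
  intro hper
  obtain ⟨H, hH, hHinj, hH0, hH1⟩ := hf
  let e := Complex.equivRealProdCLM.symm
  have he : ∀ {p q : Plane}, p ≠ q → e (p - q) ≠ 0 := fun h =>
    (map_ne_zero_iff e e.injective).2 (sub_ne_zero.2 h)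
  let γ : ℝ → Plane := AffineMap.lineMap a (f a)
  have hγ : Continuous γ := AffineMap.lineMap_continuous
  have hγ0 : γ 0 = a := AffineMap.lineMap_apply_zero _ _
  have hγ1 : γ 1 = f a := AffineMap.lineMap_apply_one _ _
  obtain ⟨Λ, hΛ, hΛexp⟩ := exists_continuous_exp_eq (φ := fun x : Plane => e (f x - x))
    (by fun_prop) fun x => he (hfix x)
  have : Continuous fun q : ℝ × ℝ => H q.1 (f (γ q.2)) :=
    hH.comp (f := fun q : ℝ × ℝ => ((q.1, f (γ q.2)) : ℝ × Plane)) (by fun_prop)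
  have : Continuous fun q : ℝ × ℝ => H q.1 (γ q.2) :=
    hH.comp (f := fun q : ℝ × ℝ => ((q.1, γ q.2) : ℝ × Plane)) (by fun_prop)
  obtain ⟨L, hL, hLexp⟩ := exists_continuous_exp_eq
    (φ := fun q : ℝ × ℝ => e (H q.1 (f (γ q.2)) - H q.1 (γ q.2))) (by fun_prop)
    fun q => he fun h => hfix _ (hHinj _ h)
  have hstart : L (0, 1) - L (0, 0) = Λ (f a) - Λ a := by
    simpa only [hγ0, hγ1] using sub_eq_sub_of_exp_eq (L := fun s : ℝ => L (0, s))
      (M := fun s => Λ (γ s)) (by fun_prop) (by fun_prop) (by simp [hLexp, hΛexp, hH0]) 1 0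
  have hend : L (1, 1) - L (1, 0) = Λ a - Λ (f a) := by
    simpa only [hγ0, hγ1, hper] using sub_eq_sub_of_exp_eq (L := fun s : ℝ => L (1, s))
      (M := fun s => Λ (f (γ s))) (by fun_prop) (by fun_prop) (by simp [hLexp, hΛexp, hH1]) 1 0
  have hsides : L (1, 1) - L (0, 1) = L (1, 0) - L (0, 0) := by
    have hneg : ∀ t : ℝ, Complex.exp (L (t, 1)) = Complex.exp (L (t, 0) + Real.pi * Complex.I) := by
      intro t
      rw [Complex.exp_add, Complex.exp_pi_mul_I, hLexp, hLexp, mul_neg_one, ← map_neg, neg_sub]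
      simp only [hγ0, hγ1, hper]
    simpa using sub_eq_sub_of_exp_eq (by fun_prop) (by fun_prop) hneg 1 0
  have hΛa : Λ a = Λ (f a) := by linear_combination (1 / 2 : ℂ) * (hstart - hend + hsides)
  have hsub : f a - a = f (f a) - f a := e.injective (by rw [← hΛexp a, ← hΛexp (f a), hΛa])
  rw [hper] at hsub
  exact hfix a (sub_eq_zero.1 (self_eq_neg.1 (hsub.trans (neg_sub _ _).symm)))

/-- Brouwer's lemma for the period `m`; it is proved for all `m ≥ 1` by induction on `m`. -/
def BrouwerLemma (m : ℕ) : Prop :=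
  ∀ g : Plane ≃ₜ Plane, InjIsotopicToId g → (∀ x, g x ≠ x) → ∀ x, g^[m] x ≠ x

theorem iterate_notMem_of_brouwerLemma {n : ℕ} (hB : ∀ i, 1 ≤ i → i ≤ n → BrouwerLemma i)
    {f : Plane ≃ₜ Plane} (hf : InjIsotopicToId f) (hfix : ∀ x, f x ≠ x) {K : Set Plane}
    (hK : IsCompact K) (hconn : IsPreconnected K) (hfree : IsFree f K) {x : Plane} (hx : x ∈ K)
    {i : ℕ} (hi : 1 ≤ i) (hin : i ≤ n) : f^[i] x ∉ K := by
  induction i using Nat.strong_induction_on with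
  | _ i ih =>
    intro hmem
    let S : Set Plane := (fun j => f^[j] x) '' Ico 1 i
    obtain ⟨φ, hφ, hφp, hφS, hφf⟩ := exists_push_of_isFree hfix hK hconn hfree (S := S)
      ((finite_Ico 1 i).image _).isClosed
      (disjoint_right.2 <| forall_mem_image.2 fun j hj => ih j hj.2 hj.1 (hj.2.le.trans hin))
      hmem hx
    obtain ⟨k, rfl⟩ := Nat.exists_eq_add_of_le' hi
    have horbit : (f.trans φ)^[k] x = f^[k] x := iterate_eq_of_forall_orbit_eq fun j hj => by
      rw [Homeomorph.trans_apply, ← Function.iterate_succ_apply' f]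
      exact hφS (mem_image_of_mem _ ⟨by lia, by lia⟩)
    refine hB _ hi hin (f.trans φ) (hf.trans hφ) hφf x ?_
    rw [Function.iterate_succ_apply', horbit, Homeomorph.trans_apply,
      ← Function.iterate_succ_apply' f, hφp]

/-- The arc `σ` restricted to `[0, t]` meets its image under `f` for the first time at
`f (σ s) = σ t`. -/
structure IsFirstMeeting {X : Type*} (f : X → X) (σ : ℝ → X) (s t : ℝ) : Prop where
  nonneg : 0 ≤ s
  lt : s < t
  apply_eq : f (σ s) = σ t
  ne : ∀ u ∈ Ico 0 t, ∀ v ∈ Ico 0 t, f (σ u) ≠ σ v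

theorem exists_isFirstMeeting {X : Type*} [TopologicalSpace X] [T2Space X] {f : X ≃ₜ X}
    (hfix : ∀ x, f x ≠ x) {σ : ℝ → X} (hσ : Continuous σ) (hσf : f (σ 0) = σ 1) :
    ∃ s t, IsFirstMeeting f σ s t ∨ IsFirstMeeting f.symm σ s t := by
  let Q : Set (ℝ × ℝ) := (Icc 0 1 ×ˢ Icc 0 1) ∩
    {q | q.2 ≤ q.1 ∧ (f (σ q.2) = σ q.1 ∨ f (σ q.1) = σ q.2)}
  have hQ : IsCompact Q := by
    refine (isCompact_Icc.prod isCompact_Icc).inter_right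
      ((isClosed_le continuous_snd continuous_fst).inter
        ((isClosed_eq ?_ ?_).union (isClosed_eq ?_ ?_))) <;> fun_prop
  obtain ⟨_, ⟨⟨t, s⟩, ⟨⟨ht, hs⟩, hst, hmeet⟩, rfl⟩, hmin⟩ :=
    (hQ.image continuous_fst).exists_isLeast
      ⟨1, (1, 0), ⟨⟨by simp, by simp⟩, zero_le_one, Or.inl hσf⟩, rfl⟩
  have hlt : s < t := hst.lt_of_ne fun (h : s = t) => by
    subst h
    exact hmeet.elim (hfix _) (hfix _)
  have hne : ∀ u ∈ Ico 0 t, ∀ v ∈ Ico 0 t, f (σ u) ≠ σ v := by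
    have key : ∀ u ∈ Ico 0 t, ∀ v ∈ Ico 0 t, v ≤ u → ¬(f (σ v) = σ u ∨ f (σ u) = σ v) :=
      fun u hu v hv hvu h => hu.2.not_ge <| hmin
        ⟨(u, v), ⟨⟨⟨hu.1, hu.2.le.trans ht.2⟩, hv.1, hv.2.le.trans ht.2⟩, hvu, h⟩, rfl⟩
    intro u hu v hv h
    rcases le_total u v with huv | hvu
    · exact key v hv u hu huv (Or.inl h)
    · exact key u hu v hv hvu (Or.inr h)
  refine ⟨s, t, hmeet.imp (fun h => ⟨hs.1, hlt, h, hne⟩) fun h =>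
    ⟨hs.1, hlt, f.symm_apply_eq.2 h.symm, fun u hu v hv huv => ?_⟩⟩
  exact hne v hv u hu (f.symm_apply_eq.1 huv).symm

namespace IsFirstMeeting

theorem isFree_image_Icc {X : Type*} {f : X → X} {σ : ℝ → X} {s t r : ℝ}
    (h : IsFirstMeeting f σ s t) (hr : r < t) : IsFree f (σ '' Icc 0 r) := by
  rintro _ ⟨u, hu, rfl⟩ ⟨v, hv, huv⟩
  exact h.ne u ⟨hu.1, hu.2.trans_lt hr⟩ v ⟨hv.1, hv.2.trans_lt hr⟩ huv.symm

variable {m : ℕ} {f : Plane ≃ₜ Plane} {σ : ℝ → Plane} {s t : ℝ}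

theorem iterate_ne (h : IsFirstMeeting f σ s t) (hB : ∀ i, 1 ≤ i → i ≤ m → BrouwerLemma i)
    (hf : InjIsotopicToId f) (hfix : ∀ x, f x ≠ x) (hσ : Continuous σ) {i : ℕ} (hi : 1 ≤ i)
    (him : i ≤ m) {u v : ℝ} (hu : u ∈ Ico 0 t) (hv : v ∈ Ico 0 t) : f^[i] (σ u) ≠ σ v := by
  intro heq
  refine iterate_notMem_of_brouwerLemma hB hf hfix (isCompact_Icc.image hσ)
    (isPreconnected_Icc.image σ hσ.continuousOn) (h.isFree_image_Icc (max_lt hu.2 hv.2))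
    (mem_image_of_mem σ ⟨hu.1, le_max_left u v⟩) hi him ?_
  rw [heq]
  exact mem_image_of_mem σ ⟨hv.1, le_max_right u v⟩

theorem iterate_succ_ne (h : IsFirstMeeting f σ s t) (hB : ∀ i, 1 ≤ i → i ≤ m → BrouwerLemma i)
    (hf : InjIsotopicToId f) (hfix : ∀ x, f x ≠ x) (hσ : Continuous σ) {i : ℕ} (hi : 1 ≤ i)
    (him : i + 1 ≤ m) {u v : ℝ} (hu : u ∈ Ico 0 t) (hv : v ∈ Icc 0 t) :
    f^[i + 1] (σ u) ≠ σ v := by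
  obtain hvt | rfl := hv.2.lt_or_eq
  · exact h.iterate_ne hB hf hfix hσ (by lia) him hu ⟨hv.1, hvt⟩
  · rw [← h.apply_eq, Function.iterate_succ_apply']
    exact f.injective.ne (h.iterate_ne hB hf hfix hσ hi (by lia) hu ⟨h.nonneg, h.lt⟩)

theorem exists_lt_forall_notMem (h : IsFirstMeeting f σ s t)
    (hB : ∀ i, 1 ≤ i → i ≤ 2 → BrouwerLemma i) (hf : InjIsotopicToId f) (hfix : ∀ x, f x ≠ x)
    (hσ : Continuous σ) : ∃ t' ∈ Ico 0 t, ∀ u ∈ Icc t' t, f (σ u) ∉ σ '' Icc 0 t := by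
  have hopen : IsOpen {u : ℝ | f (σ u) ∉ σ '' Icc 0 t} :=
    ((isCompact_Icc.image hσ).isClosed.preimage (f.continuous.comp hσ)).isOpen_compl
  have ht : f (σ t) ∉ σ '' Icc 0 t := by
    rintro ⟨v, hv, heq⟩
    rw [← h.apply_eq] at heq
    exact h.iterate_succ_ne hB hf hfix hσ le_rfl le_rfl ⟨h.nonneg, h.lt⟩ hv heq.symm
  obtain ⟨l, hl, hlt⟩ := exists_Ioc_subset_of_mem_nhds (hopen.mem_nhds ht) ⟨t - 1, by simp⟩
  obtain ⟨t', ht', ht't⟩ := exists_between (max_lt hl (h.nonneg.trans_lt h.lt))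
  exact ⟨t', ⟨(le_max_right l 0).trans ht'.le, ht't⟩,
    fun u hu => hlt ⟨(le_max_left l 0).trans_lt (ht'.trans_le hu.1), hu.2⟩⟩

theorem isFree_image_image_Icc (h : IsFirstMeeting f σ s t) : IsFree f (f '' (σ '' Icc 0 s)) :=
  forall_mem_image.2 fun x hx hfx =>
    h.isFree_image_Icc h.lt x hx ((f.injective.mem_set_image).1 hfx)

theorem disjoint_orbit (h : IsFirstMeeting f σ s t)
    (hB : ∀ i, 1 ≤ i → i ≤ m + 2 → BrouwerLemma i) (hf : InjIsotopicToId f)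
    (hfix : ∀ x, f x ≠ x) (hσ : Continuous σ) :
    Disjoint (σ '' Icc 0 t ∪ f '' (σ '' Icc 0 s))
      ((fun j => f^[j + 1] (σ 0)) '' Icc 1 (m + 1)) := by
  have h0 : (0 : ℝ) ∈ Ico 0 t := ⟨le_rfl, h.nonneg.trans_lt h.lt⟩
  rw [disjoint_union_left, disjoint_left, disjoint_left]
  constructor
  · rintro _ ⟨v, hv, rfl⟩ ⟨j, ⟨hj, hjm⟩, heq⟩
    exact h.iterate_succ_ne hB hf hfix hσ hj (by lia) h0 hv heq
  · rintro _ ⟨_, ⟨u, hu, rfl⟩, rfl⟩ ⟨j, ⟨hj, hjm⟩, heq⟩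
    refine h.iterate_ne hB hf hfix hσ hj (by lia) h0 ⟨hu.1, hu.2.trans_lt h.lt⟩ (f.injective ?_)
    rwa [← Function.iterate_succ_apply' f]

/-- The point `σ 0` is pushed to `f (σ 0)` along `σ [0, t']`, `σ [t', t]` and `f (σ [0, s])`. -/
theorem exists_push (h : IsFirstMeeting f σ s t) (hB : ∀ i, 1 ≤ i → i ≤ m + 2 → BrouwerLemma i)
    (hf : InjIsotopicToId f) (hfix : ∀ x, f x ≠ x) (hσ : Continuous σ) :
    ∃ φ : Plane ≃ₜ Plane, InjIsotopicToId φ ∧ φ (σ 0) = f (σ 0) ∧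
      (∀ j ∈ Icc 1 (m + 1), φ (f^[j + 1] (σ 0)) = f^[j + 1] (σ 0)) ∧ ∀ x, φ (f x) ≠ x := by
  obtain ⟨t', ht', hfar⟩ := h.exists_lt_forall_notMem (fun i h1 h2 => hB i h1 (by lia)) hf hfix hσ
  have hsub₀ : σ '' Icc 0 t' ⊆ σ '' Icc 0 t := image_mono (Icc_subset_Icc_right ht'.2.le)
  have hsub₁ : σ '' Icc t' t ⊆ σ '' Icc 0 t := image_mono (Icc_subset_Icc_left ht'.1)
  have hfar₁ : ∀ x ∈ σ '' Icc t' t, f x ∉ σ '' Icc 0 t := forall_mem_image.2 hfar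
  have hfar₂ : ∀ x ∈ f '' (σ '' Icc 0 s), f x ∉ σ '' Icc 0 t := by
    rintro _ ⟨_, ⟨u, hu, rfl⟩, rfl⟩ ⟨v, hv, heq⟩
    exact h.iterate_succ_ne hB hf hfix hσ le_rfl (by lia) ⟨hu.1, hu.2.trans_lt h.lt⟩ hv heq.symm
  let S : Set Plane := (fun j => f^[j + 1] (σ 0)) '' Icc 1 (m + 1)
  obtain ⟨hS, hS₂⟩ : Disjoint (σ '' Icc 0 t) S ∧ Disjoint (f '' (σ '' Icc 0 s)) S :=
    disjoint_union_left.1 (h.disjoint_orbit hB hf hfix hσ)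
  have hcpt : ∀ a b, IsCompact (σ '' Icc a b) := fun a b => isCompact_Icc.image hσ
  have hpre : ∀ a b, IsPreconnected (σ '' Icc a b) := fun a b =>
    isPreconnected_Icc.image σ hσ.continuousOn
  have : IsCompact (f '' (σ '' Icc 0 s)) := (hcpt 0 s).image f.continuous
  have : IsPreconnected (f '' (σ '' Icc 0 s)) := (hpre 0 s).image f f.continuous.continuousOn
  let K : Fin 3 → Set Plane := ![σ '' Icc 0 t', σ '' Icc t' t, f '' (σ '' Icc 0 s)]
  have hfree : ∀ i j, i ≤ j → ∀ x ∈ K j, f x ∉ K i := by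
    intro i j hij x hx hfx
    fin_cases j <;> fin_cases i
    exacts [h.isFree_image_Icc ht'.2 x hx hfx, absurd hij (by decide), absurd hij (by decide),
      hfar₁ x hx (hsub₀ hfx), hfar₁ x hx (hsub₁ hfx), absurd hij (by decide),
      hfar₂ x hx (hsub₀ hfx), hfar₂ x hx (hsub₁ hfx), h.isFree_image_image_Icc x hx hfx]
  have hp : ∀ i : Fin 3, ![σ 0, σ t', σ t, f (σ 0)] i.castSucc ∈ K i := by
    intro i
    fin_cases i
    exacts [mem_image_of_mem σ ⟨le_rfl, ht'.1⟩, mem_image_of_mem σ ⟨le_rfl, ht'.2.le⟩,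
      ⟨σ s, mem_image_of_mem σ ⟨h.nonneg, le_rfl⟩, h.apply_eq⟩]
  have hp' : ∀ i : Fin 3, ![σ 0, σ t', σ t, f (σ 0)] i.succ ∈ K i := by
    intro i
    fin_cases i
    exacts [mem_image_of_mem σ ⟨ht'.1, le_rfl⟩, mem_image_of_mem σ ⟨ht'.2.le, le_rfl⟩,
      mem_image_of_mem f (mem_image_of_mem σ ⟨le_rfl, h.nonneg⟩)]
  obtain ⟨φ, hφ, hφp, hφS, hφf⟩ := exists_push_of_chain hfix (K := K) (S := S)
    ((finite_Icc 1 (m + 1)).image _).isClosed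
    (by simp [K, Fin.forall_fin_succ, hcpt]) (by simp [K, Fin.forall_fin_succ, hpre]) hfree
    (by simpa [K, Fin.forall_fin_succ] using ⟨hS.mono_left hsub₀, hS.mono_left hsub₁, hS₂⟩)
    hp hp'
  exact ⟨φ, hφ, hφp, fun j hj => hφS (mem_image_of_mem _ hj), hφf⟩

/-- Pushing along the arc shortens the periodic orbit of `σ 0` by one. -/
theorem iterate_add_three_ne (h : IsFirstMeeting f σ s t)
    (hB : ∀ i, 1 ≤ i → i ≤ m + 2 → BrouwerLemma i) (hf : InjIsotopicToId f)
    (hfix : ∀ x, f x ≠ x) (hσ : Continuous σ) : f^[m + 3] (σ 0) ≠ σ 0 := by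
  intro hper
  obtain ⟨φ, hφ, hφ0, hφfix, hφf⟩ := h.exists_push hB hf hfix hσ
  have horbit : (f.trans φ)^[m + 1] (f (σ 0)) = f^[m + 1] (f (σ 0)) :=
    iterate_eq_of_forall_orbit_eq fun j hj => by
      rw [Homeomorph.trans_apply, ← Function.iterate_succ_apply' f]
      exact hφfix (j + 1) ⟨by lia, by lia⟩
  refine hB (m + 2) (by lia) le_rfl (f.trans φ) (hf.trans hφ) hφf (f (σ 0)) ?_
  rw [Function.iterate_succ_apply', horbit, Homeomorph.trans_apply,
    ← Function.iterate_succ_apply' f, ← Function.iterate_succ_apply f, hper, hφ0]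

end IsFirstMeeting

theorem brouwerLemma {m : ℕ} (hm : 1 ≤ m) : BrouwerLemma m := by
  induction m using Nat.strong_induction_on with
  | _ m ih =>
    intro f hf hfix x
    match m, ih with
    | 1, _ => exact hfix x
    | 2, _ => exact hf.apply_apply_ne hfix x
    | m + 3, ih =>
      have hB : ∀ i, 1 ≤ i → i ≤ m + 2 → BrouwerLemma i := fun i h1 h2 => ih i (by lia) h1
      have hσ : Continuous (AffineMap.lineMap x (f x) : ℝ → Plane) := AffineMap.lineMap_continuous
      obtain ⟨s, t, h | h⟩ := exists_isFirstMeeting hfix hσ (by simp)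
      · simpa using h.iterate_add_three_ne hB hf hfix hσ
      · intro hper
        have hinv : f.symm^[m + 3] (f^[m + 3] x) = x :=
          (Function.LeftInverse.iterate f.symm_apply_apply _) x
        rw [hper] at hinv
        refine h.iterate_add_three_ne hB hf.symm
          (fun y hy => hfix y (f.symm_apply_eq.1 hy).symm) hσ ?_
        simpa using hinv

theorem InjIsotopicToId.iterate_notMem_of_isFree {f : Plane ≃ₜ Plane} (hf : InjIsotopicToId f)
    (hfix : ∀ x, f x ≠ x) {K : Set Plane} (hK : IsCompact K) (hconn : IsPreconnected K)
    (hfree : IsFree f K) {x : Plane} (hx : x ∈ K) {n : ℕ} (hn : 1 ≤ n) : f^[n] x ∉ K :=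
  iterate_notMem_of_brouwerLemma (fun _ h _ => brouwerLemma h) hf hfix hK hconn hfree hx hn le_rfl

/-! ### Franks' lemma -/

theorem exists_seq_of_transGen {α : Type*} {R : α → α → Prop} {a b : α}
    (h : Relation.TransGen R a b) :
    ∃ (n : ℕ) (c : ℕ → α), c 0 = a ∧ (∀ k < n, R (c k) (c (k + 1))) ∧ R (c n) b := by
  induction h using Relation.TransGen.head_induction_on with
  | single h => exact ⟨0, fun _ => _, rfl, by simp, h⟩
  | @head a _ h _ ih =>
    obtain ⟨n, c, rfl, hc, hb⟩ := ih
    refine ⟨n + 1, fun k => Nat.casesOn k a c, rfl, ?_, hb⟩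
    rintro (_ | k) hk
    exacts [h, hc k (by lia)]

theorem rel_val_val_add_one {α : Type*} {R : α → α → Prop} {n : ℕ} {c : ℕ → α}
    (hc : ∀ k < n, R (c k) (c (k + 1))) (hn : R (c n) (c 0)) (k : ZMod (n + 1)) :
    R (c k.val) (c (k + 1).val) := by
  obtain hk | hk := (Fin.le_last k).eq_or_lt
  · have hk1 : k + 1 = 0 := by
      rw [show k = Fin.last n from hk]
      exact Fin.last_add_one n
    rw [hk1, ZMod.val_zero, show k.val = n from congrArg Fin.val hk]
    exact hn
  · rw [show (k + 1).val = k.val + 1 from Fin.val_add_one_of_lt hk]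
    exact hc _ hk

/-- A shortest cycle has no chords. -/
theorem exists_chordless_cycle {α : Type*} {R : α → α → Prop} {a : α}
    (h : Relation.TransGen R a a) :
    ∃ (n : ℕ) (c : ZMod (n + 1) → α), ∀ k l, R (c k) (c l) ↔ l = k + 1 := by
  classical
  have hex : ∃ (n : ℕ) (c : ZMod (n + 1) → α), ∀ k, R (c k) (c (k + 1)) := by
    obtain ⟨n, c, rfl, hc, hb⟩ := exists_seq_of_transGen h
    exact ⟨n, fun k => c k.val, rel_val_val_add_one hc hb⟩
  obtain ⟨c, hc⟩ := Nat.find_spec hex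
  refine ⟨_, c, fun k l => ⟨fun hkl => ?_, fun hkl => hkl ▸ hc k⟩⟩
  have hshort : Nat.find hex ≤ (k - l).val := Nat.find_min' hex
    ⟨fun j => c (l + (j.val : ℕ)), rel_val_val_add_one (c := fun j => c (l + (j : ℕ)))
      (fun j _ => by simpa [add_assoc] using hc (l + j)) (by simpa using hkl)⟩
  have hlast : k - l + 1 = 0 := by
    rw [← ZMod.natCast_zmod_val (k - l), hshort.antisymm' (Nat.le_of_lt_succ (k - l).val_lt)]
    exact_mod_cast ZMod.natCast_self _
  linear_combination -hlast

/-- Some point of `b i` is mapped by `f` into `b j`. -/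
def Transition {X ι : Type*} (f : X → X) (b : ι → Set X) (i j : ι) : Prop :=
  ∃ x ∈ b i, f x ∈ b j

theorem transGen_transition_of_iterate_mem {X ι : Type*} {f : X → X} {b : ι → Set X}
    (hcover : ∀ x, ∃ i, x ∈ b i) {n : ℕ} (hn : 1 ≤ n) {x : X} {i j : ι} (hx : x ∈ b i)
    (hfx : f^[n] x ∈ b j) : Relation.TransGen (Transition f b) i j := by
  induction n, hn using Nat.le_induction generalizing x i with
  | base => exact .single ⟨x, hx, hfx⟩
  | succ n _ ih =>
    obtain ⟨k, hk⟩ := hcover (f x)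
    exact .head ⟨x, hx, hk⟩ (ih hk hfx)

theorem isCompact_segment {E : Type*} [NormedAddCommGroup E] [NormedSpace ℝ E] (x y : E) :
    IsCompact (segment ℝ x y) := by
  rw [segment_eq_image]
  exact isCompact_Icc.image (by fun_prop)

theorem InjIsotopicToId.iterate_notMem_of_convex {f : Plane ≃ₜ Plane} (hf : InjIsotopicToId f)
    (hfix : ∀ x, f x ≠ x) {D : Set Plane} (hD : Convex ℝ D) (hfree : IsFree f D) {x : Plane}
    (hx : x ∈ D) {n : ℕ} (hn : 1 ≤ n) : f^[n] x ∉ D := fun h =>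
  hf.iterate_notMem_of_isFree hfix (isCompact_segment x (f^[n] x))
    (convex_segment _ _).isPreconnected (hfree.mono (hD.segment_subset hx h))
    (left_mem_segment ℝ _ _) hn (right_mem_segment ℝ _ _)

/-- `x` and `y` are joined inside `b i` by a continuum meeting the other members of the family
`b` at most at `x` and `y`. -/
def JoinedInMember {X ι : Type*} [TopologicalSpace X] (b : ι → Set X) (i : ι) (x y : X) : Prop :=
  ∃ K ⊆ b i, IsCompact K ∧ IsPreconnected K ∧ x ∈ K ∧ y ∈ K ∧
    ∀ j ≠ i, ∀ z ∈ K, z ∈ b j → z = x ∨ z = y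

/-- Franks' lemma. Along a shortest cycle of transitions `x k ∈ b (c k)`, `f (x k) ∈ b (c (k + 1))`
the continua joining `f (x k)` to `x (k + 1)` are disjoint, and pushing along them produces a
periodic orbit, against Brouwer's lemma. -/
theorem InjIsotopicToId.not_transGen_transition {f : Plane ≃ₜ Plane} (hf : InjIsotopicToId f)
    (hfix : ∀ x, f x ≠ x) {ι : Type*} {b : ι → Set Plane} (hfree : ∀ i, IsFree f (b i))
    (hjoin : ∀ i, ∀ x ∈ b i, ∀ y ∈ b i, JoinedInMember b i x y) (i : ι) :
    ¬ Relation.TransGen (Transition f b) i i := by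
  intro hcycle
  obtain ⟨n, c, hc⟩ := exists_chordless_cycle hcycle
  choose x hx hfx using fun k => (hc k (k + 1)).2 rfl
  have hx_iff : ∀ k l, x k ∈ b (c l) → k = l := fun k l h =>
    add_right_cancel ((hc l (k + 1)).1 ⟨x k, h, hfx k⟩)
  have hfx_iff : ∀ k l, f (x k) ∈ b (c l) → k + 1 = l := fun k l h =>
    ((hc k l).1 ⟨x k, hx k, h⟩).symm
  choose K hKb hK hconn hp hq hK' using fun k => hjoin _ _ (hfx k) _ (hx (k + 1))
  have hdisj : Pairwise fun k l => Disjoint (K k) (K l) := by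
    refine fun k l hkl => disjoint_left.2 fun z hzk hzl => hkl ?_
    have hne : c (l + 1) ≠ c (k + 1) := fun h =>
      hkl (add_right_cancel (hx_iff _ _ (h ▸ hx (l + 1)))).symm
    obtain rfl | rfl := hK' k _ hne z hzk (hKb l hzl)
    · exact add_right_cancel (hfx_iff _ _ (hKb l hzl))
    · exact add_right_cancel (hx_iff _ _ (hKb l hzl))
  obtain ⟨φ, hφ, hφx, hφf⟩ := exists_push_of_pairwise_disjoint hfix hK hconn
    (fun k => (hfree _).mono (hKb k)) hdisj hp hq
  have horbit : ∀ j : ℕ, (f.trans φ)^[j] (x 0) = x j := by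
    intro j
    induction j with
    | zero => simp
    | succ j ih => simpa [Function.iterate_succ_apply', ih] using hφx j
  refine brouwerLemma (Nat.le_add_left 1 n) (f.trans φ) (hf.trans hφ) hφf (x 0) ?_
  rw [horbit, ZMod.natCast_self]

/-- Franks' lemma for a chain of pairwise disjoint free sets. -/
theorem InjIsotopicToId.not_transGen_of_pairwise_disjoint {f : Plane ≃ₜ Plane}
    (hf : InjIsotopicToId f) (hfix : ∀ x, f x ≠ x) {ι : Type*} {b : ι → Set Plane}
    (hfree : ∀ i, IsFree f (b i)) (hconv : ∀ i, Convex ℝ (b i))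
    (hdisj : Pairwise fun i j => Disjoint (b i) (b j)) (i : ι) :
    ¬ Relation.TransGen (fun i j => ∃ x ∈ b i, ∃ n ≥ 1, f^[n] x ∈ b j) i i := by
  let b' : ι ⊕ {x // ∀ i, x ∉ b i} → Set Plane := Sum.elim b fun x => {x.1}
  have hcover : ∀ x, ∃ i, x ∈ b' i := by
    intro x
    by_cases hx : ∀ i, x ∉ b i
    · exact ⟨Sum.inr ⟨x, hx⟩, rfl⟩
    · push Not at hx
      exact ⟨Sum.inl hx.choose, hx.choose_spec⟩
  have hfree' : ∀ i, IsFree f (b' i) := by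
    rintro (i | x)
    · exact hfree i
    · rintro _ rfl
      exact hfix x.1
  have hconv' : ∀ i, Convex ℝ (b' i) := by
    rintro (i | x)
    exacts [hconv i, convex_singleton x.1]
  have hdisj' : Pairwise fun i j => Disjoint (b' i) (b' j) := by
    rintro (i | x) (j | y) hne
    · exact hdisj fun h => hne (congrArg _ h)
    · exact disjoint_singleton_right.2 (y.2 i)
    · exact disjoint_singleton_left.2 (x.2 j)
    · exact disjoint_singleton.2 fun h => hne (congrArg _ (Subtype.ext h))
  refine fun hcycle => hf.not_transGen_transition hfix hfree' (fun i x hx y hy => ?_) (Sum.inl i) ?_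
  · have hsub : segment ℝ x y ⊆ b' i := (hconv' i).segment_subset hx hy
    exact ⟨segment ℝ x y, hsub, isCompact_segment x y, (convex_segment x y).isPreconnected,
      left_mem_segment _ _ _, right_mem_segment _ _ _,
      fun j hj z hz hzj => absurd hzj (disjoint_left.1 (hdisj' hj.symm) (hsub hz))⟩
  · exact hcycle.lift' Sum.inl fun i j ⟨x, hx, n, hn, hfx⟩ =>
      transGen_transition_of_iterate_mem hcover hn hx hfx

/-! ### Deck transformations -/

@[simp]
theorem Tr_zero (p : Plane) : Tr 0 p = p := by simp [Tr]

@[simp]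
theorem Tr_Tr (k l : ℤ) (p : Plane) : Tr k (Tr l p) = Tr (k + l) p := by
  ext <;> simp [Tr]
  ring

theorem continuous_Tr (k : ℤ) : Continuous (Tr k) := by
  unfold Tr
  fun_prop

@[simp]
theorem dist_Tr_Tr (k : ℤ) (p q : Plane) : dist (Tr k p) (Tr k q) = dist p q := by
  simp [Tr, Prod.dist_eq]

theorem convex_preimage_Tr (k : ℤ) {D : Set Plane} (hD : Convex ℝ D) : Convex ℝ (Tr k ⁻¹' D) := by
  have hTr : Tr k = fun p => p + ((k : ℝ), (0 : ℝ)) := by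
    ext p <;> simp [Tr]
  rw [hTr]
  exact hD.translate_preimage_left _

/-- The deck transformation `Tr k` as a homeomorphism. -/
@[simps]
def deckHomeo (k : ℤ) : Plane ≃ₜ Plane where
  toFun := Tr k
  invFun := Tr (-k)
  left_inv p := by simp
  right_inv p := by simp
  continuous_toFun := continuous_Tr _
  continuous_invFun := continuous_Tr _

/-- `g` commutes with all deck transformations. -/
def CommutesWithDeck (g : Plane → Plane) : Prop := ∀ k : ℤ, Function.Commute g (Tr k)

theorem CommutesWithDeck.iterate {g : Plane → Plane} (hg : CommutesWithDeck g) (n : ℕ) :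
    CommutesWithDeck g^[n] := fun k => (hg k).iterate_left n

/-- `A` is invariant under the deck group. -/
def DeckInvariant (A : Set Plane) : Prop := ∀ k : ℤ, MapsTo (Tr k) A A

namespace DeckInvariant

variable {A : Set Plane}

theorem Tr_mem_iff (hA : DeckInvariant A) {k : ℤ} {p : Plane} : Tr k p ∈ A ↔ p ∈ A :=
  ⟨fun h => by simpa using hA (-k) h, fun h => hA k h⟩

theorem compl (hA : DeckInvariant A) : DeckInvariant Aᶜ :=
  fun _ _ hp h => hp (hA.Tr_mem_iff.1 h)

theorem preimage_Tr (hA : DeckInvariant A) (k : ℤ) : Tr k ⁻¹' A = A :=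
  ext fun _ => hA.Tr_mem_iff

theorem interior (hA : DeckInvariant A) : DeckInvariant (interior A) := fun k p hp => by
  have hpre := (deckHomeo k).preimage_interior A
  rw [show ⇑(deckHomeo k) = Tr k from rfl, hA.preimage_Tr] at hpre
  exact hpre.ge hp

theorem image (hA : DeckInvariant A) {g : Plane → Plane} (hg : CommutesWithDeck g) :
    DeckInvariant (g '' A) := by
  rintro k _ ⟨p, hp, rfl⟩
  exact ⟨Tr k p, hA k hp, hg k p⟩

theorem infDist_Tr (hA : DeckInvariant A) (k : ℤ) (p : Plane) :
    Metric.infDist (Tr k p) A = Metric.infDist p A := by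
  have hle : ∀ (k : ℤ) p, Metric.infDist (Tr k p) A ≤ Metric.infDist p A := by
    intro k p
    obtain rfl | hne := A.eq_empty_or_nonempty
    · simp
    · refine (Metric.le_infDist hne).2 fun q hq => ?_
      rw [← dist_Tr_Tr k p q]
      exact Metric.infDist_le_dist_of_mem (hA k hq)
  exact (hle k p).antisymm (by simpa using hle (-k) (Tr k p))

end DeckInvariant

/-! ### Relations invariant under an action of the integers -/

theorem mul_mem_of_pos {S : AddSubsemigroup ℤ} {a n : ℤ} (ha : a ∈ S) (hn : 0 < n) :
    n * a ∈ S := by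
  induction n, Int.add_one_le_of_lt hn using Int.leInduction with
  | base => simpa using ha
  | succ n _ ih => simpa [add_mul] using S.add_mem (ih (by lia)) ha

theorem zero_mem_of_nonneg_of_nonpos {S : AddSubsemigroup ℤ} {s t : ℤ} (hs : s ∈ S) (hs0 : 0 ≤ s)
    (ht : t ∈ S) (ht0 : t ≤ 0) : (0 : ℤ) ∈ S := by
  obtain rfl | hs0 := hs0.eq_or_lt
  · exact hs
  obtain rfl | ht0 := ht0.eq_or_lt
  · exact ht
  have h := S.add_mem (mul_mem_of_pos hs (neg_pos.2 ht0)) (mul_mem_of_pos ht hs0)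
  rwa [show -t * s + s * t = 0 by ring] at h

section Covariant

open Relation

variable {ι : Type*} [AddAction ℤ ι] {R : ι → ι → Prop}

theorem transGen_vadd (hR : Covariant ℤ ι (· +ᵥ ·) R) (k : ℤ) {i j : ι} (h : TransGen R i j) :
    TransGen R (k +ᵥ i) (k +ᵥ j) :=
  TransGen.lift (k +ᵥ ·) (fun _ _ => hR k) _ _ h

theorem reflTransGen_vadd (hR : Covariant ℤ ι (· +ᵥ ·) R) (k : ℤ) {i j : ι}
    (h : ReflTransGen R i j) : ReflTransGen R (k +ᵥ i) (k +ᵥ j) :=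
  ReflTransGen.lift (k +ᵥ ·) (fun _ _ => hR k) _ _ h

/-- The set of `k : ℤ` such that the translate `k +ᵥ i` can be reached from `i`. -/
def periodSubsemigroup (hR : Covariant ℤ ι (· +ᵥ ·) R) (i : ι) : AddSubsemigroup ℤ where
  carrier := {k | TransGen R i (k +ᵥ i)}
  add_mem' {k l} hk hl := by
    simpa [vadd_vadd] using TransGen.trans hk (transGen_vadd hR k hl)

/-- Going from `i` to a translate of `i'`, following a large multiple of the period of `i'`, and
coming back gives a period of `i` of the sign opposite to that of `k`. -/
theorem exists_transGen_self (hR : Covariant ℤ ι (· +ᵥ ·) R) {i i' : ι} {k k' l l' : ℤ}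
    (hi : TransGen R i (k +ᵥ i)) (hk : 0 ≤ k) (hi' : TransGen R i' (k' +ᵥ i')) (hk' : k' ≤ 0)
    (hl : ReflTransGen R i (l +ᵥ i')) (hl' : ReflTransGen R i' (l' +ᵥ i)) :
    ∃ j, TransGen R j j := by
  obtain rfl | hk' := hk'.eq_or_lt
  · exact ⟨i', by simpa using hi'⟩
  have hperiod : ∀ n : ℤ, 0 < n → l + n * k' + l' ∈ periodSubsemigroup hR i := by
    intro n hn
    have hni' : TransGen R i' ((n * k') +ᵥ i') :=
      mul_mem_of_pos (S := periodSubsemigroup hR i') hi' hn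
    have := (TransGen.trans_right hl (transGen_vadd hR l hni')).trans_left
      (reflTransGen_vadd hR l (reflTransGen_vadd hR (n * k') hl'))
    simpa [periodSubsemigroup, vadd_vadd, add_assoc] using this
  have hneg : l + (|l + l'| + 1) * k' + l' ≤ 0 := by
    nlinarith [le_abs_self (l + l'), abs_nonneg (l + l')]
  have h0 := zero_mem_of_nonneg_of_nonpos (S := periodSubsemigroup hR i) hi hk
    (hperiod _ (by positivity)) hneg
  exact ⟨i, by simpa using show TransGen R i ((0 : ℤ) +ᵥ i) from h0⟩

end Covariant

/-- An orbit of `G` returning to a convex free disc on the right and an orbit returning to it on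
the left would produce a cycle of transitions among the translates of the disc. -/
theorem InjIsotopicToId.neg_of_return_of_return {G : Plane ≃ₜ Plane} (hG : InjIsotopicToId G)
    (hfix : ∀ x, G x ≠ x) (hcomm : CommutesWithDeck G) {D : Set Plane} (hD : Convex ℝ D)
    (hDT : ∀ k : ℤ, k ≠ 0 → IsFree (Tr k) D) (hDG : IsFree G D) {x x' : Plane} (hx : x ∈ D)
    (hx' : x' ∈ D) {m m' : ℕ} (hm : 1 ≤ m) (hm' : 1 ≤ m') {k k' : ℤ}
    (hk : Tr (-k) (G^[m] x) ∈ D) (hk' : Tr (-k') (G^[m'] x') ∈ D) (hk'0 : k' ≤ 0) : k < 0 := by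
  by_contra! hk0
  let b : ℤ → Set Plane := fun j => Tr (-j) ⁻¹' D
  let R : ℤ → ℤ → Prop := fun i j => ∃ x ∈ b i, ∃ n ≥ 1, G^[n] x ∈ b j
  have hR : Covariant ℤ ℤ (· +ᵥ ·) R := by
    rintro l i j ⟨x, hx, n, hn, hxn⟩
    refine ⟨Tr l x, ?_, n, hn, ?_⟩
    · simpa [b] using hx
    · simpa [b, (hcomm.iterate n l).eq] using hxn
  have hreturn : ∀ {y : Plane} {n : ℕ} {j : ℤ}, y ∈ D → 1 ≤ n → Tr (-j) (G^[n] y) ∈ D →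
      Relation.TransGen R (0 : ℤ) (j +ᵥ (0 : ℤ)) :=
    fun hy hn hj => .single ⟨_, by simpa [b] using hy, _, hn, by simpa [b, vadd_eq_add] using hj⟩
  obtain ⟨j, hj⟩ := exists_transGen_self hR (hreturn hx hm hk) hk0 (hreturn hx' hm' hk') hk'0
    (l := 0) (l' := 0) (by rw [zero_vadd]) (by rw [zero_vadd])
  refine hG.not_transGen_of_pairwise_disjoint hfix (fun i y hy hGy => ?_) (fun i => ?_)
    (fun i j hij => disjoint_left.2 fun y hyi hyj => ?_) j hj
  · exact hDG _ hy (by rwa [(hcomm (-i)).eq])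
  · exact convex_preimage_Tr _ hD
  · exact hDT (i - j) (sub_ne_zero.2 hij) _ hyi (by simpa [b, ← sub_eq_add_neg] using hyj)

/-! ### Free tilings -/

theorem joinedInMember_of_convex {E ι : Type*} [NormedAddCommGroup E] [NormedSpace ℝ E]
    {b : ι → Set E} {i : ι} (hconv : Convex ℝ (b i)) (hne : (interior (b i)).Nonempty)
    (hdisj : ∀ j ≠ i, Disjoint (interior (b i)) (b j)) {x y : E} (hx : x ∈ b i) (hy : y ∈ b i) :
    JoinedInMember b i x y := by
  obtain ⟨c, hc⟩ := hne
  have hseg : ∀ z ∈ b i, ∀ w ∈ segment ℝ z c, w = z ∨ w ∈ interior (b i) := by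
    intro z hz w hw
    rw [← insert_endpoints_openSegment] at hw
    obtain rfl | rfl | hw := hw
    · exact .inl rfl
    · exact .inr hc
    · exact .inr (hconv.openSegment_self_interior_subset_interior hz hc hw)
  refine ⟨segment ℝ x c ∪ segment ℝ y c, ?_, (isCompact_segment x c).union (isCompact_segment y c),
    (convex_segment x c).isPreconnected.union c (right_mem_segment ℝ x c) (right_mem_segment ℝ y c)
      (convex_segment y c).isPreconnected, .inl (left_mem_segment ℝ x c),
    .inr (left_mem_segment ℝ y c), ?_⟩
  · exact union_subset (hconv.segment_subset hx (interior_subset hc))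
      (hconv.segment_subset hy (interior_subset hc))
  · rintro j hj z (hz | hz) hzj
    · exact .inl ((hseg x hx z hz).resolve_right fun h => disjoint_left.1 (hdisj j hj) h hzj)
    · exact .inr ((hseg y hy z hz).resolve_right fun h => disjoint_left.1 (hdisj j hj) h hzj)

/-- A locally finite closed cover of the plane by free sets, invariant under deck transformations,
to which Franks' lemma applies. -/
structure IsFreeTiling {ι : Type*} [AddAction ℤ ι] (G : Plane → Plane) (b : ι → Set Plane) :
    Prop where
  isClosed (i : ι) : IsClosed (b i)
  locallyFinite : LocallyFinite b
  exists_mem (p : Plane) : ∃ i, p ∈ b i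
  isFree (i : ι) : IsFree G (b i)
  joinedInMember (i : ι) : ∀ x ∈ b i, ∀ y ∈ b i, JoinedInMember b i x y
  Tr_mem_vadd_iff (k : ℤ) (i : ι) (p : Plane) : Tr k p ∈ b (k +ᵥ i) ↔ p ∈ b i

theorem int_eq_of_mem_Ioo_of_mem_Icc {a b : ℤ} {x : ℝ} (ha : x ∈ Ioo (a : ℝ) (a + 1))
    (hb : x ∈ Icc (b : ℝ) (b + 1)) : a = b := by
  have hab : (a : ℝ) < b + 1 := ha.1.trans_le hb.2
  have hba : (b : ℝ) < a + 1 := hb.1.trans_lt ha.2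
  norm_cast at hab hba
  lia

/-- Indices of the squares obtained by cutting each strip `ℝ × [j, j + 1]` into squares of
side `1 / N j`. -/
@[ext]
structure TileIndex (N : ℤ → ℕ) where
  /-- The strip `ℝ × [row, row + 1]` containing the square. -/
  row : ℤ
  /-- The horizontal position of the square. -/
  col : ℤ
  /-- The vertical position of the square in its strip. -/
  level : Fin (N row)

namespace TileIndex

variable {N : ℤ → ℕ}

instance : VAdd ℤ (TileIndex N) where
  vadd k τ := ⟨τ.row, τ.col + k * N τ.row, τ.level⟩

@[simp] theorem vadd_row (k : ℤ) (τ : TileIndex N) : (k +ᵥ τ).row = τ.row := rfl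

@[simp] theorem vadd_col (k : ℤ) (τ : TileIndex N) : (k +ᵥ τ).col = τ.col + k * N τ.row := rfl

@[simp] theorem vadd_level (k : ℤ) (τ : TileIndex N) : (k +ᵥ τ).level = τ.level := rfl

instance : AddAction ℤ (TileIndex N) where
  zero_vadd τ := by ext <;> simp
  add_vadd k l τ := by
    ext <;> simp
    ring

/-- The square with index `τ`. -/
def tile (τ : TileIndex N) : Set Plane :=
  Icc (τ.col / N τ.row : ℝ) ((τ.col + 1) / N τ.row) ×ˢ
    Icc (τ.row + τ.level / N τ.row : ℝ) (τ.row + (τ.level + 1) / N τ.row)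

theorem natCast_pos (τ : TileIndex N) : (0 : ℝ) < N τ.row :=
  Nat.cast_pos.2 τ.level.pos

theorem mem_tile_iff {τ : TileIndex N} {p : Plane} :
    p ∈ τ.tile ↔ N τ.row * p.1 ∈ Icc (τ.col : ℝ) (τ.col + 1) ∧
      N τ.row * (p.2 - τ.row) ∈ Icc (τ.level : ℝ) (τ.level + 1) := by
  have := τ.natCast_pos
  simp only [tile, mem_prod, mem_Icc, div_le_iff₀' this, le_div_iff₀' this, ← le_sub_iff_add_le',
    ← sub_le_iff_le_add']

theorem interior_tile (τ : TileIndex N) : interior τ.tile =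
    Ioo (τ.col / N τ.row : ℝ) ((τ.col + 1) / N τ.row) ×ˢ
      Ioo (τ.row + τ.level / N τ.row : ℝ) (τ.row + (τ.level + 1) / N τ.row) := by
  rw [tile, interior_prod_eq, interior_Icc, interior_Icc]

theorem mem_interior_tile_iff {τ : TileIndex N} {p : Plane} :
    p ∈ interior τ.tile ↔ N τ.row * p.1 ∈ Ioo (τ.col : ℝ) (τ.col + 1) ∧
      N τ.row * (p.2 - τ.row) ∈ Ioo (τ.level : ℝ) (τ.level + 1) := by
  have := τ.natCast_pos
  simp only [interior_tile, mem_prod, mem_Ioo, div_lt_iff₀' this, lt_div_iff₀' this,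
    ← lt_sub_iff_add_lt', ← sub_lt_iff_lt_add']

theorem interior_tile_nonempty (τ : TileIndex N) : (interior τ.tile).Nonempty := by
  have := τ.natCast_pos
  rw [interior_tile, prod_nonempty_iff, nonempty_Ioo, nonempty_Ioo, add_lt_add_iff_left]
  constructor <;> gcongr <;> exact lt_add_one _

theorem Tr_mem_tile_vadd_iff (k : ℤ) (τ : TileIndex N) (p : Plane) :
    Tr k p ∈ tile (k +ᵥ τ) ↔ p ∈ τ.tile := by
  have h : N τ.row * (p.1 + k) = N τ.row * p.1 + (k * N τ.row : ℤ) := by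
    push_cast
    ring
  simp only [mem_tile_iff, Tr, vadd_row, vadd_col, vadd_level, h, mem_Icc, Int.cast_add,
    add_right_comm _ _ (1 : ℝ), add_le_add_iff_right]

theorem snd_mem_Icc_row {τ : TileIndex N} {p : Plane} (hp : p ∈ τ.tile) :
    p.2 ∈ Icc (τ.row : ℝ) (τ.row + 1) := by
  have hlevel : (τ.level + 1 : ℝ) ≤ N τ.row := mod_cast τ.level.is_lt
  obtain ⟨-, h1, h2⟩ := mem_tile_iff.1 hp
  constructor <;> nlinarith [τ.natCast_pos]

theorem snd_mem_Ioo_row {τ : TileIndex N} {p : Plane} (hp : p ∈ interior τ.tile) :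
    p.2 ∈ Ioo (τ.row : ℝ) (τ.row + 1) := by
  have hlevel : (τ.level + 1 : ℝ) ≤ N τ.row := mod_cast τ.level.is_lt
  obtain ⟨-, h1, h2⟩ := mem_interior_tile_iff.1 hp
  constructor <;> nlinarith [τ.natCast_pos]

theorem dist_le_of_mem_tile {τ : TileIndex N} {p q : Plane} (hp : p ∈ τ.tile) (hq : q ∈ τ.tile) :
    dist p q ≤ 1 / N τ.row := by
  obtain ⟨hp1, hp2⟩ := hp
  obtain ⟨hq1, hq2⟩ := hq
  rw [Prod.dist_eq]
  refine max_le ((Real.dist_le_of_mem_Icc hp1 hq1).trans_eq ?_)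
    ((Real.dist_le_of_mem_Icc hp2 hq2).trans_eq ?_) <;> ring

theorem disjoint_interior_tile {τ τ' : TileIndex N} (h : τ' ≠ τ) :
    Disjoint (interior τ.tile) τ'.tile := by
  refine disjoint_left.2 fun p hp hp' => h ?_
  have hrow := int_eq_of_mem_Ioo_of_mem_Icc (snd_mem_Ioo_row hp) (snd_mem_Icc_row hp')
  obtain ⟨row, col, level⟩ := τ
  obtain ⟨row', col', level'⟩ := τ'
  obtain rfl : row = row' := hrow
  obtain ⟨h1, h2⟩ := mem_interior_tile_iff.1 hp
  obtain ⟨h1', h2'⟩ := mem_tile_iff.1 hp'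
  obtain rfl := int_eq_of_mem_Ioo_of_mem_Icc h1 h1'
  obtain rfl : level = level' :=
    Fin.ext (mod_cast int_eq_of_mem_Ioo_of_mem_Icc (a := level) (b := level') h2 h2')
  rfl

theorem exists_mem_tile (hN : ∀ j, 1 ≤ N j) (p : Plane) : ∃ τ : TileIndex N, p ∈ τ.tile := by
  have hpos : (0 : ℝ) < N ⌊p.2⌋ := Nat.cast_pos.2 (hN _)
  have hlevel : ⌊N ⌊p.2⌋ * (p.2 - ⌊p.2⌋)⌋₊ < N ⌊p.2⌋ :=
    (Nat.floor_lt (mul_nonneg hpos.le (Int.fract_nonneg _))).2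
      (mul_lt_of_lt_one_right hpos (Int.fract_lt_one _))
  exact ⟨⟨⌊p.2⌋, ⌊N ⌊p.2⌋ * p.1⌋, ⟨_, hlevel⟩⟩, mem_tile_iff.2
    ⟨⟨Int.floor_le _, (Int.lt_floor_add_one _).le⟩,
      Nat.floor_le (mul_nonneg hpos.le (Int.fract_nonneg _)), (Nat.lt_floor_add_one _).le⟩⟩

theorem locallyFinite_tile : LocallyFinite (tile (N := N)) := by
  refine fun p => ⟨Metric.ball p 1, Metric.ball_mem_nhds p one_pos, ?_⟩
  let S (j : ℤ) : Set (TileIndex N) := (fun cl : ℤ × Fin (N j) => ⟨j, cl.1, cl.2⟩) ''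
    (Icc ⌊N j * (p.1 - 1) - 1⌋ ⌈N j * (p.1 + 1)⌉ ×ˢ univ)
  refine ((finite_Icc ⌊p.2 - 2⌋ ⌈p.2 + 1⌉).biUnion fun j _ =>
    (((finite_Icc _ _).prod finite_univ).image _ : (S j).Finite)).subset ?_
  rintro τ ⟨q, hq, hqp⟩
  have hpos := τ.natCast_pos
  obtain ⟨hrow1, hrow2⟩ := snd_mem_Icc_row hq
  obtain ⟨⟨hcol1, hcol2⟩, -⟩ := mem_tile_iff.1 hq
  rw [← ball_prod_same, mem_prod, Real.ball_eq_Ioo, Real.ball_eq_Ioo] at hqp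
  obtain ⟨⟨h1, h2⟩, h3, h4⟩ := hqp
  refine mem_biUnion (x := τ.row) ⟨?_, ?_⟩ ⟨(τ.col, τ.level), ⟨⟨?_, ?_⟩, trivial⟩, rfl⟩
  · exact Int.floor_le_iff.2 (by linarith)
  · exact Int.le_ceil_iff.2 (by linarith)
  · exact Int.floor_le_iff.2 (by nlinarith)
  · exact Int.le_ceil_iff.2 (by nlinarith)

end TileIndex

theorem exists_nat_one_div_lt_dist {G : Plane → Plane} (hG : Continuous G) (hfix : ∀ x, G x ≠ x)
    (hcomm : CommutesWithDeck G) (j : ℤ) :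
    ∃ n : ℕ, 1 ≤ n ∧ ∀ p : Plane, p.2 ∈ Icc (j : ℝ) (j + 1) → 1 / (n : ℝ) < dist (G p) p := by
  obtain ⟨p₀, -, hmin⟩ := (isCompact_Icc.prod isCompact_Icc : IsCompact
    (Icc (0 : ℝ) 1 ×ˢ Icc (j : ℝ) (j + 1))).exists_isMinOn ⟨(0, j), by simp⟩
      (f := fun p : Plane => dist (G p) p) (by fun_prop)
  obtain ⟨n, hn⟩ := exists_nat_one_div_lt (dist_pos.2 (hfix p₀))
  refine ⟨n + 1, Nat.le_add_left 1 n, fun p hp => ?_⟩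
  have hmem : Tr (-⌊p.1⌋) p ∈ Icc (0 : ℝ) 1 ×ˢ Icc (j : ℝ) (j + 1) := by
    refine ⟨⟨?_, ?_⟩, hp⟩ <;> simp only [Tr, Int.cast_neg] <;>
      linarith [Int.floor_le p.1, Int.lt_floor_add_one p.1]
  calc 1 / ((n + 1 : ℕ) : ℝ) < dist (G p₀) p₀ := mod_cast hn
    _ ≤ dist (G (Tr (-⌊p.1⌋) p)) (Tr (-⌊p.1⌋) p) := hmin hmem
    _ = dist (G p) p := by rw [(hcomm _).eq, dist_Tr_Tr]

theorem exists_isFreeTiling {G : Plane → Plane} (hG : Continuous G) (hfix : ∀ x, G x ≠ x)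
    (hcomm : CommutesWithDeck G) :
    ∃ N : ℤ → ℕ, IsFreeTiling G (TileIndex.tile (N := N)) := by
  choose N hN hdist using exists_nat_one_div_lt_dist hG hfix hcomm
  refine ⟨N, fun τ => isClosed_Icc.prod isClosed_Icc, TileIndex.locallyFinite_tile,
    TileIndex.exists_mem_tile hN, fun τ x hx hGx => ?_, fun τ x hx y hy => ?_,
    TileIndex.Tr_mem_tile_vadd_iff⟩
  · exact (hdist _ x (TileIndex.snd_mem_Icc_row hx)).not_ge (TileIndex.dist_le_of_mem_tile hGx hx)
  · exact joinedInMember_of_convex ((convex_Icc _ _).prod (convex_Icc _ _))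
      τ.interior_tile_nonempty (fun _ => TileIndex.disjoint_interior_tile) hx hy

/-! ### Returns and attractors -/

/-- The homeomorphism `T⁻ᵖ ∘ F^q`. -/
def shiftedIterate (F : Plane ≃ₜ Plane) (q : ℕ) (p : ℤ) : Plane ≃ₜ Plane :=
  (F ^ q).trans (deckHomeo (-p))

@[simp]
theorem shiftedIterate_apply (F : Plane ≃ₜ Plane) (q : ℕ) (p : ℤ) (x : Plane) :
    shiftedIterate F q p x = Tr (-p) (F^[q] x) := by
  rw [← homeomorph_coe_pow]
  rfl

theorem shiftedIterate_one_zero (F : Plane ≃ₜ Plane) : shiftedIterate F 1 0 = F := by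
  ext1 x
  simp

protected theorem CommutesWithDeck.shiftedIterate {F : Plane ≃ₜ Plane} (hF : CommutesWithDeck F)
    (q : ℕ) (p : ℤ) : CommutesWithDeck (shiftedIterate F q p) := fun k x => by
  simp [(hF.iterate q k).eq, add_comm]

theorem CommutesWithDeck.commute_shiftedIterate {F : Plane ≃ₜ Plane} (hF : CommutesWithDeck F)
    (i q : ℕ) (p : ℤ) : Function.Commute F^[i] (shiftedIterate F q p) := fun x => by
  simp [(hF.iterate i _).eq, ← Function.iterate_add_apply, add_comm]

/-- The times `(n, k)`, `n ≥ 1`, at which `T⁻ᵏ (F^n z)` is close to `z`. -/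
def returns (F : Plane → Plane) (z : Plane) : Filter (ℕ × ℤ) :=
  comap (fun r => Tr (-r.2) (F^[r.1] z)) (𝓝 z) ⊓ 𝓟 {r | 1 ≤ r.1}

theorem tendsto_returns (F : Plane → Plane) (z : Plane) :
    Tendsto (fun r : ℕ × ℤ => Tr (-r.2) (F^[r.1] z)) (returns F z) (𝓝 z) :=
  tendsto_comap.mono_left inf_le_left

theorem eventually_one_le_returns (F : Plane → Plane) (z : Plane) :
    ∀ᶠ r in returns F z, 1 ≤ r.1 :=
  mem_inf_of_right (mem_principal_self _)

theorem returns_le_of_commute {G h : Plane → Plane} (hh : Continuous h)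
    (hcomm : CommutesWithDeck h) (hG : Function.Commute h G) (z : Plane) :
    returns G z ≤ returns G (h z) := by
  refine le_inf (tendsto_iff_comap.1 ?_) (le_principal_iff.2 (eventually_one_le_returns G z))
  simp only [← (hG.iterate_right _).eq, ← (hcomm _).eq]
  exact (hh.tendsto z).comp (tendsto_returns G z)

/-- A closed deck invariant set mapped by `G` into its interior. -/
structure IsAttractor (G : Plane → Plane) (A : Set Plane) : Prop where
  isClosed : IsClosed A
  deckInvariant : DeckInvariant A
  mapsTo : MapsTo G A (interior A)

theorem IsAttractor.iterate_mem {G : Plane → Plane} {A : Set Plane} (hA : IsAttractor G A)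
    {x : Plane} (hx : x ∈ A) (n : ℕ) : G^[n] x ∈ A :=
  (hA.mapsTo.mono_right interior_subset).iterate n hx

theorem IsAttractor.mem_image {G : Plane ≃ₜ Plane} (hcomm : CommutesWithDeck G) {A : Set Plane}
    (hA : IsAttractor G A) {x : Plane} (hx : x ∈ A) [hret : NeBot (returns G x)] : x ∈ G '' A := by
  refine (G.isClosedMap _ hA.isClosed).mem_of_tendsto (tendsto_returns G x) ?_
  filter_upwards [eventually_one_le_returns G x] with r hr
  refine hA.deckInvariant.image hcomm _ ⟨G^[r.1 - 1] x, hA.iterate_mem hx _, ?_⟩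
  rw [← Function.iterate_succ_apply' G, Nat.succ_eq_add_one, Nat.sub_add_cancel hr]

theorem exists_seq_deckInvariant_between {M O : Set Plane} (hM : IsClosed M) (hne : M.Nonempty)
    (hMT : DeckInvariant M) (hO : IsOpen O) (hOne : Oᶜ.Nonempty) (hOT : DeckInvariant O)
    (hMO : M ⊆ O) :
    ∃ S : ℕ → Set Plane, (∀ n, IsClosed (S n)) ∧ (∀ n, DeckInvariant (S n)) ∧ (∀ n, S n ⊆ O) ∧
      (∀ n, M ⊆ interior (S n)) ∧ ∀ n, S (n + 1) ⊆ interior (S n) := by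
  have hlt : ∀ (n : ℕ) x, (n + 1) * Metric.infDist x M < Metric.infDist x Oᶜ →
      x ∈ interior {x | (n + 1) * Metric.infDist x M ≤ Metric.infDist x Oᶜ} := fun n x hx => by
    have hopen : IsOpen {x | (n + 1) * Metric.infDist x M < Metric.infDist x Oᶜ} :=
      isOpen_lt (by fun_prop) (by fun_prop)
    exact hopen.subset_interior_iff.2 (ofPred_subset_ofPred.2 fun y => le_of_lt) hx
  have hMS : ∀ n : ℕ, M ⊆ interior {x | (n + 1) * Metric.infDist x M ≤ Metric.infDist x Oᶜ} := by
    refine fun n x hx => hlt n x ?_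
    rw [Metric.infDist_zero_of_mem hx, mul_zero]
    exact (hO.isClosed_compl.notMem_iff_infDist_pos hOne).1 fun h => h (hMO hx)
  refine ⟨fun n => {x | (n + 1) * Metric.infDist x M ≤ Metric.infDist x Oᶜ}, fun n => ?_,
    fun n k x hx => ?_, fun n x hx => ?_, hMS, fun n x hx => ?_⟩
  · exact isClosed_le (by fun_prop) (by fun_prop)
  · simpa only [mem_ofPred_eq, hMT.infDist_Tr, hOT.compl.infDist_Tr] using hx
  · by_contra hxO
    have hx0 : (n + 1) * Metric.infDist x M ≤ 0 :=
      hx.trans_eq (Metric.infDist_zero_of_mem hxO)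
    refine hxO (hMO ((hM.mem_iff_infDist_zero hne).2 ?_))
    nlinarith [Metric.infDist_nonneg (x := x) (s := M), n.cast_nonneg (α := ℝ)]
  · by_cases hxM : x ∈ M
    · exact hMS n hxM
    · have hpos := (hM.notMem_iff_infDist_pos hne).1 hxM
      rw [mem_ofPred_eq, Nat.cast_add_one] at hx
      exact hlt n x (by linarith)

/-- From nested attractors `G '' A ⊆ … ⊆ S 1 ⊆ S 0 ⊆ A` of `G = T⁻ᵖ ∘ F^q` one gets the attractor
`S (q - 1) ∪ F (S (q - 2)) ∪ … ∪ F^(q - 1) (S 0)` of `F`. -/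
theorem IsAttractor.exists_of_shiftedIterate {F : Plane ≃ₜ Plane} (hcomm : CommutesWithDeck F)
    {q : ℕ} (hq : 1 ≤ q) {p : ℤ} {A : Set Plane} (hA : IsAttractor (shiftedIterate F q p) A)
    {x y : Plane} (hx : x ∈ A) [NeBot (returns (shiftedIterate F q p) x)]
    (hy : ∀ i < q, F^[i] y ∉ A) :
    ∃ V, IsAttractor F V ∧ x ∈ V ∧ F^[q - 1] y ∉ V := by
  have hGcomm := hcomm.shiftedIterate q p
  have hxM := hA.mem_image hGcomm hx
  obtain ⟨S, hclosed, hdeck, hSA, hMS, hS⟩ := exists_seq_deckInvariant_between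
    ((shiftedIterate F q p).isClosedMap _ hA.isClosed) ⟨x, hxM⟩ (hA.deckInvariant.image hGcomm)
    isOpen_interior ⟨y, fun h => hy 0 hq (interior_subset h)⟩ hA.deckInvariant.interior
    hA.mapsTo.image_subset
  replace hSA : ∀ n, S n ⊆ A := fun n => (hSA n).trans interior_subset
  let V := ⋃ i : Fin q, ⇑(F ^ (i : ℕ)) '' S (q - 1 - i)
  have hmem : ∀ i < q, ∀ w ∈ interior (S (q - 1 - i)), F^[i] w ∈ interior V := fun i hi w hw => by
    refine interior_mono (subset_iUnion _ (⟨i, hi⟩ : Fin q)) ?_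
    rw [← Homeomorph.image_interior]
    exact ⟨w, hw, by rw [homeomorph_coe_pow]⟩
  refine ⟨V, ⟨isClosed_iUnion_of_finite fun i => (F ^ (i : ℕ)).isClosedMap _ (hclosed _), ?_, ?_⟩,
    interior_subset (hmem 0 hq x (hMS _ hxM)), ?_⟩
  · refine fun k => (mapsTo_iUnion_iUnion fun i => ?_)
    refine (hdeck _).image ?_ k
    rw [homeomorph_coe_pow]
    exact hcomm.iterate _
  · refine mapsTo_iUnion.2 fun i => ?_
    rintro _ ⟨w, hw, rfl⟩
    rw [homeomorph_coe_pow, ← Function.iterate_succ_apply' F]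
    obtain hi | hi := (Nat.succ_le_of_lt i.is_lt).lt_or_eq
    · refine hmem _ hi w (hS _ ?_)
      rwa [show q - 1 - (i : ℕ).succ + 1 = q - 1 - i by lia]
    · refine hmem 0 hq _ (hMS _ ?_)
      have hGw : Tr p (shiftedIterate F q p w) = F^[(i : ℕ).succ] w := by
        rw [shiftedIterate_apply, Tr_Tr, add_neg_cancel, Tr_zero, hi]
      exact hGw ▸ hA.deckInvariant.image hGcomm p ⟨w, hSA _ hw, rfl⟩
  · intro h
    obtain ⟨i, w, hw, hwy⟩ := mem_iUnion.1 h
    have hw' : w = F^[q - 1 - i] y := (F ^ (i : ℕ)).injective <| by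
      rw [hwy, homeomorph_coe_pow, ← Function.iterate_add_apply]
      congr 2
      lia
    exact hy _ (by lia) (hSA _ (hw' ▸ hw))

/-! ### Separation by an attractor -/

section Tiling

open Relation

variable {ι : Type*} [AddAction ℤ ι] {F G : Plane ≃ₜ Plane} {b : ι → Set Plane} {u w z z' : Plane}

theorem Transition.vadd (hcomm : CommutesWithDeck G) (hb : IsFreeTiling G b) :
    Covariant ℤ ι (· +ᵥ ·) (Transition G b) := by
  rintro k i j ⟨x, hx, hGx⟩
  exact ⟨Tr k x, (hb.Tr_mem_vadd_iff k i x).2 hx, by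
    rw [(hcomm k).eq]; exact (hb.Tr_mem_vadd_iff k j _).2 hGx⟩

theorem IsFreeTiling.mem_of_frequently (hb : IsFreeTiling G b)
    {α : Type*} {l : Filter α} {v : α → Plane} (hv : Tendsto v l (𝓝 u)) {P : α → Prop}
    (hP : ∃ᶠ a in l, P a) : ∃ i, u ∈ b i ∧ ∃ a, P a ∧ v a ∈ b i := by
  have hnear := hv.eventually (hb.locallyFinite.iInter_compl_mem_nhds hb.isClosed u)
  obtain ⟨a, ha, hPa⟩ := (hP.and_eventually hnear).exists
  obtain ⟨i, hi⟩ := hb.exists_mem (v a)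
  refine ⟨i, ?_, a, ha, hi⟩
  by_contra hui
  exact mem_iInter₂.1 hPa i hui hi

theorem IsFreeTiling.exists_iterate_mem_of_frequently_returns (hb : IsFreeTiling G b)
    {P : ℤ → Prop} (hP : ∃ᶠ r in returns G u, P r.2) :
    ∃ i, u ∈ b i ∧ ∃ k, P k ∧ ∃ m, 1 ≤ m ∧ G^[m] u ∈ b (k +ᵥ i) := by
  obtain ⟨i, hu, r, ⟨hr, hr1⟩, hi⟩ := hb.mem_of_frequently (tendsto_returns G u)
    (hP.and_eventually (eventually_one_le_returns G u))
  refine ⟨i, hu, r.2, hr, r.1, hr1, ?_⟩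
  rwa [← hb.Tr_mem_vadd_iff r.2, Tr_Tr, add_neg_cancel, Tr_zero] at hi

/-- Up to deck transformations, the tile `j` can be reached from the tile `i`. -/
def Reaches (G : Plane → Plane) (b : ι → Set Plane) (i j : ι) : Prop :=
  ∃ l : ℤ, ReflTransGen (Transition G b) i (l +ᵥ j)

theorem Reaches.refl (i : ι) : Reaches G b i i :=
  ⟨0, by rw [zero_vadd]⟩

theorem Reaches.trans (hcomm : CommutesWithDeck G) (hb : IsFreeTiling G b) {i j k : ι}
    (hij : Reaches G b i j) (hjk : Reaches G b j k) : Reaches G b i k := by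
  obtain ⟨l, hl⟩ := hij
  obtain ⟨l', hl'⟩ := hjk
  refine ⟨l + l', hl.trans ?_⟩
  rw [← vadd_vadd]
  exact reflTransGen_vadd (Transition.vadd hcomm hb) l hl'

theorem IsFreeTiling.isAttractor_iUnion_reaches (hcomm : CommutesWithDeck G)
    (hb : IsFreeTiling G b) (i : ι) :
    IsAttractor G (⋃ j : {j // Reaches G b i j}, b j) where
  isClosed := (hb.locallyFinite.comp_injective Subtype.val_injective).isClosed_iUnion
    fun j => hb.isClosed j
  deckInvariant k x hx := by
    obtain ⟨⟨j, l, hl⟩, hxj⟩ := mem_iUnion.1 hx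
    refine mem_iUnion.2 ⟨⟨k +ᵥ j, l - k, ?_⟩, (hb.Tr_mem_vadd_iff k j x).2 hxj⟩
    rwa [vadd_vadd, sub_add_cancel]
  mapsTo x hx := by
    obtain ⟨⟨j, hij⟩, hxj⟩ := mem_iUnion.1 hx
    rw [mem_interior_iff_mem_nhds]
    filter_upwards [hb.locallyFinite.iInter_compl_mem_nhds hb.isClosed (G x)] with y hy
    obtain ⟨j', hyj'⟩ := hb.exists_mem y
    have hGx : G x ∈ b j' := by
      by_contra h
      exact mem_iInter₂.1 hy j' h hyj'
    refine mem_iUnion.2 ⟨⟨j', hij.trans hcomm hb ⟨0, .single ⟨x, hxj, ?_⟩⟩⟩, hyj'⟩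
    rwa [zero_vadd]

theorem IsFreeTiling.notMem_iUnion_reaches (hcomm : CommutesWithDeck G) (hb : IsFreeTiling G b)
    {i j : ι} (hij : ¬ Reaches G b i j) {k : ℤ} {m : ℕ} (hm : 1 ≤ m) (hu : G^[m] u ∈ b (k +ᵥ j)) :
    u ∉ ⋃ j : {j // Reaches G b i j}, b j := by
  intro h
  obtain ⟨⟨j', hij'⟩, huj'⟩ := mem_iUnion.1 h
  refine hij (hij'.trans hcomm hb ⟨k, TransGen.to_reflTransGen ?_⟩)
  exact transGen_transition_of_iterate_mem hb.exists_mem hm huj' hu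

/-- For a free tiling of `T⁻ᵖ ∘ F^q`, a point and the tiles around the first `q` points of its
`F`-orbit which return to a translate of themselves. -/
structure ReturningTiles (F : Plane ≃ₜ Plane) (q : ℕ) (p : ℤ) (b : ι → Set Plane) (P : ℤ → Prop)
    (z : Plane) (τ : ℕ → ι) : Prop where
  neBot (n : ℕ) : NeBot (returns (shiftedIterate F q p) (F^[n] z))
  mem (n : ℕ) : F^[n] z ∈ b (τ n)
  exists_return (n : ℕ) :
    ∃ k, P k ∧ ∃ m, 1 ≤ m ∧ (shiftedIterate F q p)^[m] (F^[n] z) ∈ b (k +ᵥ τ n)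

variable {q : ℕ} {p : ℤ}

theorem exists_returningTiles (hcomm : CommutesWithDeck F)
    (hb : IsFreeTiling (shiftedIterate F q p) b) {P : ℤ → Prop}
    (hP : ∃ᶠ r in returns (shiftedIterate F q p) z, P r.2) :
    ∃ τ : ℕ → ι, ReturningTiles F q p b P z τ := by
  have hle (n : ℕ) : returns (shiftedIterate F q p) z ≤ returns (shiftedIterate F q p) (F^[n] z) :=
    returns_le_of_commute (F.continuous.iterate n) (hcomm.iterate n)
      (hcomm.commute_shiftedIterate n q p) z
  choose τ hτ hret using fun n =>
    hb.exists_iterate_mem_of_frequently_returns (hP.filter_mono (hle n))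
  exact ⟨τ, fun n => (frequently_true_iff_neBot _).1 <|
    (hP.filter_mono (hle n)).mono fun _ _ => trivial, hτ, hret⟩

theorem ReturningTiles.exists_isAttractor (hcomm : CommutesWithDeck F) (hq : 1 ≤ q)
    (hb : IsFreeTiling (shiftedIterate F q p) b) {P P' : ℤ → Prop} {τ τ' : ℕ → ι}
    (hz : ReturningTiles F q p b P z τ) (hz' : ReturningTiles F q p b P' z' τ') {n : ℕ}
    (hn : ∀ j < q, ¬ Reaches (shiftedIterate F q p) b (τ n) (τ' j)) :
    ∃ V, IsAttractor F V ∧ F^[n] z ∈ V ∧ F^[q - 1] z' ∉ V := by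
  have hG := hcomm.shiftedIterate q p
  have := hz.neBot n
  refine (hb.isAttractor_iUnion_reaches hG (τ n)).exists_of_shiftedIterate hcomm hq
    (mem_iUnion.2 ⟨⟨τ n, .refl _⟩, hz.mem n⟩) fun j hj => ?_
  obtain ⟨k, -, m, hm, hk⟩ := hz'.exists_return j
  exact hb.notMem_iUnion_reaches hG (hn j hj) hm hk

theorem ReturningTiles.transGen (hb : IsFreeTiling (shiftedIterate F q p) b) {P : ℤ → Prop}
    {τ : ℕ → ι} (hz : ReturningTiles F q p b P z τ) (n : ℕ) :
    ∃ k, P k ∧ TransGen (Transition (shiftedIterate F q p) b) (τ n) (k +ᵥ τ n) := by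
  obtain ⟨k, hk, m, hm, hmem⟩ := hz.exists_return n
  exact ⟨k, hk, transGen_transition_of_iterate_mem hb.exists_mem hm (hz.mem n) hmem⟩

/-- If there were no attractor, then two tiles with periods of opposite signs could be reached from
each other, against Franks' lemma. -/
theorem exists_isAttractor_separating (hcomm : CommutesWithDeck F) (hq : 1 ≤ q)
    (hiso : InjIsotopicToId (shiftedIterate F q p)) (hfix : ∀ x, shiftedIterate F q p x ≠ x)
    (hz : ∃ᶠ r in returns (shiftedIterate F q p) z, 0 ≤ r.2)
    (hz' : ∃ᶠ r in returns (shiftedIterate F q p) z', r.2 ≤ 0) :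
    ∃ V, IsAttractor F V ∧ ∃ i j, F^[i] z ∈ V ∧ F^[j] z' ∉ V ∨ F^[i] z' ∈ V ∧ F^[j] z ∉ V := by
  have hG := hcomm.shiftedIterate q p
  obtain ⟨N, hb⟩ := exists_isFreeTiling (shiftedIterate F q p).continuous hfix hG
  obtain ⟨τ, hτ⟩ := exists_returningTiles hcomm hb hz
  obtain ⟨τ', hτ'⟩ := exists_returningTiles (P := (· ≤ 0)) hcomm hb hz'
  by_contra! hsep
  have hreach (i : ℕ) : ∃ j < q, Reaches (shiftedIterate F q p) TileIndex.tile (τ i) (τ' j) := by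
    by_contra! hi
    obtain ⟨V, hV, hzV, hzV'⟩ := hτ.exists_isAttractor hcomm hq hb hτ' hi
    exact hzV' ((hsep V hV i (q - 1)).1 hzV)
  have hreach' (i : ℕ) : ∃ j < q, Reaches (shiftedIterate F q p) TileIndex.tile (τ' i) (τ j) := by
    by_contra! hi
    obtain ⟨V, hV, hzV, hzV'⟩ := hτ'.exists_isAttractor hcomm hq hb hτ hi
    exact hzV' ((hsep V hV i (q - 1)).2 hzV)
  let reachesPreorder : Preorder (TileIndex N) :=
    { le := Reaches (shiftedIterate F q p) TileIndex.tile
      le_refl := .refl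
      le_trans := fun _ _ _ => .trans hG hb }
  obtain ⟨i, hi⟩ := (finite_lt_nat q).exists_maximalFor τ {i | i < q} ⟨0, hq⟩
  obtain ⟨i', -, l, hl⟩ := hreach i
  obtain ⟨j, hj, hij⟩ := hreach' i'
  obtain ⟨l', hl'⟩ := hij.trans hG hb (hi.2 hj (Reaches.trans hG hb ⟨l, hl⟩ hij))
  obtain ⟨k, hk, hki⟩ := hτ.transGen hb i
  obtain ⟨k', hk', hki'⟩ := hτ'.transGen hb i'
  obtain ⟨i₀, hi₀⟩ := exists_transGen_self (Transition.vadd hG hb) hki hk hki' hk' hl hl'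
  exact hiso.not_transGen_transition hfix hb.isFree hb.joinedInMember i₀ hi₀

end Tiling

/-! ### Components periodic under the deck group -/

theorem shiftedIterate_iterate {F : Plane ≃ₜ Plane} (hF : CommutesWithDeck F) (q : ℕ) (p : ℤ)
    (s : ℕ) (x : Plane) :
    (shiftedIterate F q p)^[s] x = shiftedIterate F (q * s) (s * p) x := by
  induction s with
  | zero => simp
  | succ s ih =>
    rw [Function.iterate_succ_apply', ih, shiftedIterate_apply, shiftedIterate_apply,
      ((hF.iterate q) _).eq, Tr_Tr, ← Function.iterate_add_apply]
    simp [mul_add, add_mul, add_comm]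

/-- A lift to the plane of a homeomorphism of the annulus which is isotopic to the identity and
without periodic orbits. -/
structure IsAperiodicLift (F : Plane ≃ₜ Plane) : Prop where
  commutesWithDeck : CommutesWithDeck F
  injIsotopicToId (q : ℕ) (p : ℤ) : InjIsotopicToId (shiftedIterate F q p)
  shiftedIterate_ne {q : ℕ} (hq : 1 ≤ q) (p : ℤ) (x : Plane) : shiftedIterate F q p x ≠ x

theorem IsAperiodicLift.eventually_div_ne {F : Plane ≃ₜ Plane} (hF : IsAperiodicLift F) (x : ℚ)
    (v : Plane) : ∀ᶠ r in returns F v, (r.2 / r.1 : ℚ) ≠ x := by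
  by_contra h
  simp only [not_eventually, ne_eq, not_not] at h
  let G := shiftedIterate F x.den x.num
  have hfix : ∀ y, G y ≠ y := hF.shiftedIterate_ne x.den_pos x.num
  obtain ⟨ε, hε, hfree⟩ := exists_isFree_ball G.continuous.continuousAt (hfix v)
  obtain ⟨r, hr, hr1, hball⟩ := (h.and_eventually ((eventually_one_le_returns F v).and
    ((tendsto_returns F v).eventually (Metric.ball_mem_nhds v hε)))).exists
  obtain ⟨c, hc2, hc1⟩ := Rat.num_den_mk (q := x) (n := r.2) (d := r.1) (by lia)
    (by rw [← hr, Rat.divInt_eq_div, Int.cast_natCast])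
  have hc : 0 < c := pos_of_mul_pos_left (a := c) (b := x.den) (by lia) (by positivity)
  lift c to ℕ using hc.le
  have hG : G^[c] v = Tr (-r.2) (F^[r.1] v) := by
    rw [shiftedIterate_iterate hF.commutesWithDeck, shiftedIterate_apply, ← hc2, mul_comm,
      show r.1 = c * x.den by exact_mod_cast hc1]
  exact (hF.injIsotopicToId _ _).iterate_notMem_of_convex hfix (convex_ball v ε) hfree
    (Metric.mem_ball_self hε) (by exact_mod_cast hc) (hG ▸ hball)

theorem IsAperiodicLift.exists_returns_mul_ne {F : Plane ≃ₜ Plane} (hF : IsAperiodicLift F)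
    {v : Plane} [NeBot (returns F v)] {P : ℕ × ℤ → Prop} (hP : ∀ᶠ r in returns F v, P r) :
    ∃ r r' : ℕ × ℤ, P r ∧ P r' ∧ r.1 * r'.2 ≠ r'.1 * r.2 := by
  have hP1 := hP.and (eventually_one_le_returns F v)
  obtain ⟨r, hr, hr1⟩ := hP1.exists
  obtain ⟨r', ⟨hr', hr1'⟩, hne⟩ := (hP1.and (hF.eventually_div_ne (r.2 / r.1) v)).exists
  refine ⟨r, r', hr, hr', fun h => hne ?_⟩
  have hpos : (0 : ℚ) < r.1 := by exact_mod_cast hr1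
  have hpos' : (0 : ℚ) < r'.1 := by exact_mod_cast hr1'
  rw [div_eq_div_iff hpos'.ne' hpos.ne', mul_comm, mul_comm (r.2 : ℚ)]
  exact_mod_cast h

theorem mapsTo_connectedComponentIn_of_mem {X : Type*} [TopologicalSpace X] {S : X → X}
    (hS : Continuous S) {U : Set X} (hU : MapsTo S U U) {v y : X}
    (hy : y ∈ connectedComponentIn U v) (hSy : S y ∈ connectedComponentIn U v) :
    MapsTo S (connectedComponentIn U v) (connectedComponentIn U v) := by
  have hmaps := hS.continuousOn.mapsTo_connectedComponentIn (connectedComponentIn_subset _ _ hy)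
  rw [← connectedComponentIn_eq hy] at hmaps
  rw [connectedComponentIn_eq hSy] at hmaps ⊢
  exact hmaps.mono_right (connectedComponentIn_mono _ hU.image_subset)

section Component

variable {F Φ : Plane ≃ₜ Plane} {U : Set Plane} {v : Plane}

theorem mapsTo_shiftedIterate (hΦ : MapsTo Φ U U) (hU : DeckInvariant U) (n : ℕ) (k : ℤ) :
    MapsTo (shiftedIterate Φ n k) U U := fun x hx => by
  rw [shiftedIterate_apply]
  exact hU _ (hΦ.iterate n hx)

theorem exists_Tr_mem_connectedComponentIn (hΦ : CommutesWithDeck Φ) (hU : DeckInvariant U)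
    (hv : v ∈ U) {n n' : ℕ} {k k' : ℤ}
    (h : MapsTo (shiftedIterate Φ n k) (connectedComponentIn U v) (connectedComponentIn U v))
    (h' : MapsTo (shiftedIterate Φ n' k') (connectedComponentIn U v) (connectedComponentIn U v))
    (hne : n * k' ≠ n' * k) :
    ∃ j : ℤ, j ≠ 0 ∧ Tr j v ∈ connectedComponentIn U v := by
  have hself := mem_connectedComponentIn hv
  have hy := h.iterate n' hself
  have hy' := h'.iterate n hself
  rw [shiftedIterate_iterate hΦ, shiftedIterate_apply] at hy hy'
  refine ⟨n' * k - n * k', sub_ne_zero.2 hne.symm,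
    mapsTo_connectedComponentIn_of_mem (continuous_Tr _) (hU _) hy ?_ hself⟩
  rw [Tr_Tr]
  convert hy' using 2
  · ring
  · rw [mul_comm]

theorem IsAperiodicLift.exists_Tr_mem_of_mapsTo (hF : IsAperiodicLift F) (hopen : IsOpen U)
    (hU : DeckInvariant U) (hFU : MapsTo F U U) (hv : v ∈ U) [NeBot (returns F v)] :
    ∃ j : ℤ, j ≠ 0 ∧ Tr j v ∈ connectedComponentIn U v := by
  have hself := mem_connectedComponentIn hv
  obtain ⟨r, r', hr, hr', hne⟩ := hF.exists_returns_mul_ne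
    ((tendsto_returns F v).eventually (hopen.connectedComponentIn.mem_nhds hself))
  have hmaps : ∀ r : ℕ × ℤ, Tr (-r.2) (F^[r.1] v) ∈ connectedComponentIn U v → _ := fun r hr =>
    mapsTo_connectedComponentIn_of_mem (shiftedIterate F r.1 r.2).continuous
      (mapsTo_shiftedIterate hFU hU _ _) hself (by rwa [shiftedIterate_apply])
  exact exists_Tr_mem_connectedComponentIn hF.commutesWithDeck hU hv (hmaps r hr) (hmaps r' hr') hne

theorem CommutesWithDeck.symm (hF : CommutesWithDeck F) : CommutesWithDeck F.symm := fun k x =>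
  F.injective <| by simp [(hF k).eq]

theorem IsAperiodicLift.exists_Tr_mem_of_mapsTo_symm (hF : IsAperiodicLift F) (hopen : IsOpen U)
    (hU : DeckInvariant U) (hFU : MapsTo F.symm U U) (hv : v ∈ U) [NeBot (returns F v)] :
    ∃ j : ℤ, j ≠ 0 ∧ Tr j v ∈ connectedComponentIn U v := by
  have hself := mem_connectedComponentIn hv
  have hsymm := hF.commutesWithDeck.symm
  obtain ⟨r, r', hr, hr', hne⟩ := hF.exists_returns_mul_ne
    ((tendsto_returns F v).eventually (hopen.connectedComponentIn.mem_nhds hself))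
  have hmaps : ∀ r : ℕ × ℤ, Tr (-r.2) (F^[r.1] v) ∈ connectedComponentIn U v → _ := fun r hr =>
    mapsTo_connectedComponentIn_of_mem (shiftedIterate F.symm r.1 (-r.2)).continuous
      (mapsTo_shiftedIterate hFU hU _ _) hr (by
        have hinv : F.symm^[r.1] (F^[r.1] v) = v :=
          Function.LeftInverse.iterate F.symm_apply_apply r.1 v
        rwa [shiftedIterate_apply, ((hsymm.iterate r.1) _).eq, Tr_Tr, neg_neg, add_neg_cancel,
          Tr_zero, hinv])
  refine exists_Tr_mem_connectedComponentIn hsymm hU hv (hmaps r hr) (hmaps r' hr') ?_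
  rwa [mul_neg, mul_neg, Ne, neg_inj]

end Component

theorem connectedComponentIn_Tr_eq {W : Set Plane} (hW : DeckInvariant W) (k : ℤ) {x y : Plane}
    (h : connectedComponentIn W x = connectedComponentIn W y) :
    connectedComponentIn W (Tr k x) = connectedComponentIn W (Tr k y) := by
  have himage (z : Plane) : Tr k '' connectedComponentIn W z = connectedComponentIn W (Tr k z) := by
    by_cases hz : z ∈ W
    · have hWk : Tr k '' W = W := (hW k).image_subset.antisymm fun w hw =>
        ⟨Tr (-k) w, hW _ hw, by simp⟩
      simpa [hWk] using (deckHomeo k).image_connectedComponentIn hz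
    · rw [connectedComponentIn_eq_empty hz, image_empty, connectedComponentIn_eq_empty]
      rwa [hW.Tr_mem_iff]
  rw [← himage, ← himage, h]

/-- Two points are equivalent when the deck group maps the component of one in `W` to the component
of the other. -/
def componentOrbitSetoid {W : Set Plane} (hW : DeckInvariant W) : Setoid Plane where
  r x y := ∃ k : ℤ, connectedComponentIn W (Tr k x) = connectedComponentIn W y
  iseqv :=
    { refl x := ⟨0, by rw [Tr_zero]⟩
      symm := fun ⟨k, hk⟩ => ⟨-k, by simpa using (connectedComponentIn_Tr_eq hW (-k) hk).symm⟩
      trans := fun ⟨k, hk⟩ ⟨l, hl⟩ =>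
        ⟨l + k, by rw [← Tr_Tr, connectedComponentIn_Tr_eq hW l hk, hl]⟩ }

theorem exists_int_height {W : Set Plane} (hW : DeckInvariant W)
    (hno : ∀ w ∈ W, ∀ k : ℤ, k ≠ 0 → Tr k w ∉ connectedComponentIn W w) :
    ∃ ψ : Plane → ℤ, (∀ w ∈ W, ∀ y ∈ connectedComponentIn W w, ψ y = ψ w) ∧
      ∀ w ∈ W, ∀ k, ψ (Tr k w) = ψ w + k := by
  have hunique {w x : Plane} {k l : ℤ} (hw : w ∈ W)
      (hk : connectedComponentIn W (Tr k x) = connectedComponentIn W w)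
      (hl : connectedComponentIn W (Tr l x) = connectedComponentIn W w) : k = l := by
    by_contra hkl
    have hkx : Tr k x ∈ W := connectedComponentIn_nonempty_iff.1
      (hk ▸ connectedComponentIn_nonempty_iff.2 hw)
    refine hno _ hkx (l - k) (sub_ne_zero.2 (Ne.symm hkl)) ?_
    rw [Tr_Tr, sub_add_cancel, hk, ← hl]
    exact mem_connectedComponentIn (by simpa [hW.Tr_mem_iff] using hkx)
  let r (w : Plane) : Plane := (Quotient.mk (componentOrbitSetoid hW) w).out
  have hr (w : Plane) : ∃ k : ℤ, connectedComponentIn W (Tr k (r w)) = connectedComponentIn W w :=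
    Quotient.exact (s := componentOrbitSetoid hW) (Quotient.out_eq _)
  have hr_eq {w y : Plane} (k : ℤ)
      (h : connectedComponentIn W (Tr k w) = connectedComponentIn W y) : r w = r y :=
    congrArg Quotient.out (Quotient.sound (s := componentOrbitSetoid hW) ⟨k, h⟩)
  choose ψ hψ using hr
  refine ⟨ψ, fun w hw y hy => ?_, fun w hw k => ?_⟩
  · have hyw := (connectedComponentIn_eq hy).symm
    refine hunique (x := r w) hw ?_ (hψ w)
    rw [← hr_eq 0 ((Tr_zero y).symm ▸ hyw), hψ, hyw]
  · refine hunique (x := r w) (hW k hw) ?_ ?_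
    · rw [hr_eq k rfl]
      exact hψ _
    · rw [add_comm, ← Tr_Tr]
      exact connectedComponentIn_Tr_eq hW k (hψ w)

theorem exists_deckInvariant_cutoff {M N : Set Plane} (hM : IsClosed M) (hN : IsClosed N)
    (hMne : M.Nonempty) (hNne : N.Nonempty) (hMT : DeckInvariant M) (hNT : DeckInvariant N)
    (hMN : Disjoint M N) :
    ∃ η : Plane → ℝ, Continuous η ∧ (∀ k x, η (Tr k x) = η x) ∧
      (∀ x ∈ M, ∀ᶠ y in 𝓝 x, η y = 1) ∧ ∀ x ∈ N, ∀ᶠ y in 𝓝 x, η y = 0 := by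
  have hne (x : Plane) : Metric.infDist x M + Metric.infDist x N ≠ 0 := fun h => by
    obtain ⟨hxM, hxN⟩ :=
      (add_eq_zero_iff_of_nonneg Metric.infDist_nonneg Metric.infDist_nonneg).1 h
    exact disjoint_left.1 hMN ((hM.mem_iff_infDist_zero hMne).2 hxM)
      ((hN.mem_iff_infDist_zero hNne).2 hxN)
  let h (x : Plane) : ℝ := Metric.infDist x M / (Metric.infDist x M + Metric.infDist x N)
  have hh : Continuous h := by fun_prop (disch := exact hne)
  refine ⟨fun x => max 0 (min 1 (2 - 3 * h x)), by fun_prop, fun k x => ?_, fun x hx => ?_,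
    fun x hx => ?_⟩
  · simp only [h, hMT.infDist_Tr, hNT.infDist_Tr]
  · have hx0 : h x < 1 / 3 := by simp [h, Metric.infDist_zero_of_mem hx]
    filter_upwards [hh.continuousAt.eventually_lt continuousAt_const hx0] with y hy
    rw [min_eq_left (by linarith), max_eq_right zero_le_one]
  · have hx1 : 2 / 3 < h x := by
      have := hne x
      rw [Metric.infDist_zero_of_mem hx, add_zero] at this
      simp only [h, Metric.infDist_zero_of_mem hx, add_zero, div_self this]
      norm_num
    filter_upwards [continuousAt_const.eventually_lt hh.continuousAt hx1] with y hy
    rw [max_eq_left ((min_le_right _ _).trans (by linarith))]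

theorem sub_eq_sub_of_exp_eqOn {X : Type*} [TopologicalSpace X] {A : Set X}
    (hA : IsPreconnected A) {L M : X → ℂ} (hL : ContinuousOn L A) (hM : ContinuousOn M A)
    (h : ∀ x ∈ A, Complex.exp (L x) = Complex.exp (M x)) {a b : X} (ha : a ∈ A) (hb : b ∈ A) :
    L a - L b = M a - M b := by
  have := isPreconnected_iff_preconnectedSpace.1 hA
  exact sub_eq_sub_of_exp_eq hL.domRestrict hM.domRestrict (fun x => h x x.2) ⟨a, ha⟩ ⟨b, hb⟩

theorem exists_addMonoidHom_of_exp_deckInvariant {L : Plane → ℂ} (hL : Continuous L)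
    (hLT : ∀ k x, Complex.exp (L (Tr k x)) = Complex.exp (L x)) :
    ∃ c : ℤ →+ ℂ, ∀ k x, L (Tr k x) = L x + c k := by
  have hc (k : ℤ) (x : Plane) : L (Tr k x) = L x + (L (Tr k 0) - L 0) := by
    linear_combination
      sub_eq_sub_of_exp_eq (L := fun y => L (Tr k y)) (hL.comp (continuous_Tr k)) hL (hLT k) x 0
  refine ⟨.mk' (fun k => L (Tr k 0) - L 0) fun k l => ?_, hc⟩
  rw [← Tr_Tr, hc k]
  ring

/-- A circle-valued function equal to `exp (2πix)` near `M` and to `1` near `N`. Between them it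
turns by `η (x - ψ)`. -/
theorem exists_continuous_exp_eq_on {M N : Set Plane} (hM : IsClosed M) (hN : IsClosed N)
    (hMne : M.Nonempty) (hNne : N.Nonempty) (hMT : DeckInvariant M) (hNT : DeckInvariant N)
    (hMN : Disjoint M N)
    (hno : ∀ w ∈ (M ∪ N)ᶜ, ∀ k : ℤ, k ≠ 0 → Tr k w ∉ connectedComponentIn (M ∪ N)ᶜ w) :
    ∃ φ : Plane → ℂ, Continuous φ ∧ (∀ x, φ x ≠ 0) ∧ (∀ k x, φ (Tr k x) = φ x) ∧
      (∀ x ∈ M, φ x = Complex.exp (2 * Real.pi * Complex.I * x.1)) ∧ ∀ x ∈ N, φ x = 1 := by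
  have hWT : DeckInvariant (M ∪ N)ᶜ := DeckInvariant.compl fun k => (hMT k).union_union (hNT k)
  obtain ⟨ψ, hψ, hψT⟩ := exists_int_height hWT hno
  obtain ⟨η, hη, hηT, hηM, hηN⟩ := exists_deckInvariant_cutoff hM hN hMne hNne hMT hNT hMN
  let φ (x : Plane) : ℂ := Complex.exp (2 * Real.pi * Complex.I * (η x * (x.1 - ψ x)))
  have hφ1 {x : Plane} (hx : η x = 1) : φ x = Complex.exp (2 * Real.pi * Complex.I * x.1) :=
    Complex.exp_eq_exp_iff_exists_int.2 ⟨-ψ x, by rw [hx]; push_cast; ring⟩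
  have hφ0 {x : Plane} (hx : η x = 0) : φ x = 1 := by simp [φ, hx]
  have hφM : ∀ x ∈ M, φ x = _ := fun x hx => hφ1 (hηM x hx).self_of_nhds
  have hφN : ∀ x ∈ N, φ x = 1 := fun x hx => hφ0 (hηN x hx).self_of_nhds
  refine ⟨φ, continuous_iff_continuousAt.2 fun x => ?_, fun x => Complex.exp_ne_zero _,
    fun k x => ?_, hφM, hφN⟩
  · by_cases hxM : x ∈ M
    · have hcont : Continuous fun y : Plane => Complex.exp (2 * Real.pi * Complex.I * y.1) := by
        fun_prop
      exact hcont.continuousAt.congr ((hηM x hxM).mono fun y hy => (hφ1 hy).symm)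
    by_cases hxN : x ∈ N
    · exact continuousAt_const.congr ((hηN x hxN).mono fun y hy => (hφ0 hy).symm)
    have hcont : Continuous fun y : Plane =>
        Complex.exp (2 * Real.pi * Complex.I * (η y * (y.1 - ψ x))) := by fun_prop
    have hxW : x ∈ (M ∪ N)ᶜ := fun h => h.elim hxM hxN
    refine hcont.continuousAt.congr ?_
    filter_upwards [(hM.union hN).isOpen_compl.connectedComponentIn.mem_nhds
      (mem_connectedComponentIn hxW)] with y hy
    simp only [φ, hψ x hxW y hy]
  · by_cases hxM : x ∈ M
    · rw [hφM x hxM, hφM _ (hMT k hxM)]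
      exact Complex.exp_eq_exp_iff_exists_int.2 ⟨k, by simp only [Tr]; push_cast; ring⟩
    by_cases hxN : x ∈ N
    · rw [hφN x hxN, hφN _ (hNT k hxN)]
    simp only [φ, hηT, hψT x (fun h => h.elim hxM hxN), show (Tr k x).1 = x.1 + k from rfl]
    congr 1
    push_cast
    ring

theorem exists_Tr_mem_connectedComponentIn_compl {M N : Set Plane} (hM : IsClosed M)
    (hN : IsClosed N) (hMT : DeckInvariant M) (hNT : DeckInvariant N) (hMN : Disjoint M N)
    {a b : Plane} {k l : ℤ} (hk : k ≠ 0) (hl : l ≠ 0) {A B : Set Plane} (hA : IsPreconnected A)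
    (hAM : A ⊆ M) (ha : a ∈ A) (ha' : Tr k a ∈ A) (hB : IsPreconnected B) (hBN : B ⊆ N)
    (hb : b ∈ B) (hb' : Tr l b ∈ B) :
    ∃ w ∈ (M ∪ N)ᶜ, ∃ j : ℤ, j ≠ 0 ∧ Tr j w ∈ connectedComponentIn (M ∪ N)ᶜ w := by
  by_contra! hno
  obtain ⟨φ, hφ, hφ0, hφT, hφM, hφN⟩ :=
    exists_continuous_exp_eq_on hM hN ⟨a, hAM ha⟩ ⟨b, hBN hb⟩ hMT hNT hMN hno
  obtain ⟨L, hL, hLφ⟩ := exists_continuous_exp_eq hφ hφ0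
  obtain ⟨c, hc⟩ := exists_addMonoidHom_of_exp_deckInvariant hL fun k x => by
    rw [hLφ, hLφ, hφT]
  have hck : c k = k * (2 * Real.pi * Complex.I) := by
    have := sub_eq_sub_of_exp_eqOn (M := fun x => 2 * Real.pi * Complex.I * x.1) hA
      hL.continuousOn (by fun_prop) (fun x hx => (hLφ x).trans (hφM x (hAM hx))) ha' ha
    rw [hc] at this
    simp only [Tr] at this
    push_cast at this
    linear_combination this
  have hcl : c l = 0 := by
    have := sub_eq_sub_of_exp_eqOn (M := 0) hB hL.continuousOn continuousOn_const
      (fun x hx => by rw [hLφ, hφN x (hBN hx), Pi.zero_apply, Complex.exp_zero]) hb' hb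
    simpa [hc] using this
  have hzero : l • c k = 0 := by rw [← map_zsmul, smul_eq_mul, mul_comm, ← smul_eq_mul, map_zsmul,
    hcl, smul_zero]
  rw [hck, zsmul_eq_mul] at hzero
  have hne : (2 * Real.pi * Complex.I : ℂ) ≠ 0 := Complex.two_pi_I_ne_zero
  exact mul_ne_zero (Int.cast_ne_zero.2 hl) (mul_ne_zero (Int.cast_ne_zero.2 hk) hne) hzero

/-! ### Essential circles -/

theorem prj_eq_prj_iff {p q : Plane} : prj p = prj q ↔ ∃ m : ℤ, p = Tr m q := by
  have hcoe : (p.1 : AddCircle (1 : ℝ)) = q.1 ↔ ∃ m : ℤ, p.1 = q.1 + m := by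
    rw [← sub_eq_zero, ← AddCircle.coe_sub, AddCircle.coe_eq_zero_iff]
    exact exists_congr fun m => by rw [zsmul_one, eq_comm, sub_eq_iff_eq_add']
  simp only [prj, Tr, Prod.ext_iff, hcoe, exists_and_right]

theorem prj_Tr (k : ℤ) (p : Plane) : prj (Tr k p) = prj p := prj_eq_prj_iff.2 ⟨k, rfl⟩

theorem continuous_prj : Continuous prj :=
  ((AddCircle.continuous_mk' 1).comp continuous_fst).prodMk continuous_snd

theorem exists_continuous_lift_of_nullhomotopic {X : Type*} [TopologicalSpace X]
    {φ : C(X, AddCircle (1 : ℝ))} (h : φ.Nullhomotopic) :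
    ∃ L : X → ℝ, Continuous L ∧ ∀ x, (L x : AddCircle (1 : ℝ)) = φ x := by
  obtain ⟨q, ⟨H⟩⟩ := h
  obtain ⟨r, rfl⟩ := QuotientAddGroup.mk_surjective q
  have hcov := AddCircle.isCoveringMap_coe (1 : ℝ)
  let L := hcov.liftHomotopy H.symm.toContinuousMap (.const X r) fun x => H.symm.apply_zero x
  refine ⟨fun x => L (1, x), by fun_prop, fun x => ?_⟩
  exact (congrFun (hcov.liftHomotopy_lifts ..) (1, x)).trans (H.symm.apply_one x)

theorem fst_eq_fst_of_nullhomotopic {φ : C(AddCircle (1 : ℝ), Ann)} {g : ℝ → Plane}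
    (hg : Continuous g) (h : ∀ s ∈ Icc (0 : ℝ) 1, φ s = prj (g s)) (hφ : φ.Nullhomotopic) :
    (g 1).1 = (g 0).1 := by
  obtain ⟨L, hL, hLφ⟩ :=
    exists_continuous_lift_of_nullhomotopic (hφ.comp_right ⟨Prod.fst, continuous_fst⟩)
  have hLg (s : Icc (0 : ℝ) 1) : (L (s : ℝ) : AddCircle (1 : ℝ)) = ((g s).1 : ℝ) := by
    rw [hLφ, ContinuousMap.comp_apply, h s s.2]
    rfl
  have hlift : (fun s : Icc (0 : ℝ) 1 => L (s : ℝ)) =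
      fun s : Icc (0 : ℝ) 1 => (g s).1 + (L (0 : ℝ) - (g 0).1) := by
    refine (AddCircle.isCoveringMap_coe (1 : ℝ)).eq_of_comp_eq
      (hL.comp ((AddCircle.continuous_mk' 1).comp continuous_subtype_val)) (by fun_prop)
      (funext fun s => ?_) 0 (by simp)
    have h0 := hLg 0
    rw [Icc.coe_zero] at h0
    rw [Function.comp_apply, Function.comp_apply, AddCircle.coe_add, AddCircle.coe_sub, hLg, h0,
      sub_self, add_zero]
  have h1 := congrFun hlift 1
  simp only [Icc.coe_one, AddCircle.coe_period, AddCircle.coe_zero] at h1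
  linarith

theorem isEssentialCircle_image_of_path {g : ℝ → Plane} (hg : Continuous g) {k : ℤ} (hk : k ≠ 0)
    (hg1 : g 1 = Tr k (g 0))
    (hinj : ∀ s ∈ Ico (0 : ℝ) 1, ∀ t ∈ Ico (0 : ℝ) 1, prj (g s) = prj (g t) → s = t) :
    IsEssentialCircle (prj '' (g '' Ico 0 1)) := by
  have h01 : prj (g 1) = prj (g 0) := by rw [hg1, prj_Tr]
  let φ : C(AddCircle (1 : ℝ), Ann) := ⟨AddCircle.liftIco 1 0 (prj ∘ g),
    AddCircle.liftIco_zero_continuous h01.symm (continuous_prj.comp hg).continuousOn⟩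
  have hφ (s : ℝ) (hs : s ∈ Ico (0 : ℝ) 1) : φ s = prj (g s) :=
    AddCircle.liftIco_zero_coe_apply (f := prj ∘ g) hs
  have hrep (x : AddCircle (1 : ℝ)) : ∃ s ∈ Ico (0 : ℝ) 1, (s : AddCircle (1 : ℝ)) = x :=
    ⟨_, by simpa using (AddCircle.equivIco 1 0 x).2, AddCircle.coe_equivIco⟩
  refine ⟨φ, fun x y hxy => ?_, ?_, fun hnull => ?_⟩
  · obtain ⟨s, hs, rfl⟩ := hrep x
    obtain ⟨t, ht, rfl⟩ := hrep y
    rw [hφ s hs, hφ t ht] at hxy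
    rw [hinj s hs t ht hxy]
  · rw [image_image]
    refine Subset.antisymm ?_ ?_
    · rintro _ ⟨x, rfl⟩
      obtain ⟨s, hs, rfl⟩ := hrep x
      exact ⟨s, hs, (hφ s hs).symm⟩
    · rintro _ ⟨s, hs, rfl⟩
      exact ⟨s, hφ s hs⟩
  · have hk0 := fst_eq_fst_of_nullhomotopic hg (fun s hs => ?_) hnull
    · simp only [hg1, Tr, add_eq_left, Int.cast_eq_zero] at hk0
      exact hk hk0
    · rcases hs.2.lt_or_eq with h | rfl
      · exact hφ s ⟨hs.1, h⟩
      · rw [h01, AddCircle.coe_period, ← AddCircle.coe_zero, hφ 0 (by simp)]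

/-! ### Lattice walks -/

/-- The point of the plane with integer coordinates `a`. -/
def latticePoint (a : ℤ × ℤ) : Plane := (a.1, a.2)

theorem latticePoint_add (a b : ℤ × ℤ) :
    latticePoint (a + b) = latticePoint a + latticePoint b := by
  simp [latticePoint]

/-- The graph of the unit edges of the square lattice contained in `U`. -/
def latticeGraph (U : Set Plane) : SimpleGraph (ℤ × ℤ) where
  Adj a b := (b.1 - a.1).natAbs + (b.2 - a.2).natAbs = 1 ∧
    segment ℝ (latticePoint a) (latticePoint b) ⊆ U
  symm := ⟨fun a b h => ⟨by lia, segment_symm ℝ (latticePoint a) _ ▸ h.2⟩⟩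
  loopless := ⟨fun a h => by simp at h⟩

theorem reachable_latticeGraph_of_segment_subset {U : Set Plane} {a b : ℤ × ℤ}
    (hab : (b.1 - a.1).natAbs + (b.2 - a.2).natAbs ≤ 1)
    (hU : segment ℝ (latticePoint a) (latticePoint b) ⊆ U) : (latticeGraph U).Reachable a b := by
  rcases hab.lt_or_eq with h | h
  · rw [show a = b from Prod.ext (by lia) (by lia)]
  · exact SimpleGraph.Adj.reachable ⟨h, hU⟩

theorem natAbs_floor_sub_floor_le_one {x y : ℝ} (h : |x - y| < 1) :
    (⌊y⌋ - ⌊x⌋).natAbs ≤ 1 := by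
  rw [abs_sub_lt_iff] at h
  have hyx : ⌊y⌋ < ⌊x⌋ + 2 := Int.floor_lt.2 (by push_cast; linarith [Int.lt_floor_add_one x])
  have hxy : ⌊x⌋ < ⌊y⌋ + 2 := Int.floor_lt.2 (by push_cast; linarith [Int.lt_floor_add_one y])
  lia

theorem abs_floor_sub_lt_two {x y : ℝ} (h : |x - y| < 1) : |⌊y⌋ - x| < 2 := by
  rw [abs_sub_lt_iff] at h ⊢
  constructor <;> linarith [Int.floor_le y, Int.lt_floor_add_one y]

theorem reachable_latticeGraph_floor {U : Set Plane} {x y : Plane} (hx : Metric.ball x 2 ⊆ U)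
    (hxy : dist x y < 1) :
    (latticeGraph U).Reachable (⌊x.1⌋, ⌊x.2⌋) (⌊y.1⌋, ⌊y.2⌋) := by
  rw [Prod.dist_eq, max_lt_iff, Real.dist_eq, Real.dist_eq] at hxy
  have hself (t : ℝ) : |t - t| < 1 := by simp
  have hball {u v : ℝ} (hu : |x.1 - u| < 1) (hv : |x.2 - v| < 1) :
      latticePoint (⌊u⌋, ⌊v⌋) ∈ Metric.ball x 2 := by
    rw [Metric.mem_ball, Prod.dist_eq, max_lt_iff, Real.dist_eq, Real.dist_eq]
    exact ⟨abs_floor_sub_lt_two hu, abs_floor_sub_lt_two hv⟩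
  have hsegment {a b : ℤ × ℤ} (ha : latticePoint a ∈ Metric.ball x 2)
      (hb : latticePoint b ∈ Metric.ball x 2) :
      segment ℝ (latticePoint a) (latticePoint b) ⊆ U :=
    ((convex_ball x 2).segment_subset ha hb).trans hx
  have hmid := hball hxy.1 (hself x.2)
  refine (reachable_latticeGraph_of_segment_subset (b := (⌊y.1⌋, ⌊x.2⌋)) ?_
    (hsegment (hball (hself x.1) (hself x.2)) hmid)).trans
    (reachable_latticeGraph_of_segment_subset ?_ (hsegment hmid (hball hxy.1 hxy.2)))
  · simpa using natAbs_floor_sub_floor_le_one hxy.1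
  · simpa using natAbs_floor_sub_floor_le_one hxy.2

theorem reachable_latticeGraph_of_isPreconnected {U K : Set Plane} (hK : IsPreconnected K)
    (hU : ∀ x ∈ K, Metric.ball x 2 ⊆ U) {x y : Plane} (hx : x ∈ K) (hy : y ∈ K) :
    (latticeGraph U).Reachable (⌊x.1⌋, ⌊x.2⌋) (⌊y.1⌋, ⌊y.2⌋) := by
  refine hK.induction₂'
    (fun x y => (latticeGraph U).Reachable (⌊x.1⌋, ⌊x.2⌋) (⌊y.1⌋, ⌊y.2⌋)) (fun x hx => ?_)
    (fun _ _ _ _ _ _ => .trans) hx hy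
  filter_upwards [self_mem_nhdsWithin, nhdsWithin_le_nhds (Metric.ball_mem_nhds x one_pos)]
    with y hy hyx
  exact ⟨reachable_latticeGraph_floor (hU x hx) (Metric.mem_ball'.1 hyx),
    reachable_latticeGraph_floor (hU y hy) hyx⟩

theorem exists_reachable_latticeGraph {W : Set Plane} (hW : IsOpen W) {w : Plane} (hw : w ∈ W)
    {j : ℤ} (hj : Tr j w ∈ connectedComponentIn W w) :
    ∃ N : ℕ, 3 ≤ N ∧ ∃ a, (latticeGraph ((fun x => (N : ℝ)⁻¹ • x) ⁻¹' W)).Reachable a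
      (a + (j * N, 0)) := by
  have hC : IsPathConnected (connectedComponentIn W w) :=
    hW.connectedComponentIn.isConnected_iff_isPathConnected.1
      (isConnected_connectedComponentIn_iff.2 hw)
  obtain ⟨γ, hγ⟩ := hC.joinedIn w (mem_connectedComponentIn hw) _ hj
  obtain ⟨δ, hδ, hδW⟩ := (isCompact_range γ.continuous).exists_thickening_subset_open hW
    (range_subset_iff.2 fun t => connectedComponentIn_subset _ _ (hγ t))
  obtain ⟨n, hn⟩ := exists_nat_gt (2 / δ)
  obtain ⟨N, hnN, hN3⟩ : ∃ N : ℕ, n ≤ N ∧ 3 ≤ N := ⟨max n 3, le_max_left _ _, le_max_right _ _⟩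
  have hN0 : (0 : ℝ) < N := by positivity
  have hNδ : 2 ≤ N * δ := by
    rw [div_lt_iff₀ hδ] at hn
    nlinarith [(Nat.cast_le (α := ℝ)).2 hnN]
  have hK : IsPreconnected ((fun x : Plane => (N : ℝ) • x) '' range γ) :=
    (isPreconnected_range γ.continuous).image _ (continuous_const_smul _).continuousOn
  refine ⟨N, hN3, (⌊N * w.1⌋, ⌊N * w.2⌋), ?_⟩
  have hfloor : ((⌊N * w.1⌋, ⌊N * w.2⌋) + (j * N, 0) : ℤ × ℤ) =
      (⌊N * (Tr j w).1⌋, ⌊N * (Tr j w).2⌋) := by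
    have : (N : ℝ) * (w.1 + j) = N * w.1 + (j * N : ℤ) := by push_cast; ring
    simp only [Tr, Prod.mk_add_mk, add_zero, this, Int.floor_add_intCast]
  rw [hfloor]
  refine reachable_latticeGraph_of_isPreconnected hK ?_ (mem_image_of_mem _ ⟨0, γ.source⟩)
    (mem_image_of_mem _ ⟨1, γ.target⟩)
  rintro _ ⟨x, hx, rfl⟩ y hy
  refine hδW (Metric.mem_thickening_iff.2 ⟨x, hx, ?_⟩)
  calc dist ((N : ℝ)⁻¹ • y) x = (N : ℝ)⁻¹ * dist y ((N : ℝ) • x) := by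
        have := dist_smul₀ (N : ℝ)⁻¹ y ((N : ℝ) • x)
        rwa [inv_smul_smul₀ hN0.ne', Real.norm_of_nonneg (by positivity)] at this
    _ < (N : ℝ)⁻¹ * 2 := by gcongr; exact hy
    _ ≤ δ := by rwa [inv_mul_le_iff₀ hN0]

theorem exists_walk_getVert_ne_add_zsmul {V : Type*} [AddGroup V] {G : SimpleGraph V} {a c : V}
    {j : ℤ} (hj : j ≠ 0) (h : G.Reachable a (a + j • c)) :
    ∃ (b : V) (k : ℤ) (p : G.Walk b (b + k • c)), k ≠ 0 ∧ ∀ i l, i < l → l ≤ p.length →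
      (i ≠ 0 ∨ l ≠ p.length) → ∀ m : ℤ, p.getVert l ≠ p.getVert i + m • c := by
  classical
  have hex : ∃ n, ∃ (b : V) (k : ℤ) (p : G.Walk b (b + k • c)), k ≠ 0 ∧ p.length = n :=
    h.elim fun p => ⟨p.length, a, j, p, hj, rfl⟩
  obtain ⟨b, k, p, hk, hp⟩ := Nat.find_spec hex
  have hmin {b : V} {k : ℤ} (q : G.Walk b (b + k • c)) (hk : k ≠ 0) : p.length ≤ q.length :=
    hp ▸ Nat.find_min' hex ⟨b, k, q, hk, rfl⟩
  have hpath : p.IsPath := by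
    obtain ⟨q, hq⟩ := p.reachable.exists_walk_length_eq_dist
    exact p.isPath_of_length_eq_dist (((hmin q hk).trans_eq hq).antisymm (SimpleGraph.dist_le p))
  refine ⟨b, k, p, hk, fun i l hil hl hne m hm => ?_⟩
  rcases eq_or_ne m 0 with rfl | hm0
  · exact hil.ne' (hpath.getVert_injOn hl (hil.le.trans hl) (by simpa using hm))
  · have hend : (p.drop i).getVert (l - i) = p.getVert i + m • c := by
      rw [SimpleGraph.Walk.drop_getVert, Nat.add_sub_cancel' hil.le, hm]
    have hlength := hmin (((p.drop i).take (l - i)).copy rfl hend) hm0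
    rw [SimpleGraph.Walk.length_copy, SimpleGraph.Walk.take_length] at hlength
    lia

theorem floor_ceil_lineMap {m n : ℤ} (hmn : (n - m).natAbs ≤ 1) {s : ℝ} (hs : s ∈ Ioo (0 : ℝ) 1) :
    ⌊AffineMap.lineMap (m : ℝ) (n : ℝ) s⌋ = min m n ∧
      ⌈AffineMap.lineMap (m : ℝ) (n : ℝ) s⌉ = max m n := by
  obtain ⟨hs0, hs1⟩ := hs
  rw [AffineMap.lineMap_apply_ring', Int.floor_eq_iff, Int.ceil_eq_iff]
  obtain rfl | rfl | rfl : n = m ∨ n = m + 1 ∨ n = m - 1 := by lia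
  · simp
  · simp only [le_add_iff_nonneg_right, zero_le_one, inf_of_le_left, sup_of_le_right]
    push_cast
    refine ⟨⟨?_, ?_⟩, ?_, ?_⟩ <;> linarith
  · simp only [sub_le_self_iff, zero_le_one, inf_of_le_right, sup_of_le_left]
    push_cast
    refine ⟨⟨?_, ?_⟩, ?_, ?_⟩ <;> linarith

theorem eq_floor_ceil_of_lineMap_eq {a b : ℤ × ℤ}
    (hab : (b.1 - a.1).natAbs + (b.2 - a.2).natAbs = 1) {s : ℝ} (hs : s ∈ Ioo (0 : ℝ) 1) {p : Plane}
    (hp : AffineMap.lineMap (latticePoint a) (latticePoint b) s = p) :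
    a = (⌊p.1⌋, ⌊p.2⌋) ∧ b = (⌈p.1⌉, ⌈p.2⌉) ∨ a = (⌈p.1⌉, ⌈p.2⌉) ∧ b = (⌊p.1⌋, ⌊p.2⌋) := by
  subst hp
  obtain ⟨hfloor1, hceil1⟩ := floor_ceil_lineMap (m := a.1) (n := b.1) (by lia) hs
  obtain ⟨hfloor2, hceil2⟩ := floor_ceil_lineMap (m := a.2) (n := b.2) (by lia) hs
  simp only [latticePoint, AffineMap.fst_lineMap, AffineMap.snd_lineMap, hfloor1, hfloor2, hceil1,
    hceil2, Prod.ext_iff]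
  lia

theorem latticePoint_injective : Function.Injective latticePoint := fun a b h => by
  simpa [latticePoint, Prod.ext_iff] using h

theorem lineMap_ne_latticePoint {a b c : ℤ × ℤ}
    (hab : (b.1 - a.1).natAbs + (b.2 - a.2).natAbs = 1) {s : ℝ} (hs : s ∈ Ioo (0 : ℝ) 1) :
    AffineMap.lineMap (latticePoint a) (latticePoint b) s ≠ latticePoint c := by
  intro h
  have := eq_floor_ceil_of_lineMap_eq hab hs h
  simp only [latticePoint, Int.floor_intCast, Int.ceil_intCast] at this
  lia

theorem eq_or_opposite_of_lineMap_eq {a b a' b' : ℤ × ℤ}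
    (hab : (b.1 - a.1).natAbs + (b.2 - a.2).natAbs = 1)
    (hab' : (b'.1 - a'.1).natAbs + (b'.2 - a'.2).natAbs = 1) {s t : ℝ}
    (hs : s ∈ Ico (0 : ℝ) 1) (ht : t ∈ Ico (0 : ℝ) 1)
    (h : AffineMap.lineMap (latticePoint a) (latticePoint b) s =
      AffineMap.lineMap (latticePoint a') (latticePoint b') t) :
    a = a' ∧ s = t ∨ a = b' ∧ b = a' := by
  rcases hs.1.eq_or_lt with rfl | hs0
  · rcases ht.1.eq_or_lt with rfl | ht0
    · simp only [AffineMap.lineMap_apply_zero] at h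
      exact .inl ⟨latticePoint_injective h, rfl⟩
    · rw [AffineMap.lineMap_apply_zero] at h
      exact (lineMap_ne_latticePoint hab' ⟨ht0, ht.2⟩ h.symm).elim
  rcases ht.1.eq_or_lt with rfl | ht0
  · rw [AffineMap.lineMap_apply_zero] at h
    exact (lineMap_ne_latticePoint hab ⟨hs0, hs.2⟩ h).elim
  have horient : a = a' ∧ b = b' ∨ a = b' ∧ b = a' := by
    have := eq_floor_ceil_of_lineMap_eq hab ⟨hs0, hs.2⟩ h
    have := eq_floor_ceil_of_lineMap_eq hab' ⟨ht0, ht.2⟩ rfl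
    lia
  refine horient.imp_left ?_
  rintro ⟨rfl, rfl⟩
  have hne : latticePoint a ≠ latticePoint b :=
    latticePoint_injective.ne (by rintro rfl; simp at hab)
  exact ⟨rfl, AffineMap.lineMap_injective ℝ hne h⟩

theorem eq_of_lineMap_eq_of_getVert_ne {v : ℕ → ℤ × ℤ} {L : ℕ} (hL : 3 ≤ L) {c : ℤ × ℤ}
    (hstep : ∀ i < L, ((v (i + 1)).1 - (v i).1).natAbs + ((v (i + 1)).2 - (v i).2).natAbs = 1)
    (hne : ∀ i l, i < l → l ≤ L → (i ≠ 0 ∨ l ≠ L) → ∀ m : ℤ, v l ≠ v i + m • c)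
    {i l : ℕ} (hi : i < L) (hl : l < L) {s t : ℝ} (hs : s ∈ Ico (0 : ℝ) 1)
    (ht : t ∈ Ico (0 : ℝ) 1) {m : ℤ}
    (h : AffineMap.lineMap (latticePoint (v i)) (latticePoint (v (i + 1))) s =
      AffineMap.lineMap (latticePoint (v l + m • c)) (latticePoint (v (l + 1) + m • c)) t) :
    i = l ∧ s = t := by
  have hne' {i l : ℕ} (hil : i < l) (hl : l ≤ L) (h0 : i ≠ 0 ∨ l ≠ L) (m : ℤ) :
      v i ≠ v l + m • c := fun h => hne i l hil hl h0 (-m) (by rw [h]; simp)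
  rcases eq_or_opposite_of_lineMap_eq (hstep i hi) (by simpa using hstep l hl) hs ht h with
    ⟨hvi, hst⟩ | ⟨hvi, hvi'⟩
  · refine ⟨?_, hst⟩
    by_contra hil
    rcases lt_or_gt_of_ne hil with hil | hil
    · exact hne' hil hl.le (by lia) m hvi
    · exact hne l i hil hi.le (by lia) m hvi
  · exfalso
    rcases lt_trichotomy i l with hil | rfl | hil
    · by_cases h0 : i = 0 ∧ l + 1 = L
      · exact hne' (by lia) hl.le (by lia) m hvi'
      · exact hne' (by lia) hl (by lia) m hvi
    · exact hne i (i + 1) (by lia) hi (by lia) m hvi'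
    · by_cases h0 : l = 0 ∧ i + 1 = L
      · exact hne (l + 1) i (by lia) hi.le (by lia) m hvi
      · exact hne l (i + 1) (by lia) hi (by lia) m hvi'

theorem natAbs_fst_sub_fst_le_length {U : Set Plane} {a b : ℤ × ℤ} (p : (latticeGraph U).Walk a b) :
    (b.1 - a.1).natAbs ≤ p.length := by
  induction p with
  | nil => simp
  | cons h _ ih =>
    have := h.1
    rw [SimpleGraph.Walk.length_cons]
    lia

/-- The polygonal path through `u 0, …, u L`, parametrised by `[0, L]` with integer times at the
vertices, and constant outside `[0, L]`. -/
def polygonalPath {E : Type*} [AddCommGroup E] [Module ℝ E] (u : ℕ → E) (L : ℕ) (s : ℝ) : E :=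
  u 0 + ∑ m ∈ Finset.range L, (max 0 (min 1 (s - m))) • (u (m + 1) - u m)

theorem continuous_polygonalPath {E : Type*} [AddCommGroup E] [Module ℝ E] [TopologicalSpace E]
    [ContinuousAdd E] [ContinuousSMul ℝ E] (u : ℕ → E) (L : ℕ) :
    Continuous (polygonalPath u L) := by
  unfold polygonalPath
  fun_prop

theorem polygonalPath_add {E : Type*} [AddCommGroup E] [Module ℝ E] (u : ℕ → E) {L i : ℕ}
    (hi : i < L) {t : ℝ} (ht : t ∈ Icc (0 : ℝ) 1) :
    polygonalPath u L (i + t) = AffineMap.lineMap (u i) (u (i + 1)) t := by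
  unfold polygonalPath
  rw [← Finset.sum_subset (Finset.range_subset_range.2 hi), Finset.sum_range_succ,
    Finset.sum_congr rfl (g := fun m => u (m + 1) - u m), Finset.sum_range_sub]
  · rw [add_sub_cancel_left, min_eq_right ht.2, max_eq_right ht.1, AffineMap.lineMap_apply_module']
    abel
  · intro m hm
    have : (m : ℝ) + 1 ≤ i := by exact_mod_cast Finset.mem_range.1 hm
    rw [min_eq_left (by linarith [ht.1]), max_eq_right zero_le_one, one_smul]
  · intro m _ hm
    have : (i : ℝ) + 1 ≤ m := by
      simp only [Finset.mem_range] at hm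
      exact_mod_cast Nat.le_of_not_lt hm
    rw [max_eq_left ((min_le_right _ _).trans (by linarith [ht.2])), zero_smul]

theorem polygonalPath_zero {E : Type*} [AddCommGroup E] [Module ℝ E] (u : ℕ → E) (L : ℕ) :
    polygonalPath u L 0 = u 0 := by
  rcases L.eq_zero_or_pos with rfl | hL
  · simp [polygonalPath]
  · simpa using polygonalPath_add u hL (left_mem_Icc.2 zero_le_one)

theorem polygonalPath_length {E : Type*} [AddCommGroup E] [Module ℝ E] (u : ℕ → E) (L : ℕ) :
    polygonalPath u L L = u L := by
  cases L with
  | zero => simp [polygonalPath]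
  | succ L => simpa using polygonalPath_add u L.lt_succ_self (right_mem_Icc.2 zero_le_one)

theorem exists_eq_natCast_add_mem_Ico {L : ℕ} {s : ℝ} (hs : s ∈ Ico (0 : ℝ) 1) (hL : 0 < L) :
    ∃ i < L, ∃ t ∈ Ico (0 : ℝ) 1, L * s = i + t := by
  have hLs : 0 ≤ L * s := mul_nonneg L.cast_nonneg hs.1
  refine ⟨⌊L * s⌋₊, ?_, Int.fract (L * s), ⟨Int.fract_nonneg _, Int.fract_lt_one _⟩, ?_⟩
  · rw [Nat.floor_lt hLs]
    exact mul_lt_of_lt_one_right (by positivity) hs.2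
  · rw [natCast_floor_eq_intCast_floor hLs, Int.floor_add_fract]

theorem Tr_inv_smul {N : ℤ} (hN : (N : ℝ) ≠ 0) (m : ℤ) (p : Plane) :
    Tr m ((N : ℝ)⁻¹ • p) = (N : ℝ)⁻¹ • (p + latticePoint (m • (N, 0))) := by
  simp [Tr, latticePoint, Prod.ext_iff, mul_left_comm _ (m : ℝ), hN]

theorem exists_isEssentialCircle_of_walk {W : Set Plane} {N : ℕ} (hN : 3 ≤ N) {b : ℤ × ℤ} {k : ℤ}
    (hk : k ≠ 0) (p : (latticeGraph ((fun x => (N : ℝ)⁻¹ • x) ⁻¹' W)).Walk b (b + k • ((N : ℤ), 0)))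
    (hne : ∀ i l, i < l → l ≤ p.length → (i ≠ 0 ∨ l ≠ p.length) →
      ∀ m : ℤ, p.getVert l ≠ p.getVert i + m • ((N : ℤ), 0)) :
    ∃ c, IsEssentialCircle c ∧ c ⊆ prj '' W := by
  have hN0 : (N : ℝ) ≠ 0 := by positivity
  have hL : 3 ≤ p.length := by
    have hlength := natAbs_fst_sub_fst_le_length p
    simp only [Prod.fst_add, Prod.smul_fst, add_sub_cancel_left, smul_eq_mul, Int.natAbs_mul,
      Int.natAbs_natCast] at hlength
    exact hN.trans ((Nat.le_mul_of_pos_left N (Int.natAbs_pos.2 hk)).trans hlength)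
  set path := polygonalPath (latticePoint ∘ p.getVert) p.length
  have hedge {i : ℕ} (hi : i < p.length) {t : ℝ} (ht : t ∈ Icc (0 : ℝ) 1) : path (i + t) =
      AffineMap.lineMap (latticePoint (p.getVert i)) (latticePoint (p.getVert (i + 1))) t :=
    polygonalPath_add _ hi ht
  refine ⟨_, isEssentialCircle_image_of_path (k := k)
    (g := fun s => (N : ℝ)⁻¹ • path (p.length * s)) ?_ hk ?_ ?_, image_mono ?_⟩
  · have := continuous_polygonalPath (latticePoint ∘ p.getVert) p.length
    fun_prop
  · have h0 : path 0 = latticePoint b := by simp [path, polygonalPath_zero]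
    have h1 : path p.length = latticePoint (b + k • ((N : ℤ), 0)) := by
      simp [path, polygonalPath_length]
    simp only [mul_zero, mul_one, h0, h1, latticePoint_add]
    exact (Tr_inv_smul (N := N) hN0 k _).symm
  · intro s hs t ht hst
    obtain ⟨m, hm⟩ := prj_eq_prj_iff.1 hst
    obtain ⟨i, hi, s', hs', hs⟩ := exists_eq_natCast_add_mem_Ico hs (hL.trans_lt' three_pos)
    obtain ⟨l, hl, t', ht', ht⟩ := exists_eq_natCast_add_mem_Ico ht (hL.trans_lt' three_pos)
    have hpath : path (i + s') = path (l + t') + latticePoint (m • ((N : ℤ), 0)) := by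
      rw [← hs, ← ht]
      exact smul_right_injective _ (inv_ne_zero hN0) (hm.trans (Tr_inv_smul (N := N) hN0 m _))
    have hadd (x y v : Plane) : AffineMap.lineMap x y t' + v =
        AffineMap.lineMap (x + v) (y + v) t' := by
      simp [AffineMap.lineMap_apply_module', add_assoc]
    rw [hedge hi (Ico_subset_Icc_self hs'), hedge hl (Ico_subset_Icc_self ht'), hadd,
      ← latticePoint_add, ← latticePoint_add] at hpath
    obtain ⟨rfl, rfl⟩ := eq_of_lineMap_eq_of_getVert_ne hL
      (fun i hi => (p.adj_getVert_succ hi).1) hne hi hl hs' ht' hpath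
    exact mul_left_cancel₀ (by positivity) (hs.trans ht.symm)
  · rintro _ ⟨s, hs, rfl⟩
    obtain ⟨i, hi, t, ht, hs⟩ := exists_eq_natCast_add_mem_Ico hs (hL.trans_lt' three_pos)
    simp only [hs, hedge hi (Ico_subset_Icc_self ht)]
    exact (p.adj_getVert_succ hi).2 (lineMap_mem_segment ℝ _ _ (Ico_subset_Icc_self ht))

theorem exists_isEssentialCircle_subset {W : Set Plane} (hW : IsOpen W) {w : Plane} (hw : w ∈ W)
    {j : ℤ} (hj0 : j ≠ 0) (hj : Tr j w ∈ connectedComponentIn W w) :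
    ∃ c, IsEssentialCircle c ∧ c ⊆ prj '' W := by
  obtain ⟨N, hN, a, ha⟩ := exists_reachable_latticeGraph hW hw hj
  obtain ⟨b, k, p, hk, hne⟩ := exists_walk_getVert_ne_add_zsmul (c := ((N : ℤ), (0 : ℤ))) hj0
    (by simpa using ha)
  exact exists_isEssentialCircle_of_walk hN hk p hne

theorem IsAttractor.mem_of_mem {f : Ann ≃ₜ Ann} {F : Plane ≃ₜ Plane}
    (hint : IntersectionProperty f) (hlift : IsLift f F) (hF : IsAperiodicLift F) {V : Set Plane}
    (hV : IsAttractor F V) {v v' : Plane} [NeBot (returns F v)] [NeBot (returns F v')]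
    (hv : v ∈ V) : v' ∈ V := by
  by_contra hv'
  have hcomm := hF.commutesWithDeck
  have hVint := hV.deckInvariant.interior
  have hclosed : IsClosed (F '' V) := F.isClosedMap _ hV.isClosed
  have hvint : v ∈ interior V := hV.mapsTo.image_subset (hV.mem_image hcomm hv)
  obtain ⟨k, hk, hkv⟩ := hF.exists_Tr_mem_of_mapsTo isOpen_interior hVint
    (hV.mapsTo.mono_left interior_subset) hvint
  obtain ⟨l, hl, hlv⟩ := hF.exists_Tr_mem_of_mapsTo_symm hV.isClosed.isOpen_compl
    hV.deckInvariant.compl (fun x hx hx' => hx (interior_subset (by simpa using hV.mapsTo hx'))) hv'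
  have hkFv := mem_image_of_mem F hkv
  rw [hcomm k v] at hkFv
  obtain ⟨w, hw, j, hj, hjw⟩ := exists_Tr_mem_connectedComponentIn_compl hclosed
    isOpen_interior.isClosed_compl (hV.deckInvariant.image hcomm) hVint.compl
    (disjoint_compl_right_iff_subset.2 hV.mapsTo.image_subset) hk hl
    (isPreconnected_connectedComponentIn.image _ F.continuous.continuousOn)
    (image_mono ((connectedComponentIn_subset _ _).trans interior_subset))
    (mem_image_of_mem F (mem_connectedComponentIn hvint)) hkFv isPreconnected_connectedComponentIn
    ((connectedComponentIn_subset _ _).trans (compl_subset_compl.2 interior_subset))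
    (mem_connectedComponentIn hv') hlv
  obtain ⟨c, hc, hcW⟩ := exists_isEssentialCircle_subset
    (hclosed.union isOpen_interior.isClosed_compl).isOpen_compl hw hj hjw
  obtain ⟨z, hz, z', hz', hzz'⟩ := hint c hc
  obtain ⟨x, hx, rfl⟩ := hcW hz
  obtain ⟨y, hy, rfl⟩ := hcW hz'
  rw [← hlift] at hzz'
  obtain ⟨m, rfl⟩ := prj_eq_prj_iff.1 hzz'.symm
  have hyV : y ∈ V := interior_subset (not_not.1 fun h => hy (.inr h))
  exact hx (.inl (hV.deckInvariant.image hcomm m (mem_image_of_mem F hyV)))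

/-! ### Lifts of isotopies -/

theorem exists_eq_Tr_of_prj_eq {A : Type*} [TopologicalSpace A] [ConnectedSpace A] {g h : A → Plane}
    (hg : Continuous g) (hh : Continuous h) (hgh : ∀ x, prj (g x) = prj (h x)) :
    ∃ c : ℤ, ∀ x, g x = Tr c (h x) := by
  obtain ⟨a⟩ : Nonempty A := inferInstance
  obtain ⟨c, hc⟩ := prj_eq_prj_iff.1 (hgh a)
  have hfst : (fun x => (g x).1) = fun x => (Tr c (h x)).1 := by
    refine (AddCircle.isCoveringMap_coe (1 : ℝ)).eq_of_comp_eq (by fun_prop)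
      (continuous_fst.comp ((continuous_Tr c).comp hh)) (funext fun x => ?_) a (by rw [hc])
    exact congrArg Prod.fst ((hgh x).trans (prj_Tr c _).symm)
  exact ⟨c, fun x => Prod.ext (congrFun hfst x) (congrArg (fun z : Ann => z.2) (hgh x))⟩

theorem eq_of_prj_eq {A : Type*} [TopologicalSpace A] [ConnectedSpace A] {g h : A → Plane}
    (hg : Continuous g) (hh : Continuous h) (hgh : ∀ x, prj (g x) = prj (h x)) {a : A}
    (ha : g a = h a) : g = h := by
  obtain ⟨c, hc⟩ := exists_eq_Tr_of_prj_eq hg hh hgh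
  obtain rfl : c = 0 := by simpa [Tr, Prod.ext_iff, ha] using (hc a).symm
  exact funext fun x => by rw [hc, Tr_zero]

theorem exists_continuous_prj_eq {A : Type*} [TopologicalSpace A] [SimplyConnectedSpace A]
    [LocallyPathConnectedSpace A] {θ : A → Ann} (hθ : Continuous θ) {a : A} {p : Plane}
    (ha : prj p = θ a) : ∃ g : A → Plane, Continuous g ∧ g a = p ∧ ∀ x, prj (g x) = θ x := by
  obtain ⟨X, ⟨hXa, hX⟩, -⟩ :=
    (AddCircle.isCoveringMap_coe (1 : ℝ)).existsUnique_continuousMap_lifts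
      (⟨fun x => (θ x).1, by fun_prop⟩ : C(A, AddCircle (1 : ℝ))) a p.1 (congrArg Prod.fst ha)
  exact ⟨fun x => (X x, (θ x).2), by fun_prop,
    Prod.ext hXa (congrArg Prod.snd ha).symm, fun x => Prod.ext (congrFun hX x) rfl⟩

theorem IsotopicToId.exists_lift {f : Ann ≃ₜ Ann} (hf : IsotopicToId f) :
    ∃ K : ℝ → Plane → Plane, Continuous (fun q : ℝ × Plane => K q.1 q.2) ∧
      (∀ t, Function.Injective (K t)) ∧ (∀ t, CommutesWithDeck (K t)) ∧ (∀ p, K 0 p = p) ∧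
      ∀ p, prj (K 1 p) = f (prj p) := by
  obtain ⟨H, hH, hhomeo, hH0, hH1⟩ := hf
  have hθ : Continuous fun q : ℝ × Plane => H q.1 (prj q.2) :=
    hH.comp (continuous_fst.prodMk (continuous_prj.comp continuous_snd))
  obtain ⟨K, hK, hK00, hKH⟩ := exists_continuous_prj_eq hθ (a := (0, 0)) (p := 0) (hH0 _).symm
  have hK0 : (fun p => K (0, p)) = id :=
    eq_of_prj_eq (by fun_prop) continuous_id (fun p => by rw [hKH, hH0, id]) hK00
  have hcomm (t : ℝ) : CommutesWithDeck fun p => K (t, p) := by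
    intro k p
    refine congrFun (eq_of_prj_eq (a := (0, 0)) (g := fun q : ℝ × Plane => K (q.1, Tr k q.2))
      (h := fun q => Tr k (K q)) ?_ ((continuous_Tr k).comp hK) (fun q => ?_) ?_) (t, p)
    · exact hK.comp (continuous_fst.prodMk ((continuous_Tr k).comp continuous_snd))
    · rw [hKH, prj_Tr, prj_Tr, hKH]
    · rw [hK00]
      exact congrFun hK0 _
  refine ⟨fun t p => K (t, p), hK, fun t p q hpq => ?_, hcomm, congrFun hK0, fun p => ?_⟩
  · obtain ⟨h, hh⟩ := hhomeo t
    have hprj := congrArg prj hpq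
    simp only [hKH, hh] at hprj
    obtain ⟨m, rfl⟩ := prj_eq_prj_iff.1 (h.injective hprj)
    obtain rfl : m = 0 := by simpa [Tr, Prod.ext_iff] using (hcomm t m q).symm.trans hpq
    exact Tr_zero q
  · rw [hKH, hH1]

theorem IsLift.exists_eq_Tr {f : Ann ≃ₜ Ann} {F : Plane ≃ₜ Plane} (hF : IsLift f F)
    {K : Plane → Plane} (hK : Continuous K) (hKf : ∀ p, prj (K p) = f (prj p)) :
    ∃ c, ∀ p, F p = Tr c (K p) :=
  exists_eq_Tr_of_prj_eq F.continuous hK fun p => by rw [hF, hKf]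

theorem IsLift.commutesWithDeck {f : Ann ≃ₜ Ann} {F : Plane ≃ₜ Plane} (hlift : IsLift f F)
    (hiso : IsotopicToId f) : CommutesWithDeck F := by
  obtain ⟨K, hK, -, hcomm, -, hK1⟩ := hiso.exists_lift
  obtain ⟨c, hc⟩ := hlift.exists_eq_Tr (K := K 1) (hK.comp (.prodMk_right 1)) hK1
  intro k p
  simp only [hc, (hcomm 1 k p : K 1 _ = _), Tr_Tr, add_comm]

theorem injIsotopicToId_deckHomeo (k : ℤ) : InjIsotopicToId (deckHomeo k) :=
  ⟨fun t p => (p.1 + t * k, p.2), by fun_prop, fun t p q h => by simpa [Prod.ext_iff] using h,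
    by simp, fun p => by simp [Tr]⟩

theorem IsLift.injIsotopicToId {f : Ann ≃ₜ Ann} {F : Plane ≃ₜ Plane} (hlift : IsLift f F)
    (hiso : IsotopicToId f) : InjIsotopicToId F := by
  obtain ⟨K, hK, hinj, -, hK0, hK1⟩ := hiso.exists_lift
  obtain ⟨c, hc⟩ := hlift.exists_eq_Tr (K := K 1) (hK.comp (.prodMk_right 1)) hK1
  have hFc : InjIsotopicToId (F.trans (deckHomeo (-c))) :=
    ⟨K, hK, hinj, hK0, fun p => by simp [hc]⟩
  convert hFc.trans (injIsotopicToId_deckHomeo c)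
  ext p <;> simp

theorem IsLift.prj_iterate {f : Ann ≃ₜ Ann} {F : Plane ≃ₜ Plane} (hF : IsLift f F) (n : ℕ)
    (p : Plane) : prj (F^[n] p) = f^[n] (prj p) :=
  (Function.Semiconj.iterate_right hF n p)

theorem IsLift.isAperiodicLift {f : Ann ≃ₜ Ann} {F : Plane ≃ₜ Plane} (hlift : IsLift f F)
    (hiso : IsotopicToId f) (hper : ¬ ∃ z : Ann, ∃ n : ℕ, 0 < n ∧ f^[n] z = z) :
    IsAperiodicLift F where
  commutesWithDeck := hlift.commutesWithDeck hiso
  injIsotopicToId q p := ((hlift.injIsotopicToId hiso).pow q).trans (injIsotopicToId_deckHomeo (-p))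
  shiftedIterate_ne {q} hq p x hx := by
    refine hper ⟨prj x, q, hq, ?_⟩
    rw [← hlift.prj_iterate, ← prj_Tr (-p), ← shiftedIterate_apply, hx]

/-! ### Combining returns -/

theorem frequently_returns_add {F : Plane ≃ₜ Plane} (hF : CommutesWithDeck F) {z : Plane}
    {P Q R : ℕ × ℤ → Prop} (hP : ∃ᶠ r in returns F z, P r) (hQ : ∃ᶠ r in returns F z, Q r)
    (hR : ∀ r r', P r → Q r' → R (r + r')) : ∃ᶠ r in returns F z, R r := by
  simp only [returns, frequently_inf_principal, frequently_comap, mem_ofPred_eq] at hP hQ ⊢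
  refine frequently_nhds_iff.2 fun U hzU hU => ?_
  obtain ⟨_, hxU, r, rfl, hr, hrP⟩ := frequently_nhds_iff.1 hP U hzU hU
  have hcont : Continuous fun w => Tr (-r.2) (F^[r.1] w) :=
    (continuous_Tr _).comp (F.continuous.iterate _)
  obtain ⟨_, hyU, r', rfl, -, hrQ⟩ := frequently_nhds_iff.1 hQ _ hxU (hU.preimage hcont)
  refine ⟨_, hyU, r + r', ?_, le_add_right hr, hR r r' hrP hrQ⟩
  beta_reduce
  rw [(hF.iterate r.1 _).eq, Tr_Tr, ← Function.iterate_add_apply, Prod.fst_add, Prod.snd_add,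
    neg_add]

theorem frequently_returns_dvd {F : Plane ≃ₜ Plane} (hF : CommutesWithDeck F) {z : Plane}
    {P : ℕ × ℤ → Prop} (hP : ∃ᶠ r in returns F z, P r) (hadd : ∀ r r', P r → P r' → P (r + r'))
    {N : ℕ} (hN : 1 ≤ N) : ∃ᶠ r in returns F z, P r ∧ N ∣ r.1 := by
  have : NeZero N := ⟨by lia⟩
  obtain ⟨a, ha⟩ : ∃ a : ZMod N, ∃ᶠ r in returns F z, P r ∧ (r.1 : ZMod N) = a := by
    by_contra! h
    obtain ⟨r, hr, hPr⟩ := ((eventually_all.2 h).and_frequently hP).exists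
    exact hr _ hPr rfl
  have hmul : ∀ n : ℕ, 1 ≤ n → ∃ᶠ r in returns F z, P r ∧ (r.1 : ZMod N) = n * a := by
    refine Nat.le_induction (by simpa using ha) fun n _ ih => ?_
    refine frequently_returns_add hF ih ha fun r r' hr hr' => ⟨hadd _ _ hr.1 hr'.1, ?_⟩
    rw [Prod.fst_add, Nat.cast_add, hr.2, hr'.2, Nat.cast_succ, add_one_mul]
  refine (hmul N hN).mono fun r hr => ⟨hr.1, ?_⟩
  rw [← ZMod.natCast_eq_zero_iff, hr.2, ZMod.natCast_self, zero_mul]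

theorem tendsto_returns_shiftedIterate {F : Plane ≃ₜ Plane} (hF : CommutesWithDeck F) {q : ℕ}
    (hq : 1 ≤ q) (p : ℤ) (z : Plane) :
    Tendsto (fun r : ℕ × ℤ => (q * r.1, r.2 + p * r.1)) (returns (shiftedIterate F q p) z)
      (returns F z) := by
  refine tendsto_inf.2 ⟨tendsto_comap_iff.2 ?_, tendsto_principal.2 ?_⟩
  · refine (tendsto_returns (shiftedIterate F q p) z).congr fun r => ?_
    simp [shiftedIterate_iterate hF, mul_comm, add_comm]
  · filter_upwards [eventually_one_le_returns (shiftedIterate F q p) z] with r hr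
    exact Nat.mul_pos hq hr

theorem frequently_returns_shiftedIterate {F : Plane ≃ₜ Plane} (hF : CommutesWithDeck F) {q : ℕ}
    (hq : 1 ≤ q) (p : ℤ) {z : Plane} {P : ℕ × ℤ → Prop} (hP : ∃ᶠ r in returns F z, P r)
    (hadd : ∀ r r', P r → P r' → P (r + r')) :
    ∃ᶠ r in returns (shiftedIterate F q p) z, P (q * r.1, r.2 + p * r.1) := by
  have hdvd := frequently_returns_dvd hF hP hadd hq
  simp only [returns, frequently_inf_principal, frequently_comap, mem_ofPred_eq] at hdvd ⊢
  refine hdvd.mono ?_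
  rintro _ ⟨⟨_, k⟩, rfl, hr, hrP, m, rfl⟩
  refine ⟨(m, k - p * m), ?_, Nat.pos_of_mul_pos_left hr, ?_⟩
  · simp [shiftedIterate_iterate hF, mul_comm, ← sub_eq_add_neg]
  · simpa using hrP

theorem neBot_returns_shiftedIterate {F : Plane ≃ₜ Plane} (hF : CommutesWithDeck F) {q : ℕ}
    (hq : 1 ≤ q) (p : ℤ) (z : Plane) [hz : NeBot (returns F z)] :
    NeBot (returns (shiftedIterate F q p) z) :=
  frequently_true_iff_neBot _ |>.1 <|
    frequently_returns_shiftedIterate hF hq p (frequently_true_iff_neBot _ |>.2 hz) (by simp)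

theorem shiftedIterate_shiftedIterate {F : Plane ≃ₜ Plane} (hF : CommutesWithDeck F) (q : ℕ)
    (p : ℤ) (a : ℕ) (b : ℤ) :
    shiftedIterate (shiftedIterate F q p) a b = shiftedIterate F (q * a) (a * p + b) := by
  ext1 x
  rw [shiftedIterate_apply, shiftedIterate_iterate hF]
  simp [add_comm]

protected theorem IsAperiodicLift.shiftedIterate {F : Plane ≃ₜ Plane} (hF : IsAperiodicLift F)
    {q : ℕ} (hq : 1 ≤ q) (p : ℤ) : IsAperiodicLift (shiftedIterate F q p) where
  commutesWithDeck := hF.commutesWithDeck.shiftedIterate q p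
  injIsotopicToId a b := by
    rw [shiftedIterate_shiftedIterate hF.commutesWithDeck]
    exact hF.injIsotopicToId _ _
  shiftedIterate_ne ha b x := by
    rw [shiftedIterate_shiftedIterate hF.commutesWithDeck]
    exact hF.shiftedIterate_ne (Nat.mul_pos hq ha) _ _

/-! ### Displacement of returns -/

theorem isFree_Tr_ball {k : ℤ} (hk : k ≠ 0) (z : Plane) {ε : ℝ} (hε : ε ≤ 1 / 2) :
    IsFree (Tr k) (Metric.ball z ε) := by
  intro x hx hx'
  have hfst : |(k : ℝ)| ≤ dist (Tr k x) x := by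
    simp [Tr, Prod.dist_eq]
  have hk1 : (1 : ℝ) ≤ |(k : ℝ)| := by exact_mod_cast Int.one_le_abs hk
  linarith [dist_triangle_right (Tr k x) x z, Metric.mem_ball.1 hx, Metric.mem_ball.1 hx']

theorem IsAperiodicLift.exists_isFree_ball_shiftedIterate {F : Plane ≃ₜ Plane}
    (hF : IsAperiodicLift F) {q : ℕ} (hq : 1 ≤ q) (z : Plane) :
    ∃ ε > 0, ε ≤ 1 / 2 ∧ ∀ p, IsFree (shiftedIterate F q p) (Metric.ball z ε) := by
  have hne : prj (F^[q] z) ≠ prj z := fun h => by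
    obtain ⟨p, hp⟩ := prj_eq_prj_iff.1 h
    exact hF.shiftedIterate_ne hq p z (by simp [hp])
  have hopen : IsOpen {x : Plane × Plane | prj (F^[q] x.1) ≠ prj x.2} :=
    isOpen_ne_fun (continuous_prj.comp ((F.continuous.iterate q).comp continuous_fst))
      (continuous_prj.comp continuous_snd)
  obtain ⟨ε, hε, hball⟩ := Metric.mem_nhds_iff.1 (hopen.mem_nhds (x := (z, z)) hne)
  refine ⟨min ε (1 / 2), by positivity, min_le_right _ _, fun p x hx hx' => ?_⟩
  have hmem : (x, shiftedIterate F q p x) ∈ Metric.ball (z, z) ε := by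
    rw [← ball_prod_same]
    exact ⟨Metric.ball_subset_ball (min_le_left _ _) hx,
      Metric.ball_subset_ball (min_le_left _ _) hx'⟩
  exact hball hmem (by rw [shiftedIterate_apply, prj_Tr])

theorem IsAperiodicLift.mul_pos_of_returns {F : Plane ≃ₜ Plane} (hF : IsAperiodicLift F)
    {q : ℕ} (hq : 1 ≤ q) {p : ℤ} {D : Set Plane} (hD : Convex ℝ D)
    (hDT : ∀ j : ℤ, j ≠ 0 → IsFree (Tr j) D) (hDF : IsFree (shiftedIterate F q p) D) {z : Plane}
    (hz : z ∈ D) {m m' : ℕ} (hm : 1 ≤ m) (hm' : 1 ≤ m') {k k' : ℤ}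
    (hk : Tr (-k) (F^[q * m] z) ∈ D) (hk' : Tr (-k') (F^[q * m'] z) ∈ D) :
    0 < (k - p * m) * (k' - p * m') := by
  have hreturn (n : ℕ) (l : ℤ) :
      Tr (-(l - p * n)) ((shiftedIterate F q p)^[n] z) = Tr (-l) (F^[q * n] z) := by
    simp [shiftedIterate_iterate hF.commutesWithDeck, mul_comm, ← sub_eq_add_neg]
  have hiso := hF.injIsotopicToId q p
  have hfix := hF.shiftedIterate_ne hq p
  have hcomm := hF.commutesWithDeck.shiftedIterate q p
  rw [← hreturn] at hk hk'
  by_contra! hnonpos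
  obtain ⟨h, h'⟩ | ⟨h, h'⟩ := mul_nonpos_iff.1 hnonpos
  · exact (hiso.neg_of_return_of_return hfix hcomm hD hDT hDF hz hz hm hm' hk hk' h').not_ge h
  · exact (hiso.neg_of_return_of_return hfix hcomm hD hDT hDF hz hz hm' hm hk' hk h).not_ge h'

theorem IsAperiodicLift.exists_abs_lt_mul {F : Plane ≃ₜ Plane} (hF : IsAperiodicLift F)
    (z : Plane) [NeBot (returns F z)] :
    ∃ C : ℤ, ∀ᶠ r in returns F z, |r.2| < C * r.1 := by
  obtain ⟨ε, hε, hε2, hfree⟩ := hF.exists_isFree_ball_shiftedIterate le_rfl z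
  have hev := (eventually_one_le_returns F z).and
    ((tendsto_returns F z).eventually (Metric.ball_mem_nhds z hε))
  obtain ⟨r₀, hr₀, hball₀⟩ := hev.exists
  refine ⟨|r₀.2|, ?_⟩
  filter_upwards [hev] with r ⟨hr, hball⟩
  have hpos (p : ℤ) := hF.mul_pos_of_returns le_rfl (convex_ball z ε)
    (fun j hj => isFree_Tr_ball hj z hε2) (hfree p) (Metric.mem_ball_self hε) hr hr₀
    (by rwa [one_mul]) (by rwa [one_mul])
  have hle : |r₀.2| ≤ |r₀.2| * r₀.1 := le_mul_of_one_le_right (abs_nonneg _) (by exact_mod_cast hr₀)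
  rw [abs_lt]
  constructor
  · have := pos_of_mul_pos_left (hpos (-|r₀.2|)) (by linarith [neg_abs_le r₀.2])
    linarith
  · have := neg_of_mul_pos_left (hpos |r₀.2|) (by linarith [le_abs_self r₀.2])
    linarith

theorem IsAperiodicLift.isFree_Tr_iterate {F : Plane ≃ₜ Plane} (hF : IsAperiodicLift F)
    {D B : Set Plane} (hD : Convex ℝ D) (hfree : IsFree F D) (hBD : B ⊆ D) {m : ℕ} {k : ℤ}
    (hB : IsFree (fun x => Tr (-k) (F^[m] x)) B) (hmaps : MapsTo (fun x => Tr (-k) (F^[m] x)) B D)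
    (n : ℕ) : IsFree (fun x => Tr (-k) (F^[n] x)) B := by
  intro x hx hx'
  have hiso := hF.injIsotopicToId 1 0
  have hfix := hF.shiftedIterate_ne le_rfl 0
  rw [shiftedIterate_one_zero] at hiso hfix
  have hnotMem {y : Plane} (hy : y ∈ D) {n : ℕ} (hn : 1 ≤ n) : F^[n] y ∉ D :=
    hiso.iterate_notMem_of_convex hfix hD hfree hy hn
  have hiter (i j : ℕ) : F^[i] (Tr (-k) (F^[j] x)) = Tr (-k) (F^[i + j] x) := by
    rw [(hF.commutesWithDeck.iterate i _).eq, Function.iterate_add_apply]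
  obtain h | rfl | h := lt_trichotomy n m
  · refine hnotMem (hBD hx') (n := m - n) (by lia) ?_
    rw [hiter, Nat.sub_add_cancel h.le]
    exact hmaps hx
  · exact hB x hx hx'
  · refine hnotMem (hmaps hx) (n := n - m) (by lia) ?_
    rw [hiter, Nat.sub_add_cancel h.le]
    exact hBD hx'

theorem frequently_lt_mul_returns {F : Plane ≃ₜ Plane} (hF : CommutesWithDeck F) {z : Plane}
    [NeBot (returns F z)] {c : ℤ} (hc : ∀ᶠ r in returns F z, 0 < c * r.2) (M : ℕ) :
    ∃ᶠ r in returns F z, M < c * r.2 := by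
  induction M with
  | zero => exact_mod_cast hc.frequently
  | succ M ih =>
    refine frequently_returns_add hF ih hc.frequently fun r r' hr hr' => ?_
    rw [Prod.snd_add, mul_add]
    lia

/-! ### Irrationality -/

theorem IsAperiodicLift.exists_forall_isFree_shiftedIterate {F : Plane ≃ₜ Plane}
    (hF : IsAperiodicLift F) {z : Plane} {ε : ℝ} (hε : 0 < ε)
    (hfree : IsFree F (Metric.ball z ε)) {m : ℕ} (hm : 1 ≤ m) {k : ℤ}
    (hk : Tr (-k) (F^[m] z) ∈ Metric.ball z ε) :
    ∃ δ > 0, δ ≤ ε ∧ ∀ n, IsFree (shiftedIterate F n k) (Metric.ball z δ) := by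
  have hcont : Continuous fun x => Tr (-k) (F^[m] x) :=
    (continuous_Tr _).comp (F.continuous.iterate m)
  obtain ⟨δ, hδ, hδfree⟩ := exists_isFree_ball hcont.continuousAt
    fun h => hF.shiftedIterate_ne hm k z (by rwa [shiftedIterate_apply])
  obtain ⟨δ', hδ', hmaps⟩ := Metric.mem_nhds_iff.1
    (hcont.continuousAt.preimage_mem_nhds (Metric.isOpen_ball.mem_nhds hk))
  have hsub : Metric.ball z (min ε (min δ δ')) ⊆
      Metric.ball z ε ∩ (Metric.ball z δ ∩ Metric.ball z δ') := by
    simp [Metric.ball_subset_ball]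
  refine ⟨min ε (min δ δ'), by positivity, min_le_left _ _, fun n x hx => ?_⟩
  rw [shiftedIterate_apply]
  exact hF.isFree_Tr_iterate (convex_ball z ε) hfree (fun x hx => (hsub hx).1)
    (hδfree.mono fun x hx => (hsub hx).2.1) (fun x hx => hmaps (hsub hx).2.2) n x hx

theorem IsAperiodicLift.exists_eventually_mul_pos {F : Plane ≃ₜ Plane} (hF : IsAperiodicLift F)
    (z : Plane) [NeBot (returns F z)] :
    ∃ k₀ : ℤ, (∀ᶠ r in returns F z, 0 < k₀ * r.2) ∧
      ∃ ε > 0, ε ≤ 1 / 2 ∧ ∀ n, IsFree (shiftedIterate F n k₀) (Metric.ball z ε) := by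
  obtain ⟨ε, hε, hε2, hfree⟩ := hF.exists_isFree_ball_shiftedIterate le_rfl z
  replace hfree := hfree 0
  have hev := (eventually_one_le_returns F z).and
    ((tendsto_returns F z).eventually (Metric.ball_mem_nhds z hε))
  obtain ⟨r₀, hr₀, hball₀⟩ := hev.exists
  refine ⟨r₀.2, ?_, ?_⟩
  · filter_upwards [hev] with r ⟨hr, hball⟩
    simpa using hF.mul_pos_of_returns le_rfl (convex_ball z ε) (fun j hj => isFree_Tr_ball hj z hε2)
      hfree (Metric.mem_ball_self hε) hr₀ hr (by rwa [one_mul]) (by rwa [one_mul])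
  · rw [shiftedIterate_one_zero] at hfree
    obtain ⟨δ, hδ, hδε, hδfree⟩ := hF.exists_forall_isFree_shiftedIterate hε hfree hr₀ hball₀
    exact ⟨δ, hδ, hδε.trans hε2, hδfree⟩

theorem mul_sub_nonpos {a k l m : ℤ} (hk : a ^ 2 < a * k) (hl : |l| ≤ m) :
    (k - a) * (l - a * m) ≤ 0 := by
  have ha : a ≠ 0 := by
    rintro rfl
    simp at hk
  have hal : a * l ≤ a ^ 2 * m := calc
    a * l ≤ |a| * |l| := (le_abs_self _).trans (abs_mul _ _).le
    _ ≤ |a| ^ 2 * m := mul_le_mul (le_self_pow₀ (Int.one_le_abs ha) two_ne_zero) hl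
      (abs_nonneg l) (sq_nonneg _)
    _ = a ^ 2 * m := by rw [sq_abs]
  have hprod : (a * k - a ^ 2) * (a * l - a ^ 2 * m) ≤ 0 :=
    mul_nonpos_of_nonneg_of_nonpos (sub_nonneg.2 hk.le) (sub_nonpos.2 hal)
  refine nonpos_of_mul_nonpos_right (a := a ^ 2) ?_ (sq_pos_of_ne_zero ha)
  linarith

/-- For returns `(n, k)` with `k` large and `(n * m, l)` with `|l| < m`, the returns `(1, k - k₀)`
and `(m, l - k₀ * m)` of `T^{-k₀} ∘ F^n` would turn in opposite directions. -/
theorem IsAperiodicLift.not_tendsto_zero {F : Plane ≃ₜ Plane} (hF : IsAperiodicLift F)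
    (z : Plane) [hz : NeBot (returns F z)] :
    ¬ Tendsto (fun r : ℕ × ℤ => (r.2 / r.1 : ℝ)) (returns F z) (𝓝 0) := by
  intro hlim
  obtain ⟨k₀, hpos, ε, hε, hε2, hfree⟩ := hF.exists_eventually_mul_pos z
  have hball := (tendsto_returns F z).eventually (Metric.ball_mem_nhds z hε)
  obtain ⟨⟨n, k⟩, hk, hn, hnk⟩ := ((frequently_lt_mul_returns hF.commutesWithDeck hpos
    (k₀.natAbs ^ 2)).and_eventually ((eventually_one_le_returns F z).and hball)).exists
  have hn0 : (0 : ℝ) < n := by exact_mod_cast hn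
  obtain ⟨⟨_, l⟩, ⟨-, m, rfl⟩, hnm, hl, hnml⟩ := ((frequently_returns_dvd hF.commutesWithDeck
    (frequently_true_iff_neBot _ |>.2 hz) (by simp) hn).and_eventually
      ((eventually_one_le_returns F z).and
        ((hlim.abs.eventually_lt_const (u := (n : ℝ)⁻¹) (by simpa using hn0)).and hball))).exists
  have hm : 1 ≤ m := Nat.pos_of_mul_pos_left hnm
  have hlm : |l| < m := by
    have hm0 : (0 : ℝ) < m := by exact_mod_cast hm
    rw [Nat.cast_mul, abs_div, abs_of_pos (mul_pos hn0 hm0), div_lt_iff₀ (mul_pos hn0 hm0),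
      inv_mul_cancel_left₀ hn0.ne'] at hl
    exact_mod_cast hl
  have hsign := hF.mul_pos_of_returns hn (convex_ball z ε) (fun j hj => isFree_Tr_ball hj z hε2)
    (hfree n) (Metric.mem_ball_self hε) le_rfl hm (by rwa [mul_one]) hnml
  rw [Nat.cast_one, mul_one] at hsign
  exact (mul_sub_nonpos (by simpa using hk) hlm.le).not_gt hsign

theorem frequently_returns_shiftedIterate_num_den {F : Plane ≃ₜ Plane} (hF : CommutesWithDeck F)
    (x : ℚ) (c : ℝ) {z : Plane} (hz : ∃ᶠ r in returns F z, 0 ≤ c * (r.2 / r.1 - x)) :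
    ∃ᶠ r in returns (shiftedIterate F x.den x.num) z, 0 ≤ c * r.2 := by
  refine (frequently_returns_shiftedIterate hF x.den_pos x.num
    (P := fun r => 0 ≤ c * (r.2 - x * r.1)) ?_ ?_).mono fun r hr => ?_
  · refine (hz.and_eventually (eventually_one_le_returns F z)).mono fun r ⟨hr, hr1⟩ => ?_
    have hr0 : (0 : ℝ) < r.1 := by exact_mod_cast hr1
    have hmul := mul_nonneg hr hr0.le
    rwa [mul_assoc, sub_mul, div_mul_cancel₀ _ hr0.ne'] at hmul
  · intro r r' hr hr'
    push_cast [Prod.fst_add, Prod.snd_add]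
    linarith
  · have hden : (x * x.den : ℝ) = x.num := by exact_mod_cast Rat.mul_den_eq_num x
    push_cast [← mul_assoc, hden] at hr
    simpa using hr

theorem IsAperiodicLift.eventually_lt_div {f : Ann ≃ₜ Ann} {F : Plane ≃ₜ Plane}
    (hint : IntersectionProperty f) (hlift : IsLift f F) (hF : IsAperiodicLift F) {x : ℚ}
    {z z' : Plane} [NeBot (returns F z)] [NeBot (returns F z')]
    (hz : ∃ᶠ r in returns F z, (x : ℝ) ≤ r.2 / r.1) :
    ∀ᶠ r in returns F z', (x : ℝ) < r.2 / r.1 := by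
  have hcomm := hF.commutesWithDeck
  have hneBot (v : Plane) [NeBot (returns F v)] (i : ℕ) : NeBot (returns F (F^[i] v)) :=
    .mono ‹_› (returns_le_of_commute (F.continuous.iterate i) (hcomm.iterate i)
      (Function.Commute.iterate_self _ i) v)
  by_contra hz'
  rw [not_eventually] at hz'
  have hnonneg := frequently_returns_shiftedIterate_num_den hcomm x 1 (hz.mono (by simp))
  have hnonpos := frequently_returns_shiftedIterate_num_den hcomm x (-1) (hz'.mono (by simp))
  simp only [one_mul, Int.cast_nonneg_iff, neg_one_mul, Left.nonneg_neg_iff,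
    Int.cast_nonpos] at hnonneg hnonpos
  obtain ⟨V, hV, i, j, ⟨h, h'⟩ | ⟨h, h'⟩⟩ := exists_isAttractor_separating hcomm x.den_pos
    (hF.injIsotopicToId _ _) (hF.shiftedIterate_ne x.den_pos _) hnonneg hnonpos
  all_goals
    have := hneBot z
    have := hneBot z'
    exact h' (hV.mem_of_mem hint hlift hF h)

theorem IsAperiodicLift.exists_tendsto_div {f : Ann ≃ₜ Ann} {F : Plane ≃ₜ Plane}
    (hint : IntersectionProperty f) (hlift : IsLift f F) (hF : IsAperiodicLift F) (z : Plane)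
    [NeBot (returns F z)] :
    ∃ ρ : ℝ, ∀ z', NeBot (returns F z') →
      Tendsto (fun r : ℕ × ℤ => (r.2 / r.1 : ℝ)) (returns F z') (𝓝 ρ) := by
  obtain ⟨C, hC⟩ := hF.exists_abs_lt_mul z
  have hbound : ∀ᶠ r in returns F z, |(r.2 / r.1 : ℝ)| ≤ C := by
    filter_upwards [hC, eventually_one_le_returns F z] with r hr hr1
    have hr0 : (0 : ℝ) < r.1 := by exact_mod_cast hr1
    rw [abs_div, abs_of_pos hr0, div_le_iff₀ hr0]
    exact_mod_cast hr.le
  have hle : IsBoundedUnder (· ≤ ·) (returns F z) fun r => (r.2 / r.1 : ℝ) :=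
    isBoundedUnder_of_eventually_le (hbound.mono fun _ => le_of_abs_le)
  have hge : IsBoundedUnder (· ≥ ·) (returns F z) fun r => (r.2 / r.1 : ℝ) :=
    isBoundedUnder_of_eventually_ge (hbound.mono fun _ => neg_le_of_abs_le)
  refine ⟨limsup (fun r => (r.2 / r.1 : ℝ)) (returns F z), fun z' _ => tendsto_order.2
    ⟨fun a ha => ?_, fun a ha => ?_⟩⟩
  · obtain ⟨x, hax, hx⟩ := exists_rat_btwn ha
    have hfreq := frequently_lt_of_lt_limsup hge.isCoboundedUnder_le hx
    exact (hF.eventually_lt_div hint hlift (hfreq.mono fun _ => le_of_lt)).mono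
      fun r => hax.trans
  · obtain ⟨x, hx, hxa⟩ := exists_rat_btwn ha
    by_contra hfreq
    have hev := hF.eventually_lt_div hint hlift (z' := z)
      ((not_eventually.1 hfreq).mono fun r hr => hxa.le.trans (not_lt.1 hr))
    obtain ⟨r, hr, hr'⟩ := (hev.and (eventually_lt_of_limsup_lt hx hle)).exists
    exact hr.not_gt hr'

theorem IsAperiodicLift.irrational_of_tendsto_div {F : Plane ≃ₜ Plane} (hF : IsAperiodicLift F)
    {z : Plane} [NeBot (returns F z)] {ρ : ℝ}
    (hρ : Tendsto (fun r : ℕ × ℤ => (r.2 / r.1 : ℝ)) (returns F z) (𝓝 ρ)) : Irrational ρ := by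
  rintro ⟨x, rfl⟩
  have hcomm := hF.commutesWithDeck
  have := neBot_returns_shiftedIterate hcomm x.den_pos x.num z
  refine (hF.shiftedIterate x.den_pos x.num).not_tendsto_zero z ?_
  have hlim := (hρ.comp (tendsto_returns_shiftedIterate hcomm x.den_pos x.num z)).sub_const
    (x : ℝ) |>.const_mul (x.den : ℝ)
  rw [sub_self, mul_zero] at hlim
  refine hlim.congr' ?_
  filter_upwards [eventually_one_le_returns _ z] with r hr
  have hr0 : (r.1 : ℝ) ≠ 0 := by positivity
  have hden : (x.den : ℝ) ≠ 0 := by exact_mod_cast x.den_ne_zero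
  have hnum : (x * x.den : ℝ) = x.num := by exact_mod_cast Rat.mul_den_eq_num x
  simp only [Function.comp_apply]
  push_cast [← hnum]
  field_simp
  ring

/-! ### Rotation numbers -/

theorem IsLift.tendsto_round_returns {f : Ann ≃ₜ Ann} {F : Plane ≃ₜ Plane} (hF : IsLift f F)
    {w : Plane} {φ : ℕ → ℕ} (hφ : Tendsto φ atTop atTop)
    (hw : Tendsto (fun i => f^[φ i] (prj w)) atTop (𝓝 (prj w))) :
    Tendsto (fun i => (φ i, round ((F^[φ i] w).1 - w.1))) atTop (returns F w) := by
  simp only [← hF.prj_iterate] at hw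
  have hfst : Tendsto (fun i => (F^[φ i] w).1 - w.1 - round ((F^[φ i] w).1 - w.1)) atTop (𝓝 0) := by
    have hnorm := (((continuous_fst.tendsto _).comp hw).sub_const (w.1 : AddCircle (1 : ℝ))).norm
    rw [show (prj w).1 = w.1 from rfl, sub_self, norm_zero] at hnorm
    refine tendsto_zero_iff_abs_tendsto_zero _ |>.2 (hnorm.congr fun i => ?_)
    exact UnitAddCircle.norm_eq (x := (F^[φ i] w).1 - w.1)
  have hsnd : Tendsto (fun i => (F^[φ i] w).2) atTop (𝓝 w.2) :=
    (continuous_snd.tendsto (prj w)).comp hw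
  refine tendsto_inf.2 ⟨tendsto_comap_iff.2 ?_, tendsto_principal.2 (hφ.eventually_ge_atTop 1)⟩
  refine Tendsto.prodMk_nhds ?_ hsnd
  convert hfst.add_const w.1 using 2
  · simp only [Int.cast_neg]
    ring
  · simp

theorem exists_prj_eq (z : Ann) : ∃ w, prj w = z := by
  obtain ⟨x, hx⟩ := QuotientAddGroup.mk_surjective z.1
  exact ⟨(x, z.2), Prod.ext hx rfl⟩

theorem IsLift.neBot_returns {f : Ann ≃ₜ Ann} {F : Plane ≃ₜ Plane} (hF : IsLift f F) {w : Plane}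
    (hw : PosRec f (prj w)) : NeBot (returns F w) := by
  obtain ⟨φ, hφ, hlim⟩ := hw
  exact (hF.tendsto_round_returns hφ.tendsto_atTop hlim).neBot

theorem IsLift.hasRotNum {f : Ann ≃ₜ Ann} {F : Plane ≃ₜ Plane} (hF : IsLift f F) {z : Ann} {ρ : ℝ}
    (hz : PosRec f z) (hρ : ∀ w, prj w = z →
      Tendsto (fun r : ℕ × ℤ => (r.2 / r.1 : ℝ)) (returns F w) (𝓝 ρ)) : HasRotNum f F z ρ := by
  refine ⟨hz, ?_⟩
  rintro w rfl φ hφ hlim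
  have hreturns := hF.tendsto_round_returns hφ.tendsto_atTop hlim
  have hdisp := ((continuous_fst.tendsto _).comp
    ((tendsto_returns F w).comp hreturns)).sub_const w.1
  convert (hdisp.div_atTop (tendsto_natCast_atTop_atTop.comp hφ.tendsto_atTop)).add
    ((hρ w rfl).comp hreturns) using 2
  · simp only [Tr, Int.cast_neg, Function.comp_apply, ← add_div]
    ring
  · simp

theorem HasRotNum.unique {f : Ann → Ann} {F : Plane → Plane} {z : Ann} {ρ ρ' : ℝ}
    (h : HasRotNum f F z ρ) (h' : HasRotNum f F z ρ') : ρ = ρ' := by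
  obtain ⟨⟨φ, hφ, hlim⟩, h⟩ := h
  obtain ⟨w, hw⟩ := exists_prj_eq z
  exact tendsto_nhds_unique (h w hw φ hφ hlim) (h'.2 w hw φ hφ hlim)

theorem posRec_of_iterate_eq {X : Type*} [TopologicalSpace X] {g : X → X} {z : X} {n : ℕ}
    (hn : 0 < n) (hz : g^[n] z = z) : PosRec g z := by
  refine ⟨fun i => n * i, fun i j hij => Nat.mul_lt_mul_of_pos_left hij hn, ?_⟩
  simp only [Function.iterate_mul, Function.iterate_fixed hz]
  exact tendsto_const_nhds

theorem tendsto_div_of_iterate_eq_Tr {F : Plane → Plane} (hF : CommutesWithDeck F) {w : Plane}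
    {n : ℕ} (hn : 0 < n) {k : ℤ} (hw : F^[n] w = Tr k w) :
    Tendsto (fun m : ℕ => ((F^[m] w).1 - w.1) / m) atTop (𝓝 (k / n)) := by
  set d : ℕ → ℝ := fun m => (F^[m] w).1 - w.1 - m * (k / n) with hd
  have hper : Function.Periodic d n := by
    intro m
    have hiter : F^[m + n] w = Tr k (F^[m] w) := by
      rw [Function.iterate_add_apply, hw, (hF.iterate m k).eq]
    simp only [hd, hiter, Tr]
    push_cast
    field_simp
    ring
  obtain ⟨C, hC⟩ := ((Finset.range n).image fun m => |d m|).bddAbove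
  have hbound (m : ℕ) : |d m| ≤ C := by
    rw [← hper.map_mod_nat m]
    exact hC (Finset.mem_image_of_mem _ (Finset.mem_range.2 (Nat.mod_lt m hn)))
  have hlim := (tendsto_bdd_div_atTop_nhds_zero (.of_forall fun m => neg_le_of_abs_le (hbound m))
    (.of_forall fun m => le_of_abs_le (hbound m)) tendsto_natCast_atTop_atTop).add_const (k / n : ℝ)
  rw [zero_add] at hlim
  refine hlim.congr' ?_
  filter_upwards [eventually_ne_atTop 0] with m hm
  simp only [hd]
  field_simp
  ring

theorem IsLift.hasRotNum_of_iterate_eq {f : Ann ≃ₜ Ann} {F : Plane ≃ₜ Plane} (hlift : IsLift f F)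
    (hF : CommutesWithDeck F) {z : Ann} {n : ℕ} (hn : 0 < n) (hz : f^[n] z = z) :
    ∃ x : ℚ, HasRotNum f F z x := by
  obtain ⟨w, rfl⟩ := exists_prj_eq z
  obtain ⟨k, hk⟩ : ∃ k : ℤ, F^[n] w = Tr k w := by
    rw [← prj_eq_prj_iff, hlift.prj_iterate, hz]
  refine ⟨k / n, posRec_of_iterate_eq hn hz, fun w' hw' φ hφ _ => ?_⟩
  obtain ⟨j, rfl⟩ := prj_eq_prj_iff.1 hw'
  push_cast
  refine (tendsto_div_of_iterate_eq_Tr hF hn ?_).comp hφ.tendsto_atTop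
  rw [(hF.iterate n j).eq, hk, Tr_Tr, Tr_Tr, add_comm]

theorem IsLift.exists_irrational_rot_eq {f : Ann ≃ₜ Ann} {F : Plane ≃ₜ Plane} (hlift : IsLift f F)
    (hint : IntersectionProperty f) (hF : IsAperiodicLift F) {z : Ann} (hz : PosRec f z) :
    ∃ ρ, Irrational ρ ∧ Rot f F = {ρ} := by
  obtain ⟨w, rfl⟩ := exists_prj_eq z
  have := hlift.neBot_returns hz
  obtain ⟨ρ, hρ⟩ := hF.exists_tendsto_div hint hlift w
  have hrot {z : Ann} (hz : PosRec f z) : HasRotNum f F z ρ :=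
    hlift.hasRotNum hz fun w hw => hρ w (hlift.neBot_returns (hw ▸ hz))
  refine ⟨ρ, hF.irrational_of_tendsto_div (hρ w this), Subset.antisymm ?_ ?_⟩
  · rintro ρ' ⟨z', hz'⟩
    exact hz'.unique (hrot hz'.1)
  · rintro _ rfl
    exact ⟨_, hrot hz⟩

/-- Corollary 4.4: `Rot(F)` is reduced to a single irrational number if and only if
`Rec⁺(f) ≠ ∅` and `f` has no periodic orbit. -/
theorem single_irrational_iff_recurrent_no_periodic
    (f : Ann ≃ₜ Ann) (F : Plane ≃ₜ Plane)
    (hiso : IsotopicToId f) (hint : IntersectionProperty f) (hlift : IsLift f F) :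
    (∃ ρ : ℝ, Irrational ρ ∧ Rot ⇑f ⇑F = {ρ}) ↔
      ((∃ z : Ann, PosRec ⇑f z) ∧ ¬ ∃ z : Ann, ∃ n : ℕ, 0 < n ∧ (⇑f)^[n] z = z) := by
  constructor
  · rintro ⟨ρ, hirr, hrot⟩
    obtain ⟨z, hz, -⟩ : ρ ∈ Rot f F := hrot ▸ rfl
    refine ⟨⟨z, hz⟩, fun ⟨z', n, hn, hz'⟩ => ?_⟩
    obtain ⟨x, hx⟩ := hlift.hasRotNum_of_iterate_eq (hlift.commutesWithDeck hiso) hn hz'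
    have hxρ : (x : ℝ) ∈ ({ρ} : Set ℝ) := hrot ▸ ⟨z', hx⟩
    exact hirr ⟨x, hxρ⟩
  · rintro ⟨⟨z, hz⟩, hper⟩
    exact hlift.exists_irrational_rot_eq hint (hlift.isAperiodicLift hiso hper) hz
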